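/- arXiv:1104.2530 — 3 statements merged into one kernel-verified Lean document; each statement's English description precedes it below -/
import Mathlib

section
/- The canonical decomposition of a pair of symmetric complex matrices is unique up to permutation of summands: if X_1 ⊕ ⋯ ⊕ X_t and Y_1 ⊕ ⋯ ⊕ Y_s are congruent pairs of symmetric complex matrices, where every X_i and every Y_j is a canonical pair of one of the forms H_k(λ) (λ ∈ ℂ), K_k, or L_k, then s = t and there is a permutation σ of {1,…,t} with Y_{σ(i)} = X_i for all i. -/
open Matrix

noncomputable section

/-- `Λ_n(λ)`: the `n × n` matrix with `(i,j)` entry `λ` if `i + j = n + 1`, `1` if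
`i + j = n + 2`, and `0` otherwise (1-based indices). -/
def lamM (n : ℕ) (lam : ℂ) : Matrix (Fin n) (Fin n) ℂ :=
  Matrix.of fun i j =>
    if (i : ℕ) + 1 + ((j : ℕ) + 1) = n + 1 then lam
    else if (i : ℕ) + 1 + ((j : ℕ) + 1) = n + 2 then 1 else 0

/-- `Δ_n`: the `n × n` matrix with `(i,j)` entry `1` if `i + j = n + 1` and `0`
otherwise (1-based indices). -/
def delM (n : ℕ) : Matrix (Fin n) (Fin n) ℂ :=
  Matrix.of fun i j => if (i : ℕ) + 1 + ((j : ℕ) + 1) = n + 1 then 1 else 0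

/-- `F_n`: the `n × (n+1)` matrix with `F_n(i,j) = 1` exactly when `j = i`. -/
def FM (n : ℕ) : Matrix (Fin n) (Fin (n + 1)) ℂ :=
  Matrix.of fun i j => if (j : ℕ) = (i : ℕ) then 1 else 0

/-- `G_n`: the `n × (n+1)` matrix with `G_n(i,j) = 1` exactly when `j = i + 1`. -/
def GM (n : ℕ) : Matrix (Fin n) (Fin (n + 1)) ℂ :=
  Matrix.of fun i j => if (j : ℕ) = (i : ℕ) + 1 then 1 else 0

/-- `L_n^{(1)} = [[0, F_nᵀ], [F_n, 0]]`, a symmetric `(2n+1) × (2n+1)` matrix. -/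
def L1M (n : ℕ) : Matrix (Fin (2 * n + 1)) (Fin (2 * n + 1)) ℂ :=
  Matrix.reindex (finSumFinEquiv.trans (finCongr (by omega)))
    (finSumFinEquiv.trans (finCongr (by omega)))
    (Matrix.fromBlocks 0 (FM n)ᵀ (FM n) 0)

/-- `L_n^{(2)} = [[0, G_nᵀ], [G_n, 0]]`, a symmetric `(2n+1) × (2n+1)` matrix. -/
def L2M (n : ℕ) : Matrix (Fin (2 * n + 1)) (Fin (2 * n + 1)) ℂ :=
  Matrix.reindex (finSumFinEquiv.trans (finCongr (by omega)))
    (finSumFinEquiv.trans (finCongr (by omega)))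
    (Matrix.fromBlocks 0 (GM n)ᵀ (GM n) 0)

theorem lamM_isSymm (n : ℕ) (lam : ℂ) : (lamM n lam).IsSymm := by
  unfold Matrix.IsSymm lamM
  ext i j
  simp only [Matrix.transpose_apply, Matrix.of_apply]
  split_ifs <;> first | rfl | omega

theorem delM_isSymm (n : ℕ) : (delM n).IsSymm := by
  unfold Matrix.IsSymm delM
  ext i j
  simp only [Matrix.transpose_apply, Matrix.of_apply]
  split_ifs <;> first | rfl | omega

theorem L1M_isSymm (n : ℕ) : (L1M n).IsSymm := by
  unfold Matrix.IsSymm L1M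
  rw [Matrix.transpose_reindex, Matrix.fromBlocks_transpose]
  simp

theorem L2M_isSymm (n : ℕ) : (L2M n).IsSymm := by
  unfold Matrix.IsSymm L2M
  rw [Matrix.transpose_reindex, Matrix.fromBlocks_transpose]
  simp

/-- The type of canonical summands: `H_k(λ)`, `K_k`, `L_k`. -/
inductive CanType where
  | H : ℕ → ℂ → CanType
  | K : ℕ → CanType
  | L : ℕ → CanType

/-- The size of a canonical pair. -/
def CanType.size : CanType → ℕ
  | .H k _ => k
  | .K k => k
  | .L k => 2 * k + 1

/-- The size parameter of a canonical pair. -/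
def CanType.param : CanType → ℕ
  | .H k _ => k
  | .K k => k
  | .L k => k

/-- The first matrix of a canonical pair. -/
def CanType.A : (c : CanType) → Matrix (Fin c.size) (Fin c.size) ℂ
  | .H k _ => delM k
  | .K k => lamM k 0
  | .L k => L1M k

/-- The second matrix of a canonical pair. -/
def CanType.B : (c : CanType) → Matrix (Fin c.size) (Fin c.size) ℂ
  | .H k lam => lamM k lam
  | .K k => delM k
  | .L k => L2M k

/-- Congruence of pairs of square complex matrices (over possibly different index
types): `(A', B') = (Sᵀ A S, Sᵀ B S)` for some invertible `S`. -/
def CongruentPairs {ι κ : Type} [Fintype ι] [Fintype κ] [DecidableEq ι] [DecidableEq κ]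
    (p : Matrix ι ι ℂ × Matrix ι ι ℂ) (q : Matrix κ κ ℂ × Matrix κ κ ℂ) : Prop :=
  ∃ S : Matrix ι κ ℂ, (∃ T : Matrix κ ι ℂ, S * T = 1 ∧ T * S = 1) ∧
    q.1 = Sᵀ * p.1 * S ∧ q.2 = Sᵀ * p.2 * S

end

section helpers

open Module

/-- Chain space. -/
def chW {κ ι : Type} [Fintype ι] (m N : ℕ) (P Q : Matrix κ ι ℂ) : Submodule ℂ (ℕ → ι → ℂ) where
  carrier := {x | x 0 = 0 ∧ (∀ r, m < r → x r = 0) ∧ ∀ r, r < N → P *ᵥ x (r + 1) = Q *ᵥ x r}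
  add_mem' := by
    rintro x y ⟨h1, h2, h3⟩ ⟨g1, g2, g3⟩
    refine ⟨by simp [h1, g1], fun r hr => by simp [h2 r hr, g2 r hr], fun r hr => ?_⟩
    simp [Matrix.mulVec_add, h3 r hr, g3 r hr]
  zero_mem' := by simp
  smul_mem' := by
    rintro c x ⟨h1, h2, h3⟩
    refine ⟨by simp [h1], fun r hr => by simp [h2 r hr], fun r hr => ?_⟩
    simp [Matrix.mulVec_smul, h3 r hr]

theorem mem_chW {κ ι : Type} [Fintype ι] {m N : ℕ} {P Q : Matrix κ ι ℂ} {x : ℕ → ι → ℂ} :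
    x ∈ chW m N P Q ↔ x 0 = 0 ∧ (∀ r, m < r → x r = 0) ∧
      ∀ r, r < N → P *ᵥ x (r + 1) = Q *ᵥ x r := Iff.rfl

instance chW_finite {κ ι : Type} [Fintype ι] (m N : ℕ) (P Q : Matrix κ ι ℂ) :
    Module.Finite ℂ (chW m N P Q) := by
  let φ : chW m N P Q →ₗ[ℂ] (Fin (m + 1) → ι → ℂ) :=
    { toFun := fun x i => x.1 i
      map_add' := fun x y => rfl
      map_smul' := fun c x => rfl }
  refine Module.Finite.of_injective φ ?_
  intro x y h
  ext1
  funext r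
  by_cases hr : m < r
  · rw [x.2.2.1 r hr, y.2.2.1 r hr]
  · exact congrFun h ⟨r, by omega⟩

theorem finrank_eq_aux {E E' : Type} [AddCommGroup E] [Module ℂ E] [AddCommGroup E'] [Module ℂ E']
    (W : Submodule ℂ E) (W' : Submodule ℂ E') (φ : E →ₗ[ℂ] E') (ψ : E' → E)
    (h1 : ∀ x ∈ W, φ x ∈ W') (h2 : ∀ y ∈ W', ψ y ∈ W) (h3 : ∀ x ∈ W, φ x = 0 → x = 0)
    (h4 : ∀ y ∈ W', φ (ψ y) = y) : finrank ℂ W = finrank ℂ W' := by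
  refine LinearEquiv.finrank_eq (LinearEquiv.ofBijective (φ.restrict h1) ⟨?_, ?_⟩)
  · rw [injective_iff_map_eq_zero]
    intro x hx
    ext1
    exact h3 x.1 x.2 (congrArg Subtype.val hx)
  · intro y
    exact ⟨⟨ψ y.1, h2 _ y.2⟩, Subtype.ext (h4 _ y.2)⟩

theorem finrank_eq_aux' {E : Type} [AddCommGroup E] [Module ℂ E] (n : ℕ)
    (W : Submodule ℂ E) (φ : E →ₗ[ℂ] (Fin n → ℂ)) (ψ : (Fin n → ℂ) → E)
    (h2 : ∀ y, ψ y ∈ W) (h3 : ∀ x ∈ W, φ x = 0 → x = 0)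
    (h4 : ∀ y, φ (ψ y) = y) : finrank ℂ W = n := by
  rw [finrank_eq_aux W ⊤ φ ψ (by simp) (fun y _ => h2 y) h3 (fun y _ => h4 y)]
  simp

theorem chW_congr {κ κ' ι ι' : Type} [Fintype ι] [Fintype ι'] [Fintype κ] [Fintype κ']
    [DecidableEq ι] [DecidableEq ι'] [DecidableEq κ] [DecidableEq κ']
    (m N : ℕ) (P Q : Matrix κ ι ℂ) (P' Q' : Matrix κ' ι' ℂ)
    (S : Matrix ι ι' ℂ) (T : Matrix ι' ι ℂ) (R : Matrix κ' κ ℂ) (U : Matrix κ κ' ℂ)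
    (h1 : S * T = 1) (h2 : T * S = 1) (h3 : U * R = 1)
    (hP : P' = R * P * S) (hQ : Q' = R * Q * S) :
    finrank ℂ (chW m N P' Q') = finrank ℂ (chW m N P Q) := by
  let φ : (ℕ → ι' → ℂ) →ₗ[ℂ] (ℕ → ι → ℂ) :=
    { toFun := fun x r => S *ᵥ x r
      map_add' := fun x y => by funext r; simp [Matrix.mulVec_add]
      map_smul' := fun c x => by funext r; simp [Matrix.mulVec_smul] }
  refine finrank_eq_aux _ _ φ (fun x r => T *ᵥ x r) ?_ ?_ ?_ ?_
  · rintro x ⟨a, b, c⟩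
    refine ⟨by simp [φ, a], fun r hr => by simp [φ, b r hr], fun r hr => ?_⟩
    have := congrArg (fun v => U *ᵥ v) (c r hr)
    simpa [φ, hP, hQ, ← Matrix.mul_assoc, h3] using this
  · rintro x ⟨a, b, c⟩
    refine ⟨by simp [a], fun r hr => by simp [b r hr], fun r hr => ?_⟩
    simp only [Matrix.mulVec_mulVec, hP, hQ]
    rw [Matrix.mul_assoc (R * P), Matrix.mul_assoc (R * Q), h1, Matrix.mul_one, Matrix.mul_one,
      ← Matrix.mulVec_mulVec, c r hr, Matrix.mulVec_mulVec]
  · intro x hx h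
    funext r
    have := congrArg (fun v => T *ᵥ v) (congrFun h r)
    simpa [φ, h2] using this
  · intro y hy
    funext r
    simp [φ, h1]

theorem blockDiagonal'_mulVec_aux {t : ℕ} (n : Fin t → ℕ)
    (M : ∀ i, Matrix (Fin (n i)) (Fin (n i)) ℂ) (v : (Σ i, Fin (n i)) → ℂ) (i : Fin t)
    (a : Fin (n i)) :
    (Matrix.blockDiagonal' M *ᵥ v) ⟨i, a⟩ = (M i *ᵥ fun b => v ⟨i, b⟩) a := by
  simp only [Matrix.mulVec, dotProduct, Fintype.sum_sigma]
  rw [Finset.sum_eq_single i]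
  · simp [Matrix.blockDiagonal'_apply_eq]
  · intro j _ hj
    refine Finset.sum_eq_zero fun b _ => ?_
    rw [Matrix.blockDiagonal'_apply_ne _ _ _ hj.symm, zero_mul]
  · simp

theorem chW_blockDiagonal {t : ℕ} (n : Fin t → ℕ) (m N : ℕ)
    (P Q : ∀ i, Matrix (Fin (n i)) (Fin (n i)) ℂ) :
    finrank ℂ (chW m N (Matrix.blockDiagonal' P) (Matrix.blockDiagonal' Q)) =
      ∑ i, finrank ℂ (chW m N (P i) (Q i)) := by
  rw [← Module.finrank_pi_fintype]
  let φ : chW m N (Matrix.blockDiagonal' P) (Matrix.blockDiagonal' Q) →ₗ[ℂ]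
      (∀ i, chW m N (P i) (Q i)) :=
    { toFun := fun x i => ⟨fun r b => x.1 r ⟨i, b⟩, by
        obtain ⟨x, a, b, c⟩ := x
        refine ⟨by simp only [a]; rfl, fun r hr => by simp only [b r hr]; rfl, fun r hr => ?_⟩
        funext q
        rw [← blockDiagonal'_mulVec_aux, ← blockDiagonal'_mulVec_aux]
        exact congrFun (c r hr) _⟩
      map_add' := fun x y => rfl
      map_smul' := fun c x => rfl }
  refine LinearEquiv.finrank_eq (LinearEquiv.ofBijective φ ⟨?_, ?_⟩)
  · intro x y h
    ext r ⟨i, b⟩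
    exact congrFun (congrFun (congrArg Subtype.val (congrFun h i)) r) b
  · intro y
    refine ⟨⟨fun r p => (y p.1).1 r p.2, ?_, ?_, ?_⟩, ?_⟩
    · funext p; exact congrFun (y p.1).2.1 p.2
    · intro r hr; funext p; exact congrFun ((y p.1).2.2.1 r hr) p.2
    · rintro r hr
      funext ⟨i, q⟩
      rw [blockDiagonal'_mulVec_aux, blockDiagonal'_mulVec_aux]
      exact congrFun ((y i).2.2.2 r hr) q
    · rfl

theorem chW_eq_zero_of_inj {κ ι : Type} [Fintype ι] (m N : ℕ) (hN : m ≤ N) (P Q : Matrix κ ι ℂ)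
    (hP : ∀ v, P *ᵥ v = 0 → v = 0) : finrank ℂ (chW m N P Q) = 0 := by
  have : chW m N P Q = ⊥ := by
    rw [eq_bot_iff]
    rintro x ⟨a, b, c⟩
    rw [Submodule.mem_bot]
    funext r
    induction r with
    | zero => exact a
    | succ r ih =>
      by_cases hr : r < N
      · apply hP
        rw [c r hr, ih]
        simp
      · exact b _ (by omega)
  rw [this]; simp

theorem chW_eq_zero_of_inj' {κ ι : Type} [Fintype ι] (m : ℕ) (P Q : Matrix κ ι ℂ)
    (hP : ∀ v, Q *ᵥ v = 0 → v = 0) : finrank ℂ (chW m (m + 1) P Q) = 0 := by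
  have : chW m (m + 1) P Q = ⊥ := by
    rw [eq_bot_iff]
    rintro x ⟨a, b, c⟩
    rw [Submodule.mem_bot]
    have key : ∀ d, x (m + 1 - d) = 0 := by
      intro d
      induction d with
      | zero => exact b _ (by omega)
      | succ d ih =>
        by_cases hd : d < m + 1
        · apply hP
          have := c (m + 1 - (d + 1)) (by omega)
          rw [show m + 1 - (d + 1) + 1 = m + 1 - d by omega, ih] at this
          rw [← this]; simp
        · rw [show m + 1 - (d + 1) = 0 by omega]; exact a
    funext r
    by_cases hr : m < r
    · exact b r hr
    · have := key (m + 1 - r)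
      rwa [show m + 1 - (m + 1 - r) = r by omega] at this
  rw [this]; simp

theorem delM_mulVec (k : ℕ) (v : Fin k → ℂ) (j : Fin k) :
    (delM k *ᵥ v) j.rev = v j := by
  simp only [Matrix.mulVec, dotProduct, delM, Matrix.of_apply]
  rw [Finset.sum_eq_single j]
  · rw [if_pos (by rw [Fin.val_rev]; omega)]; simp
  · intro b _ hb
    rw [if_neg (by rw [Fin.val_rev]; intro h; apply hb; ext; omega)]; simp
  · simp

theorem lamM_mulVec (k : ℕ) (v : Fin k → ℂ) (j : Fin k) :
    (lamM k 0 *ᵥ v) j.rev = if h : (j : ℕ) + 1 < k then v ⟨j + 1, h⟩ else 0 := by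
  simp only [Matrix.mulVec, dotProduct, lamM, Matrix.of_apply]
  split_ifs with h
  · rw [Finset.sum_eq_single ⟨j + 1, h⟩]
    · rw [if_neg (by rw [Fin.val_rev]; simp only; omega),
        if_pos (by rw [Fin.val_rev]; simp only; omega)]; simp
    · intro b _ hb
      have : (b : ℕ) ≠ j + 1 := fun h' => hb (by ext; exact h')
      split_ifs with h1 h2
      · simp
      · rw [Fin.val_rev] at h2; omega
      · simp
    · simp
  · refine Finset.sum_eq_zero fun b _ => ?_
    split_ifs with h1 h2
    · simp
    · rw [Fin.val_rev] at h2; omega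
    · simp

theorem lamM_eq (k : ℕ) (μ : ℂ) : lamM k μ = μ • delM k + lamM k 0 := by
  ext i j
  simp only [lamM, delM, Matrix.add_apply, Matrix.smul_apply, Matrix.of_apply]
  split_ifs <;> simp

theorem comb_inj (k : ℕ) (c d : ℂ) (hc : c ≠ 0) (v : Fin k → ℂ)
    (hv : (c • delM k + d • lamM k 0) *ᵥ v = 0) : v = 0 := by
  have key : ∀ e : ℕ, ∀ j : Fin k, (j : ℕ) + e + 1 = k → v j = 0 := by
    intro e
    induction e with
    | zero =>
      intro j hj
      have := congrFun hv j.rev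
      simp only [Matrix.add_mulVec, Matrix.smul_mulVec, Pi.add_apply, Pi.smul_apply,
        delM_mulVec, lamM_mulVec] at this
      rw [dif_neg (by omega)] at this
      simpa [hc] using this
    | succ e ih =>
      intro j hj
      have := congrFun hv j.rev
      simp only [Matrix.add_mulVec, Matrix.smul_mulVec, Pi.add_apply, Pi.smul_apply,
        delM_mulVec, lamM_mulVec] at this
      rw [dif_pos (by omega), ih ⟨j + 1, by omega⟩ (by simp only; omega)] at this
      simpa [hc] using this
  funext j
  exact key (k - 1 - j) j (by omega)

theorem delM_inj (k : ℕ) (v : Fin k → ℂ) (hv : delM k *ᵥ v = 0) : v = 0 :=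
  comb_inj k 1 0 one_ne_zero v (by simpa using hv)

theorem chW_jordan (k m : ℕ) (hk : 0 < k) :
    finrank ℂ (chW m m (lamM k 0) (delM k)) = min m k := by
  let φ : (ℕ → Fin k → ℂ) →ₗ[ℂ] (Fin (min m k) → ℂ) :=
    { toFun := fun x i => x (m - i) ⟨0, hk⟩
      map_add' := fun x y => rfl
      map_smul' := fun c x => rfl }
  refine finrank_eq_aux' _ _ φ (fun a r j =>
    if h : r ≤ m ∧ m - r + j < min m k then a ⟨m - r + j, h.2⟩ else 0) ?_ ?_ ?_
  · intro a
    refine ⟨?_, ?_, ?_⟩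
    · funext j
      exact dif_neg (by omega)
    · intro r hr
      funext j
      exact dif_neg (by omega)
    · intro r hr
      funext i
      obtain ⟨j, rfl⟩ := Fin.rev_surjective i
      rw [lamM_mulVec, delM_mulVec]
      have e : m - (r + 1) + (j + 1) = m - r + j := by omega
      by_cases h : (j : ℕ) + 1 < k
      · simp only [h, dif_pos, e]
        by_cases h' : m - r + j < min m k
        · rw [dif_pos ⟨by omega, h'⟩, dif_pos ⟨by omega, h'⟩]
        · rw [dif_neg (by omega), dif_neg (by omega)]
      · rw [dif_neg h]
        symm
        exact dif_neg (fun h' => by have := h'.2; omega)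
  · rintro x ⟨a, b, c⟩ h
    have rel1 : ∀ r, r < m → ∀ j (hj : j + 1 < k), x (r + 1) ⟨j + 1, hj⟩ = x r ⟨j, by omega⟩ := by
      intro r hr j hj
      have := congrFun (c r hr) (Fin.rev ⟨j, by omega⟩)
      rw [lamM_mulVec, delM_mulVec] at this
      simpa only [hj, dif_pos] using this
    have rel2 : ∀ r, r < m → x r ⟨k - 1, by omega⟩ = 0 := by
      intro r hr
      have := congrFun (c r hr) (Fin.rev ⟨k - 1, by omega⟩)
      rw [lamM_mulVec, delM_mulVec, dif_neg (by simp only; omega)] at this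
      exact this.symm
    have down : ∀ j (hj : j < k) r, r + j ≤ m → x (r + j) ⟨j, hj⟩ = x r ⟨0, hk⟩ := by
      intro j
      induction j with
      | zero => intro hj r hr; rfl
      | succ j ih =>
        intro hj r hr
        rw [← ih (by omega) r (by omega)]
        exact rel1 (r + j) (by omega) j hj
    have base : ∀ r, x r ⟨0, hk⟩ = 0 := by
      intro r
      by_cases hr : m < r
      · rw [b r hr]; rfl
      by_cases h0 : r = 0
      · rw [h0, a]; rfl
      by_cases h1 : r + k ≤ m
      · rw [← down (k - 1) (by omega) r (by omega)]
        exact rel2 _ (by omega)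
      · have := congrFun h ⟨m - r, by omega⟩
        simp only [φ, LinearMap.coe_mk, AddHom.coe_mk] at this
        rw [show m - (m - r) = r by omega] at this
        exact this
    have zer : ∀ r j (hj : j < k), x r ⟨j, hj⟩ = 0 := by
      intro r
      induction r with
      | zero => intro j hj; rw [a]; rfl
      | succ r ih =>
        intro j hj
        by_cases hr : r < m
        · cases j with
          | zero => exact base _
          | succ j => rw [rel1 r hr j hj]; exact ih _ _
        · rw [b _ (by omega)]; rfl
    funext r j
    exact zer r j j.2
  · intro y
    funext i
    have hi := i.2
    have e : m - (m - (i : ℕ)) + 0 = i := by omega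
    simp only [φ, LinearMap.coe_mk, AddHom.coe_mk]
    rw [dif_pos ⟨by omega, by omega⟩]
    congr 1
    ext
    exact e

theorem FM_mulVec (k : ℕ) (v : Fin (k + 1) → ℂ) (i : Fin k) : (FM k *ᵥ v) i = v i.castSucc := by
  simp only [Matrix.mulVec, dotProduct, FM, Matrix.of_apply]
  rw [Finset.sum_eq_single i.castSucc]
  · simp
  · intro b _ hb
    rw [if_neg (fun h => hb (by ext; simpa using h))]; simp
  · simp

theorem GM_mulVec (k : ℕ) (v : Fin (k + 1) → ℂ) (i : Fin k) : (GM k *ᵥ v) i = v i.succ := by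
  simp only [Matrix.mulVec, dotProduct, GM, Matrix.of_apply]
  rw [Finset.sum_eq_single i.succ]
  · simp
  · intro b _ hb
    rw [if_neg (fun h => hb (by ext; simpa using h))]; simp
  · simp

theorem FMT_mulVec (k : ℕ) (v : Fin k → ℂ) (i : Fin k) : ((FM k)ᵀ *ᵥ v) i.castSucc = v i := by
  simp only [Matrix.mulVec, dotProduct, FM, Matrix.of_apply, Matrix.transpose_apply]
  rw [Finset.sum_eq_single i]
  · simp
  · intro b _ hb
    rw [if_neg (fun h => hb (by ext; simpa using h.symm))]; simp
  · simp

theorem chW_L (k m : ℕ) :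
    finrank ℂ (chW m (m + 1) (L1M k) (L2M k)) = m - k := by
  set e : Fin (k + 1) ⊕ Fin k ≃ Fin (2 * k + 1) := finSumFinEquiv.trans (finCongr (by omega)) with he
  have L1 : ∀ v, L1M k *ᵥ v = (fromBlocks 0 (FM k)ᵀ (FM k) 0 *ᵥ (v ∘ e)) ∘ e.symm := by
    intro v
    exact Matrix.submatrix_mulVec_equiv _ _ _ _
  have L2 : ∀ v, L2M k *ᵥ v = (fromBlocks 0 (GM k)ᵀ (GM k) 0 *ᵥ (v ∘ e)) ∘ e.symm := by
    intro v
    exact Matrix.submatrix_mulVec_equiv _ _ _ _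
  have L : ∀ v w, L1M k *ᵥ v = L2M k *ᵥ w ↔
      (∀ i : Fin k, v (e (.inl i.castSucc)) = w (e (.inl i.succ))) ∧
      (FM k)ᵀ *ᵥ (fun i => v (e (.inr i))) = (GM k)ᵀ *ᵥ (fun i => w (e (.inr i))) := by
    intro v w
    rw [L1, L2, e.symm.surjective.injective_comp_right.eq_iff, fromBlocks_mulVec,
      fromBlocks_mulVec]
    constructor
    · intro h
      constructor
      · intro i
        have := congrFun h (.inr i)
        simpa [FM_mulVec, GM_mulVec] using this
      · funext i
        have := congrFun h (.inl i)
        simpa [Function.comp_def] using this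
    · rintro ⟨h1, h2⟩
      funext i
      cases i with
      | inl i => simpa [Function.comp_def] using congrFun h2 i
      | inr i => simpa [FM_mulVec, GM_mulVec] using h1 i
  let φ : (ℕ → Fin (2 * k + 1) → ℂ) →ₗ[ℂ] (Fin (m - k) → ℂ) :=
    { toFun := fun x i => x (i + k + 1) (e (.inl 0))
      map_add' := fun x y => rfl
      map_smul' := fun c x => rfl }
  refine finrank_eq_aux' _ _ φ (fun a r p => Sum.elim (fun j : Fin (k + 1) =>
    if h : k + 1 ≤ r + j ∧ r + j - k - 1 < m - k then a ⟨r + j - k - 1, h.2⟩ else 0)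
    (fun _ => 0) (e.symm p)) ?_ ?_ ?_
  · intro a
    refine ⟨?_, ?_, ?_⟩
    · funext p
      obtain ⟨q, rfl⟩ := e.surjective p
      simp only [Equiv.symm_apply_apply]
      rcases q with j | j
      · exact dif_neg (by omega)
      · rfl
    · intro r hr
      funext p
      obtain ⟨q, rfl⟩ := e.surjective p
      simp only [Equiv.symm_apply_apply]
      rcases q with j | j
      · exact dif_neg (by omega)
      · rfl
    · intro r hr
      rw [L]
      constructor
      · intro i
        have e1 : r + 1 + (i : ℕ) = r + (i + 1) := by omega
        simp only [Equiv.symm_apply_apply, Sum.elim_inl, Fin.val_castSucc, Fin.val_succ, e1]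
      · simp only [Equiv.symm_apply_apply, Sum.elim_inr]
        rw [show (fun i : Fin k => (0 : ℂ)) = 0 from rfl]
        simp
  · rintro x ⟨a, b, c⟩ h
    have z : ∀ r, (fun i => x r (e (.inr i))) = 0 := by
      intro r
      induction r with
      | zero => rw [a]; rfl
      | succ r ih =>
        by_cases hr : r < m + 1
        · have := ((L _ _).1 (c r hr)).2
          rw [ih, mulVec_zero] at this
          funext i
          have := congrFun this i.castSucc
          rw [FMT_mulVec] at this
          exact this
        · rw [b _ (by omega)]; rfl
    have rel : ∀ r, r ≤ m → ∀ j (hj : j < k), x (r + 1) (e (.inl ⟨j, by omega⟩)) =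
        x r (e (.inl ⟨j + 1, by omega⟩)) := by
      intro r hr j hj
      exact ((L _ _).1 (c r (by omega))).1 ⟨j, hj⟩
    have down : ∀ j (hj : j < k + 1) r, r + j ≤ m + 1 →
        x (r + j) (e (.inl 0)) = x r (e (.inl ⟨j, hj⟩)) := by
      intro j
      induction j with
      | zero => intro hj r hr; rfl
      | succ j ih =>
        intro hj r hr
        rw [← rel r (by omega) j (by omega), ← ih (by omega) (r + 1) (by omega)]
        congr 1
        omega
    have base : ∀ r, x r (e (.inl 0)) = 0 := by
      intro r
      by_cases hr : m < r
      · rw [b r hr]; rfl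
      by_cases h0 : r ≤ k
      · have := down r (by omega) 0 (by omega)
        rw [Nat.zero_add] at this
        rw [this, a]; rfl
      · have := congrFun h ⟨r - k - 1, by omega⟩
        simp only [φ, LinearMap.coe_mk, AddHom.coe_mk] at this
        rw [show r - k - 1 + k + 1 = r by omega] at this
        exact this
    have zer : ∀ j (hj : j < k + 1) r, x r (e (.inl ⟨j, hj⟩)) = 0 := by
      intro j
      induction j with
      | zero => intro hj r; exact base r
      | succ j ih =>
        intro hj r
        by_cases hr : r ≤ m
        · rw [← rel r hr j (by omega)]; exact ih _ _
        · rw [b _ (by omega)]; rfl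
    funext r p
    obtain ⟨q, rfl⟩ := e.surjective p
    rcases q with j | j
    · exact zer j j.2 r
    · exact congrFun (z r) j
  · intro y
    funext i
    have hi := i.2
    simp only [φ, LinearMap.coe_mk, AddHom.coe_mk, Equiv.symm_apply_apply, Sum.elim_inl]
    rw [dif_pos ⟨by simp only [Fin.val_zero]; omega, by simp only [Fin.val_zero]; omega⟩]
    congr 1
    ext
    simp only [Fin.val_zero]
    omega

end helpers
section helpers2

open Module

noncomputable def cinv (a b c d : ℂ) (m N : ℕ) (t : CanType) : ℕ :=
  finrank ℂ (chW m N (a • t.A + b • t.B) (c • t.A + d • t.B))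

theorem cinv_eq (a b c d : ℂ) (m N : ℕ) (t : CanType) (P Q : Matrix (Fin t.size) (Fin t.size) ℂ)
    (h1 : a • t.A + b • t.B = P) (h2 : c • t.A + d • t.B = Q) :
    cinv a b c d m N t = finrank ℂ (chW m N P Q) := by
  subst h1 h2
  rfl

theorem cinv_sum {t s : ℕ} (X : Fin t → CanType) (Y : Fin s → CanType)
    (h : CongruentPairs
      (Matrix.blockDiagonal' fun i => (X i).A, Matrix.blockDiagonal' fun i => (X i).B)
      (Matrix.blockDiagonal' fun j => (Y j).A, Matrix.blockDiagonal' fun j => (Y j).B))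
    (a b c d : ℂ) (m N : ℕ) :
    ∑ i, cinv a b c d m N (X i) = ∑ j, cinv a b c d m N (Y j) := by
  have key : ∀ {t : ℕ} (X : Fin t → CanType) (a b : ℂ),
      (Matrix.blockDiagonal' fun i => a • (X i).A + b • (X i).B) =
      a • (Matrix.blockDiagonal' fun i => (X i).A) + b • (Matrix.blockDiagonal' fun i => (X i).B) := by
    intro t X a b
    rw [← Matrix.blockDiagonal'_smul, ← Matrix.blockDiagonal'_smul, ← Matrix.blockDiagonal'_add]
    rfl
  unfold cinv
  rw [← chW_blockDiagonal, ← chW_blockDiagonal, key, key, key, key]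
  obtain ⟨S, ⟨T, h1, h2⟩, hA, hB⟩ := h
  simp only at hA hB
  symm
  refine chW_congr m N _ _ _ _ S T Sᵀ Tᵀ h1 h2 ?_ ?_ ?_
  · rw [← Matrix.transpose_mul, h1, Matrix.transpose_one]
  · rw [hA, hB]
    simp [Matrix.mul_add, Matrix.add_mul]
  · rw [hA, hB]
    simp [Matrix.mul_add, Matrix.add_mul]

theorem cinv_p_H (m k : ℕ) (μ : ℂ) : cinv 1 0 0 1 m (m + 1) (.H k μ) = 0 := by
  refine chW_eq_zero_of_inj _ _ (by omega) _ _ fun v hv => delM_inj k v ?_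
  simp only [one_smul, zero_smul, add_zero, zero_add] at hv
  exact hv

theorem cinv_p_K (m k : ℕ) : cinv 1 0 0 1 m (m + 1) (.K k) = 0 := by
  refine chW_eq_zero_of_inj' _ _ _ fun v hv => delM_inj k v ?_
  simp only [one_smul, zero_smul, add_zero, zero_add] at hv
  exact hv

theorem cinv_p_L (m k : ℕ) : cinv 1 0 0 1 m (m + 1) (.L k) = m - k := by
  have := chW_L k m
  exact (cinv_eq _ _ _ _ _ _ _ _ _ (by rw [one_smul, zero_smul, add_zero]; rfl)
    (by rw [one_smul, zero_smul, zero_add]; rfl)).trans this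

theorem cinv_e_H (m k : ℕ) (μ : ℂ) : cinv 1 0 0 1 m m (.H k μ) = 0 := by
  refine chW_eq_zero_of_inj _ _ (by omega) _ _ fun v hv => delM_inj k v ?_
  simp only [one_smul, zero_smul, add_zero, zero_add] at hv
  exact hv

theorem cinv_e_K (m k : ℕ) (hk : 0 < k) : cinv 1 0 0 1 m m (.K k) = min m k := by
  have := chW_jordan k m hk
  exact (cinv_eq _ _ _ _ _ _ _ _ _ (by rw [one_smul, zero_smul, add_zero]; rfl)
    (by rw [one_smul, zero_smul, zero_add]; rfl)).trans this

theorem cinv_d_H (m k : ℕ) (lam : ℂ) (hk : 0 < k) :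
    cinv (-lam) 1 1 0 m m (.H k lam) = min m k := by
  have h1 := chW_jordan k m hk
  have e : -lam • delM k + lamM k lam = lamM k 0 := by rw [lamM_eq k lam]; simp
  rw [← e] at h1
  exact (cinv_eq _ _ _ _ _ _ _ _ _ (by rw [one_smul]; rfl)
    (by rw [one_smul, zero_smul, add_zero]; rfl)).trans h1

theorem cinv_d_H' (m k : ℕ) (lam μ : ℂ) (h : μ ≠ lam) :
    cinv (-lam) 1 1 0 m m (.H k μ) = 0 := by
  refine chW_eq_zero_of_inj _ _ (by omega) _ _ fun v hv =>
    comb_inj k (μ - lam) 1 (sub_ne_zero.2 h) v ?_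
  have e : -lam • delM k + (1 : ℂ) • lamM k μ = (μ - lam) • delM k + (1 : ℂ) • lamM k 0 := by
    rw [lamM_eq k μ, one_smul, one_smul, ← add_assoc, ← add_smul]
    congr 2
    ring
  rw [← e]
  exact hv

theorem cinv_d_K (m k : ℕ) (lam : ℂ) : cinv (-lam) 1 1 0 m m (.K k) = 0 := by
  refine chW_eq_zero_of_inj _ _ (by omega) _ _ fun v hv =>
    comb_inj k 1 (-lam) one_ne_zero v ?_
  rw [add_comm]
  exact hv

def CanType.isL : CanType → Prop
  | .L _ => True
  | _ => False

open Classical in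
theorem msum_count (M : Multiset CanType) (f g h : CanType → ℕ) (c : CanType)
    (H : ∀ t ∈ M, f t + g t = h t + h t + if t = c then 1 else 0) :
    (M.map f).sum + (M.map g).sum = (M.map h).sum + (M.map h).sum + M.count c := by
  induction M using Multiset.induction_on with
  | empty => simp
  | cons a M ih =>
    have h1 := H a (Multiset.mem_cons_self a M)
    have h2 := ih fun t ht => H t (Multiset.mem_cons_of_mem ht)
    simp only [Multiset.map_cons, Multiset.sum_cons, Multiset.count_cons]
    have : (if c = a then 1 else 0) = if a = c then 1 else 0 := by simp only [eq_comm]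
    omega

open Classical in
theorem msum_count' (M : Multiset CanType) (f g h : CanType → ℕ) (c : CanType)
    (H : ∀ t ∈ M, f t + g t + (if t = c then 1 else 0) = h t + h t) :
    (M.map f).sum + (M.map g).sum + M.count c = (M.map h).sum + (M.map h).sum := by
  induction M using Multiset.induction_on with
  | empty => simp
  | cons a M ih =>
    have h1 := H a (Multiset.mem_cons_self a M)
    have h2 := ih fun t ht => H t (Multiset.mem_cons_of_mem ht)
    simp only [Multiset.map_cons, Multiset.sum_cons, Multiset.count_cons]
    have : (if c = a then 1 else 0) = if a = c then 1 else 0 := by simp only [eq_comm]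
    omega

open Classical in
theorem multiset_eq (M N : Multiset CanType) (hM : ∀ t ∈ M, 0 < t.param)
    (hN : ∀ t ∈ N, 0 < t.param)
    (h : ∀ a b c d m n, (M.map (cinv a b c d m n)).sum = (N.map (cinv a b c d m n)).sum) :
    M = N := by
  have pos : ∀ c : CanType, ¬ 0 < c.param → M.count c = N.count c := by
    intro c hc
    rw [Multiset.count_eq_zero_of_notMem fun h => hc (hM c h),
      Multiset.count_eq_zero_of_notMem fun h => hc (hN c h)]
  have cL : ∀ k, M.count (.L k) = N.count (.L k) := by
    intro k
    by_cases hk : 0 < k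
    swap
    · exact pos _ hk
    have H : ∀ t : CanType, cinv 1 0 0 1 (k + 1) (k + 1 + 1) t + cinv 1 0 0 1 (k - 1) (k - 1 + 1) t =
        cinv 1 0 0 1 k (k + 1) t + cinv 1 0 0 1 k (k + 1) t + if t = .L k then 1 else 0 := by
      intro t
      cases t with
      | H j μ => simp [cinv_p_H]
      | K j => simp [cinv_p_K]
      | L j =>
        simp only [cinv_p_L, CanType.L.injEq]
        split_ifs <;> omega
    have h1 := msum_count M _ _ _ _ fun t _ => H t
    have h2 := msum_count N _ _ _ _ fun t _ => H t
    rw [h, h, h] at h1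
    omega
  have hL : M.filter CanType.isL = N.filter CanType.isL := by
    ext c
    rw [Multiset.count_filter, Multiset.count_filter]
    cases c with
    | L k => rw [cL]
    | H k μ => simp [CanType.isL]
    | K k => simp [CanType.isL]
  set M' := M.filter (fun c => ¬ CanType.isL c) with hM'
  set N' := N.filter (fun c => ¬ CanType.isL c) with hN'
  have eM : M = M.filter CanType.isL + M' := (Multiset.filter_add_not _ _).symm
  have eN : N = N.filter CanType.isL + N' := (Multiset.filter_add_not _ _).symm
  have h' : ∀ a b c d m n, (M'.map (cinv a b c d m n)).sum = (N'.map (cinv a b c d m n)).sum := by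
    intro a b c d m n
    have := h a b c d m n
    rw [eM, eN, hL, Multiset.map_add, Multiset.map_add, Multiset.sum_add, Multiset.sum_add] at this
    exact Nat.add_left_cancel this
  have pM : ∀ t ∈ M', 0 < t.param ∧ ¬ t.isL := fun t ht =>
    ⟨hM t (Multiset.mem_filter.1 ht).1, (Multiset.mem_filter.1 ht).2⟩
  have pN : ∀ t ∈ N', 0 < t.param ∧ ¬ t.isL := fun t ht =>
    ⟨hN t (Multiset.mem_filter.1 ht).1, (Multiset.mem_filter.1 ht).2⟩
  have : M' = N' := by
    ext c
    by_cases hc : 0 < c.param ∧ ¬ c.isL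
    swap
    · rw [Multiset.count_eq_zero_of_notMem fun h => hc (pM c h),
        Multiset.count_eq_zero_of_notMem fun h => hc (pN c h)]
    obtain ⟨hk, hc⟩ := hc
    cases c with
    | L k => exact absurd trivial hc
    | K k =>
      have hk : 0 < k := hk
      have H : ∀ t : CanType, 0 < t.param ∧ ¬ t.isL →
          cinv 1 0 0 1 (k + 1) (k + 1) t + cinv 1 0 0 1 (k - 1) (k - 1) t +
          (if t = .K k then 1 else 0) = cinv 1 0 0 1 k k t + cinv 1 0 0 1 k k t := by
        rintro t ⟨ht, hL⟩
        cases t with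
        | H j μ => simp [cinv_e_H]
        | K j =>
          have hj : 0 < j := ht
          simp only [cinv_e_K _ _ hj, CanType.K.injEq]
          split_ifs <;> omega
        | L j => exact absurd trivial hL
      have h1 := msum_count' M' _ _ _ _ fun t ht => H t (pM t ht)
      have h2 := msum_count' N' _ _ _ _ fun t ht => H t (pN t ht)
      rw [h', h', h'] at h1
      omega
    | H k lam =>
      have hk : 0 < k := hk
      have H : ∀ t : CanType, 0 < t.param ∧ ¬ t.isL →
          cinv (-lam) 1 1 0 (k + 1) (k + 1) t + cinv (-lam) 1 1 0 (k - 1) (k - 1) t +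
          (if t = .H k lam then 1 else 0) = cinv (-lam) 1 1 0 k k t + cinv (-lam) 1 1 0 k k t := by
        rintro t ⟨ht, hL⟩
        cases t with
        | K j => simp [cinv_d_K]
        | H j μ =>
          have hj : 0 < j := ht
          by_cases e : μ = lam
          · subst e
            simp only [cinv_d_H _ _ _ hj, CanType.H.injEq, and_true]
            split_ifs <;> omega
          · simp [cinv_d_H' _ _ _ _ e, e]
        | L j => exact absurd trivial hL
      have h1 := msum_count' M' _ _ _ _ fun t ht => H t (pM t ht)
      have h2 := msum_count' N' _ _ _ _ fun t ht => H t (pN t ht)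
      rw [h', h', h'] at h1
      omega
  rw [eM, eN, hL, this]

end helpers2


noncomputable section

/-- **Uniqueness of the canonical form (Thompson).** If two direct sums of canonical
pairs (with positive size parameters) are congruent, then they have the same number of
summands and the summands coincide up to a permutation. -/
theorem canonical_form_unique {t s : ℕ} (X : Fin t → CanType) (Y : Fin s → CanType)
    (hX : ∀ i, 0 < (X i).param) (hY : ∀ j, 0 < (Y j).param)
    (h : CongruentPairs
      (Matrix.blockDiagonal' fun i => (X i).A, Matrix.blockDiagonal' fun i => (X i).B)
      (Matrix.blockDiagonal' fun j => (Y j).A, Matrix.blockDiagonal' fun j => (Y j).B)) :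
    s = t ∧ ∃ σ : Fin t ≃ Fin s, ∀ i, Y (σ i) = X i := by
  have hm : (Finset.univ : Finset (Fin t)).val.map X = (Finset.univ : Finset (Fin s)).val.map Y := by
    refine multiset_eq _ _ ?_ ?_ ?_
    · intro c hc
      obtain ⟨i, -, rfl⟩ := Multiset.mem_map.1 hc
      exact hX i
    · intro c hc
      obtain ⟨i, -, rfl⟩ := Multiset.mem_map.1 hc
      exact hY i
    · intro a b c d m n
      rw [Multiset.map_map, Multiset.map_map]
      exact cinv_sum X Y h a b c d m n
  have hcard : ∀ c, Nonempty ({i // X i = c} ≃ {j // Y j = c}) := by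
    classical
    intro c
    have := congrArg (Multiset.count c) hm
    rw [Multiset.count_map, Multiset.count_map] at this
    refine ⟨Fintype.equivOfCardEq ?_⟩
    rw [Fintype.card_subtype, Fintype.card_subtype]
    simp only [eq_comm (a := c)] at this
    exact this
  let σ : Fin t ≃ Fin s := Equiv.ofFiberEquiv fun c => (hcard c).some
  refine ⟨?_, σ, fun i => Equiv.ofFiberEquiv_map _ i⟩
  have := Fintype.card_congr σ
  simpa using this.symm

end
end

section
/- Let (A,B) = (A_1,B_1) ⊕ ⋯ ⊕ (A_t,B_t) be a block-diagonal pair of symmetric complex matrices, where each (A_i,B_i) is a pair of symmetric n_i×n_i matrices, and let 𝒟(ℂ) be a pattern space in Sym_n(ℂ)×Sym_n(ℂ) (n = n_1+⋯+n_t) given by symmetric sets of positions, partitioned conformably into block pattern spaces 𝒟_{ij}(ℂ) ⊆ ℂ^{n_i×n_j}×ℂ^{n_i×n_j} with 𝒟_{ji}(ℂ) = {(X^T, Y^T) : (X,Y) ∈ 𝒟_{ij}(ℂ)}. Then the deformation (X,Y) ↦ (A+X, B+Y) parametrized by 𝒟(ℂ) is a miniversal deformation of (A,B) if and only if: (i)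 for each i, every coset of T(A_i,B_i) in Sym_{n_i}(ℂ)×Sym_{n_i}(ℂ) contains exactly one element of 𝒟_{ii}(ℂ); and (ii) for each i < j, every coset of the subspace W_{ij} := { (R^T A_j + A_i S, R^T B_j + B_i S) : S ∈ ℂ^{n_i×n_j}, R ∈ ℂ^{n_j×n_i} } in ℂ^{n_i×n_j}×ℂ^{n_i×n_j} contains exactly one element of 𝒟_{ij}(ℂ). -/
open Matrix Filter

noncomputable section

attribute [local instance] Matrix.normedAddCommGroup Matrix.normedSpace

/-- The space of pairs of symmetric `ι × ι` complex matrices, as a subspace of all pairs. -/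
def SymPair (ι : Type) [Fintype ι] : Submodule ℂ (Matrix ι ι ℂ × Matrix ι ι ℂ) where
  carrier := {p | p.1.IsSymm ∧ p.2.IsSymm}
  add_mem' ha hb := ⟨ha.1.add hb.1, ha.2.add hb.2⟩
  zero_mem' := ⟨Matrix.isSymm_zero, Matrix.isSymm_zero⟩
  smul_mem' c p hp := ⟨hp.1.smul c, hp.2.smul c⟩

/-- The linear map `C ↦ (CᵀA + AC, CᵀB + BC)`. -/
def congMap {ι : Type} [Fintype ι] (A B : Matrix ι ι ℂ) :
    Matrix ι ι ℂ →ₗ[ℂ] Matrix ι ι ℂ × Matrix ι ι ℂ where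
  toFun C := (Cᵀ * A + A * C, Cᵀ * B + B * C)
  map_add' C D := by
    simp only [Matrix.transpose_add, Matrix.add_mul, Matrix.mul_add, Prod.mk_add_mk, Prod.ext_iff]
    constructor <;> abel
  map_smul' c C := by
    simp only [Matrix.transpose_smul, Matrix.smul_mul, Matrix.mul_smul, RingHom.id_apply,
      Prod.smul_mk, smul_add]

/-- `T(A,B) = {(CᵀA + AC, CᵀB + BC) : C}`, the tangent space to the congruence class. -/
def TSpace {ι : Type} [Fintype ι] (A B : Matrix ι ι ℂ) :
    Submodule ℂ (Matrix ι ι ℂ × Matrix ι ι ℂ) :=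
  LinearMap.range (congMap A B)

/-- The pattern space determined by two sets of positions: pairs of symmetric matrices
supported on `I1` resp. `I2`. -/
def Pattern {ι : Type} [Fintype ι] (I1 I2 : Set (ι × ι)) :
    Submodule ℂ (Matrix ι ι ℂ × Matrix ι ι ℂ) where
  carrier := {p | p.1.IsSymm ∧ p.2.IsSymm ∧ (∀ i j, (i, j) ∉ I1 → p.1 i j = 0) ∧
    (∀ i j, (i, j) ∉ I2 → p.2 i j = 0)}
  add_mem' := by
    rintro a b ⟨ha1, ha2, ha3, ha4⟩ ⟨hb1, hb2, hb3, hb4⟩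
    exact ⟨ha1.add hb1, ha2.add hb2,
      fun i j h => by show a.1 i j + b.1 i j = 0; rw [ha3 i j h, hb3 i j h, add_zero],
      fun i j h => by show a.2 i j + b.2 i j = 0; rw [ha4 i j h, hb4 i j h, add_zero]⟩
  zero_mem' := ⟨Matrix.isSymm_zero, Matrix.isSymm_zero, fun _ _ _ => rfl, fun _ _ _ => rfl⟩
  smul_mem' := by
    rintro c a ⟨ha1, ha2, ha3, ha4⟩
    exact ⟨ha1.smul c, ha2.smul c,
      fun i j h => by show c * a.1 i j = 0; rw [ha3 i j h, mul_zero],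
      fun i j h => by show c * a.2 i j = 0; rw [ha4 i j h, mul_zero]⟩

theorem Pattern_le {ι : Type} [Fintype ι] (I1 I2 : Set (ι × ι)) :
    Pattern I1 I2 ≤ SymPair ι := fun _ hp => ⟨hp.1, hp.2.1⟩

/-- A deformation of a pair `(A, B)` of symmetric `ι × ι` complex matrices, with parameter
space `P`: a map defined near `0 : P`, holomorphic at `0` (i.e. each matrix entry is an
analytic function of the parameter at `0`), taking values in pairs of symmetric matrices,
and sending `0` to `(A, B)`. -/
structure Deformation (ι : Type) [Fintype ι] (P : Type*) [NormedAddCommGroup P]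
    [NormedSpace ℂ P] (A B : Matrix ι ι ℂ) where
  map : P → Matrix ι ι ℂ × Matrix ι ι ℂ
  analytic₁ : ∀ i j, AnalyticAt ℂ (fun p => (map p).1 i j) 0
  analytic₂ : ∀ i j, AnalyticAt ℂ (fun p => (map p).2 i j) 0
  symm : ∀ᶠ p in nhds (0 : P), (map p).1.IsSymm ∧ (map p).2.IsSymm
  init : map 0 = (A, B)

/-- Two (maps underlying) deformations with the same parameter space are equivalent if
`g p = (I p)ᵀ • f p • (I p)` near `0`, for a family `I` of matrices holomorphic at `0`
with `I 0 = 1`. -/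
def DefEquiv {ι : Type} [Fintype ι] [DecidableEq ι] {P : Type*} [NormedAddCommGroup P]
    [NormedSpace ℂ P] (f g : P → Matrix ι ι ℂ × Matrix ι ι ℂ) : Prop :=
  ∃ I : P → Matrix ι ι ℂ, (∀ i j, AnalyticAt ℂ (fun p => I p i j) 0) ∧ I 0 = 1 ∧
    ∀ᶠ p in nhds (0 : P), g p = ((I p)ᵀ * (f p).1 * I p, (I p)ᵀ * (f p).2 * I p)

/-- A deformation is versal if every deformation of the same pair (with a finite-dimensional
parameter space) is equivalent to a holomorphic reparametrization of it. -/
def IsVersal {ι : Type} [Fintype ι] [DecidableEq ι] {P : Type*} [NormedAddCommGroup P]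
    [NormedSpace ℂ P] {A B : Matrix ι ι ℂ} (𝒜 : Deformation ι P A B) : Prop :=
  ∀ (Q : Type) (_ : NormedAddCommGroup Q), ∀ (_ : NormedSpace ℂ Q)
    (_ : FiniteDimensional ℂ Q) (ℬ : Deformation ι Q A B),
    ∃ φ : Q → P, AnalyticAt ℂ φ 0 ∧ φ 0 = 0 ∧
      DefEquiv (fun q => 𝒜.map (φ q)) ℬ.map

/-- A versal deformation is miniversal if its parameter space has the minimal possible
dimension among versal deformations. -/
def IsMiniversal {ι : Type} [Fintype ι] [DecidableEq ι] {P : Type*} [NormedAddCommGroup P]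
    [NormedSpace ℂ P] {A B : Matrix ι ι ℂ} (𝒜 : Deformation ι P A B) : Prop :=
  IsVersal 𝒜 ∧ ∀ (Q : Type) (_ : NormedAddCommGroup Q), ∀ (_ : NormedSpace ℂ Q)
    (_ : FiniteDimensional ℂ Q) (ℬ : Deformation ι Q A B),
    IsVersal ℬ → Module.finrank ℂ P ≤ Module.finrank ℂ Q

/-- Entry evaluation is analytic on a finite-dimensional parameter space of matrix pairs. -/
theorem analyticAt_entry {ι : Type} [Fintype ι]
    (D : Submodule ℂ (Matrix ι ι ℂ × Matrix ι ι ℂ)) (i j : ι) :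
    AnalyticAt ℂ (fun p : D => ((p : Matrix ι ι ℂ × Matrix ι ι ℂ)).1 i j) 0 ∧
    AnalyticAt ℂ (fun p : D => ((p : Matrix ι ι ℂ × Matrix ι ι ℂ)).2 i j) 0 := by
  constructor
  · let L : D →ₗ[ℂ] ℂ :=
      { toFun := fun p => (p : Matrix ι ι ℂ × Matrix ι ι ℂ).1 i j
        map_add' := fun x y => rfl
        map_smul' := fun c x => rfl }
    exact (LinearMap.toContinuousLinearMap L).analyticAt 0
  · let L : D →ₗ[ℂ] ℂ :=
      { toFun := fun p => (p : Matrix ι ι ℂ × Matrix ι ι ℂ).2 i j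
        map_add' := fun x y => rfl
        map_smul' := fun c x => rfl }
    exact (LinearMap.toContinuousLinearMap L).analyticAt 0

/-- The deformation `(X, Y) ↦ (A + X, B + Y)` of `(A, B)`, parametrized by a subspace `D`
of the space of pairs of symmetric matrices. -/
def patternDeformation {ι : Type} [Fintype ι] (A B : Matrix ι ι ℂ)
    (hA : A.IsSymm) (hB : B.IsSymm) (D : Submodule ℂ (Matrix ι ι ℂ × Matrix ι ι ℂ))
    (hD : D ≤ SymPair ι) : Deformation ι D A B where
  map p := (A + (p : Matrix ι ι ℂ × Matrix ι ι ℂ).1, B + (p : Matrix ι ι ℂ × Matrix ι ι ℂ).2)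
  analytic₁ i j := by
    have h := (analyticAt_entry D i j).1
    have : (fun p : D => (A + (p : Matrix ι ι ℂ × Matrix ι ι ℂ).1) i j)
        = fun p : D => A i j + (p : Matrix ι ι ℂ × Matrix ι ι ℂ).1 i j := rfl
    rw [this]
    exact analyticAt_const.add h
  analytic₂ i j := by
    have h := (analyticAt_entry D i j).2
    have : (fun p : D => (B + (p : Matrix ι ι ℂ × Matrix ι ι ℂ).2) i j)
        = fun p : D => B i j + (p : Matrix ι ι ℂ × Matrix ι ι ℂ).2 i j := rfl
    rw [this]
    exact analyticAt_const.add h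
  symm := Eventually.of_forall fun p =>
    ⟨hA.add (hD p.2).1, hB.add (hD p.2).2⟩
  init := by simp

end

noncomputable section

attribute [local instance] Matrix.normedAddCommGroup Matrix.normedSpace

theorem blockDiagonal'_isSymm {t : ℕ} {ns : Fin t → ℕ}
    (A : ∀ i, Matrix (Fin (ns i)) (Fin (ns i)) ℂ) (hA : ∀ i, (A i).IsSymm) :
    (Matrix.blockDiagonal' A).IsSymm := by
  unfold Matrix.IsSymm
  rw [Matrix.blockDiagonal'_transpose]
  exact congrArg Matrix.blockDiagonal' (funext fun i => hA i)

/-- The linear map `(S, R) ↦ (Rᵀ A_j + A_i S, Rᵀ B_j + B_i S)`. -/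
def offMap {ι κ : Type} [Fintype ι] [Fintype κ] (Ai Bi : Matrix ι ι ℂ)
    (Aj Bj : Matrix κ κ ℂ) :
    (Matrix ι κ ℂ × Matrix κ ι ℂ) →ₗ[ℂ] (Matrix ι κ ℂ × Matrix ι κ ℂ) where
  toFun SR := (SR.2ᵀ * Aj + Ai * SR.1, SR.2ᵀ * Bj + Bi * SR.1)
  map_add' x y := by
    simp only [Prod.fst_add, Prod.snd_add, Matrix.transpose_add, Matrix.add_mul,
      Matrix.mul_add, Prod.mk_add_mk, Prod.ext_iff]
    constructor <;> abel
  map_smul' c x := by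
    simp only [Prod.smul_fst, Prod.smul_snd, Matrix.transpose_smul, Matrix.smul_mul,
      Matrix.mul_smul, RingHom.id_apply, Prod.smul_mk, smul_add]

/-- `W = {(Rᵀ A_j + A_i S, Rᵀ B_j + B_i S) : S, R}`. -/
def WSpace {ι κ : Type} [Fintype ι] [Fintype κ] (Ai Bi : Matrix ι ι ℂ)
    (Aj Bj : Matrix κ κ ℂ) : Submodule ℂ (Matrix ι κ ℂ × Matrix ι κ ℂ) :=
  LinearMap.range (offMap Ai Bi Aj Bj)

/-- The space of pairs of (rectangular) matrices supported on given sets of positions. -/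
def entryPattern {ι κ : Type} (S1 S2 : Set (ι × κ)) :
    Submodule ℂ (Matrix ι κ ℂ × Matrix ι κ ℂ) where
  carrier := {x | (∀ i j, (i, j) ∉ S1 → x.1 i j = 0) ∧ (∀ i j, (i, j) ∉ S2 → x.2 i j = 0)}
  add_mem' := by
    rintro a b ⟨ha1, ha2⟩ ⟨hb1, hb2⟩
    exact ⟨fun i j h => by show a.1 i j + b.1 i j = 0; rw [ha1 i j h, hb1 i j h, add_zero],
      fun i j h => by show a.2 i j + b.2 i j = 0; rw [ha2 i j h, hb2 i j h, add_zero]⟩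
  zero_mem' := ⟨fun _ _ _ => rfl, fun _ _ _ => rfl⟩
  smul_mem' := by
    rintro c a ⟨ha1, ha2⟩
    exact ⟨fun i j h => by show c * a.1 i j = 0; rw [ha1 i j h, mul_zero],
      fun i j h => by show c * a.2 i j = 0; rw [ha2 i j h, mul_zero]⟩

end

noncomputable section

attribute [local instance] Matrix.normedAddCommGroup Matrix.normedSpace

/-- Entrywise derivative at `0` of a curve of matrices. -/
def HD {ι : Type} (X : ℂ → Matrix ι ι ℂ) (X' : Matrix ι ι ℂ) : Prop :=
  ∀ i j, HasDerivAt (fun z => X z i j) (X' i j) 0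

theorem HD.mul {ι : Type} [Fintype ι] {X Y : ℂ → Matrix ι ι ℂ} {X' Y' : Matrix ι ι ℂ}
    (hX : HD X X') (hY : HD Y Y') : HD (fun z => X z * Y z) (X' * Y 0 + X 0 * Y') := by
  intro i j
  simp only [Matrix.mul_apply, Matrix.add_apply, ← Finset.sum_add_distrib]
  exact HasDerivAt.fun_sum fun k _ => (hX i k).mul (hY k j)

theorem HD.transpose {ι : Type} {X : ℂ → Matrix ι ι ℂ} {X' : Matrix ι ι ℂ}
    (hX : HD X X') : HD (fun z => (X z)ᵀ) X'ᵀ := fun i j => hX j i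

theorem HD.conj {ι : Type} [Fintype ι] [DecidableEq ι] {I F : ℂ → Matrix ι ι ℂ}
    {C F' A : Matrix ι ι ℂ} (hI : HD I C) (hF : HD F F') (hI0 : I 0 = 1) (hF0 : F 0 = A) :
    HD (fun z => (I z)ᵀ * F z * I z) (Cᵀ * A + A * C + F') := by
  have h := (hI.transpose.mul hF).mul hI
  simp only [hI0, hF0, Matrix.transpose_one, Matrix.one_mul, Matrix.mul_one] at h
  convert h using 1
  abel

theorem HD.unique {ι : Type} {X Y : ℂ → Matrix ι ι ℂ} {X' Y' : Matrix ι ι ℂ}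
    (hX : HD X X') (hY : HD Y Y') (h : ∀ᶠ z in nhds (0 : ℂ), X z = Y z) : X' = Y' := by
  ext i j
  refine (hX i j).unique ((hY i j).congr_of_eventuallyEq ?_)
  filter_upwards [h] with z hz
  rw [hz]

theorem HD.line {ι : Type} (A V : Matrix ι ι ℂ) : HD (fun z => A + z • V) V := by
  intro i j
  simpa using ((hasDerivAt_id (0 : ℂ)).mul_const (V i j)).const_add (A i j)

theorem hd_of_hasDerivAt {ι : Type} [Fintype ι] {f : ℂ → Matrix ι ι ℂ × Matrix ι ι ℂ}
    {v : Matrix ι ι ℂ × Matrix ι ι ℂ} (h : HasDerivAt f v 0) :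
    HD (fun z => (f z).1) v.1 ∧ HD (fun z => (f z).2) v.2 := by
  constructor
  · intro i j
    have h1 := (ContinuousLinearMap.fst ℂ (Matrix ι ι ℂ)
      (Matrix ι ι ℂ)).hasFDerivAt.comp_hasDerivAt 0 h
    exact hasDerivAt_pi.1 (hasDerivAt_pi.1 h1 i) j
  · intro i j
    have h1 := (ContinuousLinearMap.snd ℂ (Matrix ι ι ℂ)
      (Matrix ι ι ℂ)).hasFDerivAt.comp_hasDerivAt 0 h
    exact hasDerivAt_pi.1 (hasDerivAt_pi.1 h1 i) j

theorem analyticAt_pair {ι : Type} [Fintype ι] {P : Type*} [NormedAddCommGroup P]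
    [NormedSpace ℂ P] {f : P → Matrix ι ι ℂ × Matrix ι ι ℂ} {x : P}
    (h1 : ∀ i j, AnalyticAt ℂ (fun p => (f p).1 i j) x)
    (h2 : ∀ i j, AnalyticAt ℂ (fun p => (f p).2 i j) x) : AnalyticAt ℂ f x := by
  have e1 : AnalyticAt ℂ (fun p => (f p).1) x :=
    AnalyticAt.pi fun i => AnalyticAt.pi fun j => h1 i j
  have e2 : AnalyticAt ℂ (fun p => (f p).2) x :=
    AnalyticAt.pi fun i => AnalyticAt.pi fun j => h2 i j
  exact e1.prod e2

theorem hasDerivAt_ray {P Q : Type*} [NormedAddCommGroup P] [NormedSpace ℂ P]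
    [NormedAddCommGroup Q] [NormedSpace ℂ Q] {f : P → Q} {L : P →L[ℂ] Q}
    (h : HasFDerivAt f L 0) (v : P) : HasDerivAt (fun z : ℂ => f (z • v)) (L v) 0 := by
  have h1 : HasDerivAt (fun z : ℂ => z • v) v 0 := by
    simpa using (hasDerivAt_id (0 : ℂ)).smul_const v
  exact HasFDerivAt.comp_hasDerivAt (0 : ℂ) (by simpa using h) h1

theorem versal_deriv {ι : Type} [Fintype ι] [DecidableEq ι] {P : Type*} [NormedAddCommGroup P]
    [NormedSpace ℂ P] {A B : Matrix ι ι ℂ} (hA : A.IsSymm) (hB : B.IsSymm)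
    (𝒜 : Deformation ι P A B) (h : IsVersal 𝒜)
    (L : P →L[ℂ] Matrix ι ι ℂ × Matrix ι ι ℂ) (hL : HasFDerivAt 𝒜.map L 0) :
    ∀ v ∈ SymPair ι, ∃ C p, v = congMap A B C + L p := by
  intro v hv
  obtain ⟨φ, hφ, hφ0, I, hI, hI0, hE⟩ := h (SymPair ι) inferInstance inferInstance inferInstance
    (patternDeformation A B hA hB (SymPair ι) le_rfl)
  have hφd := hφ.differentiableAt.hasFDerivAt
  set φ' := fderiv ℂ φ 0
  set w : SymPair ι := ⟨v, hv⟩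
  have h𝒜 : HasFDerivAt (fun q => 𝒜.map (φ q)) (L.comp φ') 0 :=
    HasFDerivAt.comp (0 : SymPair ι) (by rw [hφ0]; exact hL) hφd
  obtain ⟨hd1, hd2⟩ := hd_of_hasDerivAt (hasDerivAt_ray h𝒜 w)
  have hIC : HD (fun z => I (z • w)) (Matrix.of fun i j => fderiv ℂ (fun q => I q i j) 0 w) :=
    fun i j => hasDerivAt_ray (hI i j).differentiableAt.hasFDerivAt w
  set C : Matrix ι ι ℂ := Matrix.of fun i j => fderiv ℂ (fun q => I q i j) 0 w
  have ht : Tendsto (fun z : ℂ => z • w) (nhds 0) (nhds 0) := by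
    have : Continuous fun z : ℂ => z • w := by fun_prop
    simpa using this.tendsto 0
  have hE' := ht.eventually hE
  have hi := 𝒜.init
  refine ⟨C, φ' w, Prod.ext ?_ ?_⟩
  · refine (HD.line A v.1).unique
      (HD.conj hIC hd1 (by simpa using hI0) (by simp [hφ0, hi])) ?_
    filter_upwards [hE'] with z hz
    exact congrArg Prod.fst hz
  · refine (HD.line B v.2).unique
      (HD.conj hIC hd2 (by simpa using hI0) (by simp [hφ0, hi])) ?_
    filter_upwards [hE'] with z hz
    exact congrArg Prod.snd hz

theorem TSpace_le {ι : Type} [Fintype ι] {A B : Matrix ι ι ℂ} (hA : A.IsSymm) (hB : B.IsSymm) :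
    TSpace A B ≤ SymPair ι := by
  rintro _ ⟨C, rfl⟩
  constructor
  · simp [congMap, Matrix.IsSymm, Matrix.transpose_mul, hA.eq, add_comm]
  · simp [congMap, Matrix.IsSymm, Matrix.transpose_mul, hB.eq, add_comm]

/-- the pattern deformation has the inclusion as derivative -/
theorem pattern_hasFDerivAt {ι : Type} [Fintype ι] (A B : Matrix ι ι ℂ)
    (hA : A.IsSymm) (hB : B.IsSymm) (D : Submodule ℂ (Matrix ι ι ℂ × Matrix ι ι ℂ))
    (hD : D ≤ SymPair ι) :
    HasFDerivAt (patternDeformation A B hA hB D hD).map D.subtypeL 0 :=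
  D.subtypeL.hasFDerivAt.const_add (A, B)

theorem mul_entries_analytic {ι : Type} [Fintype ι] {P : Type*} [NormedAddCommGroup P]
    [NormedSpace ℂ P] {X Y : P → Matrix ι ι ℂ} {x : P}
    (hX : ∀ i j, AnalyticAt ℂ (fun p => X p i j) x)
    (hY : ∀ i j, AnalyticAt ℂ (fun p => Y p i j) x) (i j : ι) :
    AnalyticAt ℂ (fun p => (X p * Y p) i j) x := by
  simp only [Matrix.mul_apply]
  exact Finset.analyticAt_fun_sum _ fun k _ => (hX i k).mul (hY k j)

theorem analytic_entry_lin {ι : Type} [Fintype ι] {P : Type*} [NormedAddCommGroup P]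
    [NormedSpace ℂ P] [FiniteDimensional ℂ P] (L : P →ₗ[ℂ] Matrix ι ι ℂ) (x : P) (i j : ι) :
    AnalyticAt ℂ (fun p => L p i j) x := by
  let L' : P →ₗ[ℂ] ℂ := (Matrix.entryLinearMap ℂ ℂ i j).comp L
  exact (LinearMap.toContinuousLinearMap L').analyticAt x

theorem entry_analytic {ι : Type} [Fintype ι] {P : Type*} [NormedAddCommGroup P]
    [NormedSpace ℂ P] {X : P → Matrix ι ι ℂ} {x : P}
    (hX : AnalyticAt ℂ X x) (i j : ι) : AnalyticAt ℂ (fun p => X p i j) x :=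
  (LinearMap.toContinuousLinearMap (Matrix.entryLinearMap ℂ ℂ i j :
    Matrix ι ι ℂ →ₗ[ℂ] ℂ)).analyticAt (X x) |>.comp hX

theorem exists_analytic_inverse {V : Type*} [NormedAddCommGroup V] [NormedSpace ℂ V]
    [FiniteDimensional ℂ V] {G : V → V} (hG : AnalyticAt ℂ G 0) (hG0 : G 0 = 0)
    (hd : HasFDerivAt G (ContinuousLinearMap.id ℂ V) 0) :
    ∃ g : V → V, AnalyticAt ℂ g 0 ∧ g 0 = 0 ∧ ∀ᶠ v in nhds (0 : V), G (g v) = v := by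
  have : CompleteSpace V := FiniteDimensional.complete ℂ V
  have hs : HasStrictFDerivAt G ((ContinuousLinearEquiv.refl ℂ V : V ≃L[ℂ] V) : V →L[ℂ] V) 0 := by
    have := hG.hasStrictFDerivAt
    rw [hd.fderiv] at this
    exact this
  refine ⟨hs.localInverse, ?_, ?_, ?_⟩
  · let R := hs.toOpenPartialHomeomorph G
    have h0 : (0 : V) ∈ R.source := hs.mem_toOpenPartialHomeomorph_source
    have := R.analyticAt_symm' h0 (i := ContinuousLinearEquiv.refl ℂ V) hG hs.hasFDerivAt.fderiv
    have e : R 0 = 0 := hG0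
    rw [e] at this
    exact this
  · have := hs.localInverse_apply_image
    rwa [hG0] at this
  · have := hs.eventually_right_inverse
    rwa [hG0] at this

theorem hasFDerivAt_of_ray {P Q : Type*} [NormedAddCommGroup P] [NormedSpace ℂ P]
    [NormedAddCommGroup Q] [NormedSpace ℂ Q] {f : P → Q} (hf : AnalyticAt ℂ f 0) (L : P →L[ℂ] Q)
    (h : ∀ v w, HasDerivAt (fun z : ℂ => f (z • v)) w 0 → w = L v) : HasFDerivAt f L 0 := by
  have hd := hf.differentiableAt.hasFDerivAt
  have e : fderiv ℂ f 0 = L := by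
    ext1 v
    exact h v _ (hasDerivAt_ray hd v)
  rwa [e] at hd

theorem hasFDerivAt_retract {P Q : Type*} [NormedAddCommGroup P] [NormedSpace ℂ P]
    [NormedAddCommGroup Q] [NormedSpace ℂ Q] {f : P → Q} {L : P →L[ℂ] Q}
    (hf : HasFDerivAt f L 0) (p : Q →L[ℂ] P) (h : ∀ v, p (L v) = v) :
    HasFDerivAt (fun v => p (f v)) (ContinuousLinearMap.id ℂ P) 0 := by
  have h1 := p.hasFDerivAt.comp (0 : P) hf
  have e : p.comp L = ContinuousLinearMap.id ℂ P := by
    ext1 v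
    exact h v
  rwa [e] at h1

theorem tendsto_zero_of_analytic {P Q : Type*} [NormedAddCommGroup P] [NormedSpace ℂ P]
    [NormedAddCommGroup Q] [NormedSpace ℂ Q] {f : P → Q} (hf : AnalyticAt ℂ f 0)
    (h0 : f 0 = 0) : Tendsto f (nhds 0) (nhds 0) := by
  simpa [h0] using hf.continuousAt.tendsto

theorem versal_of_span {ι : Type} [Fintype ι] [DecidableEq ι] {A B : Matrix ι ι ℂ}
    (hA : A.IsSymm) (hB : B.IsSymm) (D : Submodule ℂ (Matrix ι ι ℂ × Matrix ι ι ℂ))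
    (hD : D ≤ SymPair ι) (hspan : SymPair ι ≤ TSpace A B ⊔ D) :
    IsVersal (patternDeformation A B hA hB D hD) := by
  intro Q _ _ _ ℬ
  -- right inverse
  let Λ : (Matrix ι ι ℂ × D) →ₗ[ℂ] SymPair ι :=
    LinearMap.codRestrict (SymPair ι) ((congMap A B).coprod D.subtype) (by
      rintro ⟨C, d⟩
      exact (SymPair ι).add_mem (TSpace_le hA hB ⟨C, rfl⟩) (hD d.2))
  have hΛ : LinearMap.range Λ = ⊤ := by
    rw [LinearMap.range_eq_top]
    rintro ⟨v, hv⟩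
    obtain ⟨_, ⟨C, rfl⟩, d, hd, h⟩ := Submodule.mem_sup.1 (hspan hv)
    exact ⟨(C, ⟨d, hd⟩), Subtype.ext h⟩
  obtain ⟨s, hs⟩ := Λ.exists_rightInverse_of_surjective hΛ
  obtain ⟨π, hπ⟩ := (SymPair ι).subtype.exists_leftInverse_of_injective
    (Submodule.ker_subtype _)
  have hπ' : ∀ x (hx : x ∈ SymPair ι), π x = ⟨x, hx⟩ := fun x hx =>
    LinearMap.congr_fun hπ ⟨x, hx⟩
  let s1 : SymPair ι →ₗ[ℂ] Matrix ι ι ℂ := (LinearMap.fst ℂ _ _).comp s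
  let s2 : SymPair ι →ₗ[ℂ] D := (LinearMap.snd ℂ _ _).comp s
  have hs' : ∀ v, congMap A B (s1 v) + (s2 v : Matrix ι ι ℂ × Matrix ι ι ℂ) = v := fun v =>
    congrArg Subtype.val (LinearMap.congr_fun hs v)
  let X1 : SymPair ι →ₗ[ℂ] Matrix ι ι ℂ := (LinearMap.fst ℂ _ _).comp (D.subtype.comp s2)
  let X2 : SymPair ι →ₗ[ℂ] Matrix ι ι ℂ := (LinearMap.snd ℂ _ _).comp (D.subtype.comp s2)
  let F : SymPair ι → Matrix ι ι ℂ × Matrix ι ι ℂ := fun v =>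
    ((1 + s1 v)ᵀ * (A + X1 v) * (1 + s1 v) - A, (1 + s1 v)ᵀ * (B + X2 v) * (1 + s1 v) - B)
  have hs1 : ∀ i j, AnalyticAt ℂ (fun v => (1 + s1 v) i j) 0 := fun i j =>
    analyticAt_const.add (analytic_entry_lin s1 0 i j)
  have hFa : AnalyticAt ℂ F 0 := by
    refine analyticAt_pair (fun i j => ?_) (fun i j => ?_)
    · refine AnalyticAt.sub (mul_entries_analytic (mul_entries_analytic
        (fun i j => hs1 j i) (fun i j => ?_)) hs1 i j) analyticAt_const
      exact analyticAt_const.add (analytic_entry_lin X1 0 i j)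
    · refine AnalyticAt.sub (mul_entries_analytic (mul_entries_analytic
        (fun i j => hs1 j i) (fun i j => ?_)) hs1 i j) analyticAt_const
      exact analyticAt_const.add (analytic_entry_lin X2 0 i j)
  have hFs : ∀ v, F v ∈ SymPair ι := by
    intro v
    have hd := hD (s2 v).2
    have key : ∀ (M N C : Matrix ι ι ℂ), M.IsSymm → N.IsSymm → (Cᵀ * (M + N) * C - M).IsSymm := by
      intro M N C hM hN
      refine Matrix.IsSymm.sub ?_ hM
      simp [Matrix.IsSymm, Matrix.transpose_mul, hM.eq, hN.eq, Matrix.mul_assoc]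
    exact ⟨key _ _ _ hA hd.1, key _ _ _ hB hd.2⟩
  have hF0 : F 0 = 0 := by simp [F]
  have hFd : HasFDerivAt F (SymPair ι).subtypeL 0 := by
    refine hasFDerivAt_of_ray hFa _ fun v w h => ?_
    obtain ⟨h1, h2⟩ := hd_of_hasDerivAt h
    have hC : HD (fun z => 1 + s1 (z • v)) (s1 v) := by
      simp only [map_smul]; exact HD.line _ _
    have hX1 : HD (fun z => A + X1 (z • v)) (X1 v) := by
      simp only [map_smul]; exact HD.line _ _
    have hX2 : HD (fun z => B + X2 (z • v)) (X2 v) := by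
      simp only [map_smul]; exact HD.line _ _
    have c1 := HD.conj hC hX1 (A := A) (by simp) (by simp)
    have c2 := HD.conj hC hX2 (A := B) (by simp) (by simp)
    refine Eq.trans ?_ (hs' v)
    refine Prod.ext ?_ ?_
    · exact h1.unique (fun i j => (c1 i j).sub_const (A i j)) (Eventually.of_forall fun z => rfl)
    · exact h2.unique (fun i j => (c2 i j).sub_const (B i j)) (Eventually.of_forall fun z => rfl)
  let πL := LinearMap.toContinuousLinearMap π
  have hGa : AnalyticAt ℂ (fun v => πL (F v)) 0 := (πL.analyticAt (F 0)).comp hFa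
  have hGd : HasFDerivAt (fun v => πL (F v)) (ContinuousLinearMap.id ℂ (SymPair ι)) 0 :=
    hasFDerivAt_retract hFd πL fun v => LinearMap.congr_fun hπ v
  obtain ⟨g, hga, hg0, hg⟩ := exists_analytic_inverse hGa (by simp [hF0]) hGd
  let h : Q → SymPair ι := fun q => πL (ℬ.map q - (A, B))
  have hha : AnalyticAt ℂ h 0 :=
    (πL.analyticAt _).comp ((analyticAt_pair ℬ.analytic₁ ℬ.analytic₂).sub analyticAt_const)
  have hh0 : h 0 = 0 := by simp [h, ℬ.init]
  have hgh : AnalyticAt ℂ (fun q => g (h q)) 0 := AnalyticAt.comp (by rwa [hh0]) hha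
  have hgh0 : g (h 0) = 0 := by rw [hh0, hg0]
  refine ⟨fun q => s2 (g (h q)), ?_, ?_, fun q => 1 + s1 (g (h q)), ?_, ?_, ?_⟩
  · exact ((LinearMap.toContinuousLinearMap s2).analyticAt _).comp hgh
  · simp [hgh0]
  · intro i j
    exact analyticAt_const.add
      (entry_analytic (((LinearMap.toContinuousLinearMap s1).analyticAt _).comp hgh) i j)
  · simp [hgh0]
  · have ht : Tendsto h (nhds 0) (nhds 0) := tendsto_zero_of_analytic hha hh0
    filter_upwards [ht.eventually hg, ℬ.symm] with q hq hqs
    have hmem : ℬ.map q - (A, B) ∈ SymPair ι := ⟨hqs.1.sub hA, hqs.2.sub hB⟩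
    have e1 : h q = ⟨_, hmem⟩ := hπ' _ hmem
    have e2 : πL (F (g (h q))) = ⟨_, hFs (g (h q))⟩ := hπ' _ (hFs _)
    have e3 : F (g (h q)) = ℬ.map q - (A, B) := by
      rw [e2] at hq
      exact (congrArg Subtype.val hq).trans (congrArg Subtype.val e1)
    have e4 : ℬ.map q = F (g (h q)) + (A, B) := by rw [e3]; abel
    rw [e4]
    refine Prod.ext ?_ ?_
    · exact sub_add_cancel _ _
    · exact sub_add_cancel _ _

theorem miniversal_iff {ι : Type} [Fintype ι] [DecidableEq ι] {A B : Matrix ι ι ℂ}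
    (hA : A.IsSymm) (hB : B.IsSymm) (D : Submodule ℂ (Matrix ι ι ℂ × Matrix ι ι ℂ))
    (hD : D ≤ SymPair ι) :
    IsMiniversal (patternDeformation A B hA hB D hD) ↔
      (SymPair ι ≤ TSpace A B ⊔ D ∧ TSpace A B ⊓ D = ⊥) := by
  have hT := TSpace_le hA hB
  have gen : ∀ {P : Type} [NormedAddCommGroup P] [NormedSpace ℂ P]
      [FiniteDimensional ℂ P] (𝒜 : Deformation ι P A B), IsVersal 𝒜 →
      Module.finrank ℂ (SymPair ι) ≤ Module.finrank ℂ (TSpace A B) + Module.finrank ℂ P := by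
    intro P _ _ _ 𝒜 h
    have ha := (analyticAt_pair 𝒜.analytic₁ 𝒜.analytic₂).differentiableAt.hasFDerivAt
    have hv := versal_deriv hA hB 𝒜 h _ ha
    set L := fderiv ℂ 𝒜.map 0
    have : SymPair ι ≤ TSpace A B ⊔ LinearMap.range (L : P →ₗ[ℂ] _) := by
      intro v hvs
      obtain ⟨C, p, rfl⟩ := hv v hvs
      exact Submodule.add_mem_sup ⟨C, rfl⟩ ⟨p, rfl⟩
    calc _ ≤ _ := Submodule.finrank_mono this
      _ ≤ _ := Submodule.finrank_add_le_finrank_add_finrank _ _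
      _ ≤ _ := by gcongr; exact LinearMap.finrank_range_le _
  constructor
  · rintro ⟨hv, hmin⟩
    have hs : SymPair ι ≤ TSpace A B ⊔ D := by
      intro v hvs
      obtain ⟨C, p, rfl⟩ := versal_deriv hA hB _ hv _ (pattern_hasFDerivAt A B hA hB D hD) v hvs
      exact Submodule.add_mem_sup ⟨C, rfl⟩ p.2
    refine ⟨hs, ?_⟩
    obtain ⟨K, hK⟩ := Submodule.exists_isCompl (TSpace A B)
    have hsup : TSpace A B ⊔ K ⊓ SymPair ι = SymPair ι := by
      rw [sup_inf_assoc_of_le _ hT |>.symm, hK.sup_eq_top, top_inf_eq]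
    have hinf : TSpace A B ⊓ (K ⊓ SymPair ι) = ⊥ := by
      rw [← inf_assoc, hK.inf_eq_bot, bot_inf_eq]
    have hle := hmin _ _ _ inferInstance _
      (versal_of_span hA hB (K ⊓ SymPair ι) inf_le_right hsup.ge)
    have d1 := Submodule.finrank_sup_add_finrank_inf_eq (TSpace A B) (K ⊓ SymPair ι)
    have d2 := Submodule.finrank_sup_add_finrank_inf_eq (TSpace A B) D
    rw [hsup, hinf, finrank_bot] at d1
    rw [le_antisymm (sup_le hT hD) hs] at d2
    rw [← Submodule.finrank_eq_zero (R := ℂ)]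
    omega
  · rintro ⟨hs, hi⟩
    refine ⟨versal_of_span hA hB D hD hs, ?_⟩
    intro Q _ _ _ ℬ hℬ
    have := gen ℬ hℬ
    have d2 := Submodule.finrank_sup_add_finrank_inf_eq (TSpace A B) D
    rw [le_antisymm (sup_le hT hD) hs, hi, finrank_bot] at d2
    omega

end

noncomputable section

attribute [local instance] Matrix.normedAddCommGroup Matrix.normedSpace

theorem existsUnique_iff {V : Type*} [AddCommGroup V] [Module ℂ V] (S T D : Submodule ℂ V) :
    (∀ v ∈ S, ∃! d, d ∈ D ∧ v - d ∈ T) ↔ (S ≤ T ⊔ D ∧ ∀ d ∈ T, d ∈ D → d = 0) := by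
  constructor
  · intro h
    refine ⟨fun v hv => ?_, fun d hT hD => ?_⟩
    · obtain ⟨d, ⟨hd, hvd⟩, -⟩ := h v hv
      have := Submodule.add_mem_sup hvd hd
      rwa [sub_add_cancel] at this
    · exact (h 0 S.zero_mem).unique ⟨hD, by simpa using hT⟩ ⟨D.zero_mem, by simp⟩
  · rintro ⟨h1, h2⟩ v hv
    obtain ⟨x, hx, d, hd, rfl⟩ := Submodule.mem_sup.1 (h1 hv)
    refine ⟨d, ⟨hd, by simpa using hx⟩, ?_⟩
    rintro e ⟨he, hxe⟩
    have : e - d ∈ T := by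
      have := T.sub_mem hx hxe
      convert this using 1
      abel
    exact sub_eq_zero.1 (h2 _ this (D.sub_mem he hd))

variable {t : ℕ} {ns : Fin t → ℕ}

/-- The `(i,j)` block. -/
def blk (X : Matrix (Σ i, Fin (ns i)) (Σ i, Fin (ns i)) ℂ) (i j : Fin t) :
    Matrix (Fin (ns i)) (Fin (ns j)) ℂ := Matrix.of fun p q => X ⟨i, p⟩ ⟨j, q⟩

theorem blk_ext {X Y : Matrix (Σ i, Fin (ns i)) (Σ i, Fin (ns i)) ℂ}
    (h : ∀ i j, blk X i j = blk Y i j) : X = Y := by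
  ext ⟨i, p⟩ ⟨j, q⟩
  exact congrFun (congrFun (h i j) p) q

theorem blk_add (X Y : Matrix (Σ i, Fin (ns i)) (Σ i, Fin (ns i)) ℂ) (i j : Fin t) :
    blk (X + Y) i j = blk X i j + blk Y i j := rfl

theorem blk_transpose (X : Matrix (Σ i, Fin (ns i)) (Σ i, Fin (ns i)) ℂ) (i j : Fin t) :
    blk Xᵀ i j = (blk X j i)ᵀ := rfl

theorem blk_mul_diag (X : Matrix (Σ i, Fin (ns i)) (Σ i, Fin (ns i)) ℂ)
    (A : ∀ i, Matrix (Fin (ns i)) (Fin (ns i)) ℂ) (i j : Fin t) :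
    blk (X * blockDiagonal' A) i j = blk X i j * A j := by
  ext p q
  simp only [blk, Matrix.of_apply, Matrix.mul_apply, Fintype.sum_sigma]
  rw [Finset.sum_eq_single j]
  · simp [blockDiagonal'_apply_eq]
  · intro b _ hb
    simp [blockDiagonal'_apply_ne _ _ _ hb]
  · simp

theorem blk_diag_mul (X : Matrix (Σ i, Fin (ns i)) (Σ i, Fin (ns i)) ℂ)
    (A : ∀ i, Matrix (Fin (ns i)) (Fin (ns i)) ℂ) (i j : Fin t) :
    blk (blockDiagonal' A * X) i j = A i * blk X i j := by
  ext p q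
  simp only [blk, Matrix.of_apply, Matrix.mul_apply, Fintype.sum_sigma]
  rw [Finset.sum_eq_single i]
  · simp [blockDiagonal'_apply_eq]
  · intro b _ hb
    simp [blockDiagonal'_apply_ne _ _ _ hb.symm]
  · simp

/-- The matrix with a single nonzero block. -/
def emb (i j : Fin t) (X : Matrix (Fin (ns i)) (Fin (ns j)) ℂ) :
    Matrix (Σ i, Fin (ns i)) (Σ i, Fin (ns i)) ℂ :=
  Matrix.of fun x y => if h : x.1 = i ∧ y.1 = j then X (h.1 ▸ x.2) (h.2 ▸ y.2) else 0

theorem blk_emb_self (i j : Fin t) (X : Matrix (Fin (ns i)) (Fin (ns j)) ℂ) :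
    blk (emb i j X) i j = X := by
  ext p q
  simp [blk, emb]

theorem blk_emb_ne (i j a b : Fin t) (X : Matrix (Fin (ns i)) (Fin (ns j)) ℂ)
    (h : ¬ (a = i ∧ b = j)) : blk (emb i j X) a b = 0 := by
  ext p q
  simp [blk, emb, h]

theorem emb_transpose (i j : Fin t) (X : Matrix (Fin (ns i)) (Fin (ns j)) ℂ) :
    (emb i j X)ᵀ = emb j i Xᵀ := by
  refine blk_ext fun a b => ?_
  rw [blk_transpose]
  by_cases h : b = i ∧ a = j
  · obtain ⟨rfl, rfl⟩ := h
    rw [blk_emb_self, blk_emb_self]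
  · rw [blk_emb_ne _ _ _ _ _ h, blk_emb_ne _ _ _ _ _ (fun h' => h h'.symm)]; rfl

theorem emb_mul_diag (i j : Fin t) (X : Matrix (Fin (ns i)) (Fin (ns j)) ℂ)
    (A : ∀ i, Matrix (Fin (ns i)) (Fin (ns i)) ℂ) :
    emb i j X * blockDiagonal' A = emb i j (X * A j) := by
  refine blk_ext fun a b => ?_
  rw [blk_mul_diag]
  by_cases h : a = i ∧ b = j
  · obtain ⟨rfl, rfl⟩ := h
    rw [blk_emb_self, blk_emb_self]
  · rw [blk_emb_ne _ _ _ _ _ h, blk_emb_ne _ _ _ _ _ h, Matrix.zero_mul]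

theorem diag_mul_emb (i j : Fin t) (X : Matrix (Fin (ns i)) (Fin (ns j)) ℂ)
    (A : ∀ i, Matrix (Fin (ns i)) (Fin (ns i)) ℂ) :
    blockDiagonal' A * emb i j X = emb i j (A i * X) := by
  refine blk_ext fun a b => ?_
  rw [blk_diag_mul]
  by_cases h : a = i ∧ b = j
  · obtain ⟨rfl, rfl⟩ := h
    rw [blk_emb_self, blk_emb_self]
  · rw [blk_emb_ne _ _ _ _ _ h, blk_emb_ne _ _ _ _ _ h, Matrix.mul_zero]

theorem emb_add (i j : Fin t) (X Y : Matrix (Fin (ns i)) (Fin (ns j)) ℂ) :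
    emb i j (X + Y) = emb i j X + emb i j Y := by
  refine blk_ext fun a b => ?_
  rw [blk_add]
  by_cases h : a = i ∧ b = j
  · obtain ⟨rfl, rfl⟩ := h
    simp only [blk_emb_self]
  · simp only [blk_emb_ne _ _ _ _ _ h, add_zero]

theorem emb_support (i j : Fin t) (X : Matrix (Fin (ns i)) (Fin (ns j)) ℂ)
    (I : Set ((Σ i, Fin (ns i)) × (Σ i, Fin (ns i))))
    (h : ∀ p q, ((⟨i, p⟩ : Σ i, Fin (ns i)), (⟨j, q⟩ : Σ i, Fin (ns i))) ∉ I → X p q = 0) :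
    ∀ x y, (x, y) ∉ I → emb i j X x y = 0 := by
  rintro ⟨a, p⟩ ⟨b, q⟩ hxy
  by_cases h' : a = i ∧ b = j
  · obtain ⟨rfl, rfl⟩ := h'
    have := congrFun (congrFun (blk_emb_self a b X) p) q
    exact this.trans (h p q hxy)
  · exact congrFun (congrFun (blk_emb_ne i j a b X h') p) q

/-- the off-diagonal embedding has symmetric values, and is compatible with the tangent map -/
theorem emb_tangent (i j : Fin t) (A : ∀ i, Matrix (Fin (ns i)) (Fin (ns i)) ℂ)
    (hA : ∀ i, (A i).IsSymm) (S : Matrix (Fin (ns i)) (Fin (ns j)) ℂ)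
    (R : Matrix (Fin (ns j)) (Fin (ns i)) ℂ) :
    (emb i j S + emb j i R)ᵀ * blockDiagonal' A + blockDiagonal' A * (emb i j S + emb j i R)
      = emb i j (Rᵀ * A j + A i * S) + (emb i j (Rᵀ * A j + A i * S))ᵀ := by
  simp only [Matrix.transpose_add, emb_transpose, Matrix.add_mul, Matrix.mul_add, emb_mul_diag,
    diag_mul_emb, emb_add, Matrix.transpose_mul, Matrix.transpose_transpose, (hA _).eq]
  abel

theorem glob_iff_blocks (A B : ∀ i, Matrix (Fin (ns i)) (Fin (ns i)) ℂ)
    (hA : ∀ i, (A i).IsSymm) (hB : ∀ i, (B i).IsSymm)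
    (I1 I2 : Set ((Σ i, Fin (ns i)) × (Σ i, Fin (ns i))))
    (hI1 : ∀ x y : (Σ i, Fin (ns i)), (x, y) ∈ I1 ↔ (y, x) ∈ I1)
    (hI2 : ∀ x y : (Σ i, Fin (ns i)), (x, y) ∈ I2 ↔ (y, x) ∈ I2) :
    (SymPair (Σ i, Fin (ns i)) ≤ TSpace (blockDiagonal' A) (blockDiagonal' B) ⊔ Pattern I1 I2 ∧
      ∀ d ∈ TSpace (blockDiagonal' A) (blockDiagonal' B), d ∈ Pattern I1 I2 → d = 0) ↔
    ((∀ i, SymPair (Fin (ns i)) ≤ TSpace (A i) (B i) ⊔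
        Pattern {pq : Fin (ns i) × Fin (ns i) | (⟨i, pq.1⟩, ⟨i, pq.2⟩) ∈ I1}
                {pq : Fin (ns i) × Fin (ns i) | (⟨i, pq.1⟩, ⟨i, pq.2⟩) ∈ I2} ∧
      ∀ d ∈ TSpace (A i) (B i),
        d ∈ Pattern {pq : Fin (ns i) × Fin (ns i) | (⟨i, pq.1⟩, ⟨i, pq.2⟩) ∈ I1}
                {pq : Fin (ns i) × Fin (ns i) | (⟨i, pq.1⟩, ⟨i, pq.2⟩) ∈ I2} → d = 0) ∧
     (∀ i j : Fin t, i < j → ⊤ ≤ WSpace (A i) (B i) (A j) (B j) ⊔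
        entryPattern {pq : Fin (ns i) × Fin (ns j) | (⟨i, pq.1⟩, ⟨j, pq.2⟩) ∈ I1}
                {pq : Fin (ns i) × Fin (ns j) | (⟨i, pq.1⟩, ⟨j, pq.2⟩) ∈ I2} ∧
      ∀ d ∈ WSpace (A i) (B i) (A j) (B j),
        d ∈ entryPattern {pq : Fin (ns i) × Fin (ns j) | (⟨i, pq.1⟩, ⟨j, pq.2⟩) ∈ I1}
                {pq : Fin (ns i) × Fin (ns j) | (⟨i, pq.1⟩, ⟨j, pq.2⟩) ∈ I2} → d = 0)) := by
  constructor
  · rintro ⟨hex, hun⟩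
    refine ⟨fun i => ⟨?_, ?_⟩, fun i j hij => ⟨?_, ?_⟩⟩
    · rintro ⟨v1, v2⟩ ⟨hv1, hv2⟩
      have hm : (emb i i v1, emb i i v2) ∈ SymPair (Σ i, Fin (ns i)) :=
        ⟨by rw [Matrix.IsSymm, emb_transpose, hv1.eq], by rw [Matrix.IsSymm, emb_transpose, hv2.eq]⟩
      obtain ⟨_, ⟨C, rfl⟩, d, hd, h⟩ := Submodule.mem_sup.1 (hex hm)
      refine Submodule.mem_sup.2 ⟨_, ⟨blk C i i, rfl⟩, (blk d.1 i i, blk d.2 i i), ?_, ?_⟩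
      · refine ⟨?_, ?_, fun p q h => hd.2.2.1 _ _ h, fun p q h => hd.2.2.2 _ _ h⟩
        · rw [Matrix.IsSymm, ← blk_transpose, hd.1.eq]
        · rw [Matrix.IsSymm, ← blk_transpose, hd.2.1.eq]
      · refine Prod.ext ?_ ?_
        · have := congrArg (fun x => blk x.1 i i) h
          simpa [congMap, blk_add, blk_mul_diag, blk_diag_mul, blk_transpose, blk_emb_self]
            using this
        · have := congrArg (fun x => blk x.2 i i) h
          simpa [congMap, blk_add, blk_mul_diag, blk_diag_mul, blk_transpose, blk_emb_self]
            using this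
    · rintro _ ⟨C, rfl⟩ hd
      obtain ⟨h1, h2, h3, h4⟩ := hd
      have hT : congMap (blockDiagonal' A) (blockDiagonal' B) (emb i i C) =
          (emb i i (congMap (A i) (B i) C).1, emb i i (congMap (A i) (B i) C).2) := by
        simp [congMap, emb_transpose, emb_mul_diag, diag_mul_emb, emb_add]
      have := hun _ ⟨emb i i C, hT⟩
        ⟨by rw [Matrix.IsSymm, emb_transpose, h1.eq], by rw [Matrix.IsSymm, emb_transpose, h2.eq],
          emb_support _ _ _ _ h3, emb_support _ _ _ _ h4⟩
      refine Prod.ext ?_ ?_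
      · have := congrArg (fun x => blk x.1 i i) this
        simp only [blk_emb_self] at this
        exact this
      · have := congrArg (fun x => blk x.2 i i) this
        simp only [blk_emb_self] at this
        exact this
    · rintro ⟨v1, v2⟩ -
      have hm : (emb i j v1 + (emb i j v1)ᵀ, emb i j v2 + (emb i j v2)ᵀ) ∈
          SymPair (Σ i, Fin (ns i)) :=
        ⟨Matrix.isSymm_add_transpose_self _, Matrix.isSymm_add_transpose_self _⟩
      obtain ⟨_, ⟨C, rfl⟩, d, hd, h⟩ := Submodule.mem_sup.1 (hex hm)
      have hne : ¬ (j = i ∧ i = j) := fun h => hij.ne h.2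
      refine Submodule.mem_sup.2 ⟨_, ⟨(blk C i j, blk C j i), rfl⟩, (blk d.1 i j, blk d.2 i j),
        ⟨fun p q h => hd.2.2.1 _ _ h, fun p q h => hd.2.2.2 _ _ h⟩, ?_⟩
      refine Prod.ext ?_ ?_
      · have := congrArg (fun x => blk x.1 i j) h
        simpa [congMap, offMap, blk_add, blk_mul_diag, blk_diag_mul, blk_transpose, blk_emb_self,
          blk_emb_ne _ _ _ _ _ hne] using this
      · have := congrArg (fun x => blk x.2 i j) h
        simpa [congMap, offMap, blk_add, blk_mul_diag, blk_diag_mul, blk_transpose, blk_emb_self,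
          blk_emb_ne _ _ _ _ _ hne] using this
    · rintro _ ⟨⟨S, R⟩, rfl⟩ ⟨h3, h4⟩
      have hne : ¬ (j = i ∧ i = j) := fun h => hij.ne h.2
      have := hun (emb i j (Rᵀ * A j + A i * S) + (emb i j (Rᵀ * A j + A i * S))ᵀ,
        emb i j (Rᵀ * B j + B i * S) + (emb i j (Rᵀ * B j + B i * S))ᵀ) ⟨emb i j S + emb j i R, Prod.ext (emb_tangent i j A hA S R)
        (emb_tangent i j B hB S R)⟩
        ⟨Matrix.isSymm_add_transpose_self _, Matrix.isSymm_add_transpose_self _, ?_, ?_⟩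
      · refine Prod.ext ?_ ?_
        · have := congrArg (fun x => blk x.1 i j) this
          simp only [blk_add, blk_transpose, blk_emb_self, blk_emb_ne _ _ _ _ _ hne,
            Matrix.transpose_zero, add_zero] at this
          exact this
        · have := congrArg (fun x => blk x.2 i j) this
          simp only [blk_add, blk_transpose, blk_emb_self, blk_emb_ne _ _ _ _ _ hne,
            Matrix.transpose_zero, add_zero] at this
          exact this
      · intro x y hxy
        have e1 := emb_support i j _ I1 h3 x y hxy
        have e2 := emb_support i j _ I1 h3 y x (fun h => hxy ((hI1 _ _).2 h))
        exact (congrArg₂ (· + ·) e1 e2).trans (add_zero 0)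
      · intro x y hxy
        have e1 := emb_support i j _ I2 h4 x y hxy
        have e2 := emb_support i j _ I2 h4 y x (fun h => hxy ((hI2 _ _).2 h))
        exact (congrArg₂ (· + ·) e1 e2).trans (add_zero 0)
  · rintro ⟨hdiag, hoff⟩
    refine ⟨?_, ?_⟩
    · rintro ⟨v1, v2⟩ ⟨hv1, hv2⟩
      have key : ∀ i j : Fin t, ∃ (S : Matrix (Fin (ns i)) (Fin (ns j)) ℂ)
          (R : Matrix (Fin (ns j)) (Fin (ns i)) ℂ) (d1 d2 : Matrix (Fin (ns i)) (Fin (ns j)) ℂ),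
          (∀ p q, ((⟨i, p⟩ : Σ i, Fin (ns i)), (⟨j, q⟩ : Σ i, Fin (ns i))) ∉ I1 → d1 p q = 0) ∧
          (∀ p q, ((⟨i, p⟩ : Σ i, Fin (ns i)), (⟨j, q⟩ : Σ i, Fin (ns i))) ∉ I2 → d2 p q = 0) ∧
          Rᵀ * A j + A i * S + d1 = blk v1 i j ∧ Rᵀ * B j + B i * S + d2 = blk v2 i j := by
        intro i j
        rcases lt_trichotomy i j with hij | rfl | hij
        · obtain ⟨_, ⟨⟨S, R⟩, rfl⟩, d, hd, h⟩ := Submodule.mem_sup.1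
            ((hoff i j hij).1 (Submodule.mem_top (x := (blk v1 i j, blk v2 i j))))
          exact ⟨S, R, d.1, d.2, hd.1, hd.2, congrArg Prod.fst h, congrArg Prod.snd h⟩
        · have hm : (blk v1 i i, blk v2 i i) ∈ SymPair (Fin (ns i)) :=
            ⟨by rw [Matrix.IsSymm, ← blk_transpose, hv1.eq],
              by rw [Matrix.IsSymm, ← blk_transpose, hv2.eq]⟩
          obtain ⟨_, ⟨C, rfl⟩, d, hd, h⟩ := Submodule.mem_sup.1 ((hdiag i).1 hm)
          exact ⟨C, C, d.1, d.2, hd.2.2.1, hd.2.2.2, congrArg Prod.fst h, congrArg Prod.snd h⟩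
        · obtain ⟨_, ⟨⟨S, R⟩, rfl⟩, d, hd, h⟩ := Submodule.mem_sup.1
            ((hoff j i hij).1 (Submodule.mem_top (x := (blk v1 j i, blk v2 j i))))
          refine ⟨R, S, d.1ᵀ, d.2ᵀ, fun p q h => hd.1 _ _ fun h' => h ((hI1 _ _).1 h'),
            fun p q h => hd.2 _ _ fun h' => h ((hI2 _ _).1 h'), ?_, ?_⟩
          · have := congrArg (fun x => (Prod.fst x)ᵀ) h
            simp only [← blk_transpose, hv1.eq] at this
            rw [← this]
            simp [offMap, Matrix.transpose_mul, (hA _).eq, add_comm]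
          · have := congrArg (fun x => (Prod.snd x)ᵀ) h
            simp only [← blk_transpose, hv2.eq] at this
            rw [← this]
            simp [offMap, Matrix.transpose_mul, (hB _).eq, add_comm]
      choose S R d1 d2 hd1 hd2 h1 h2 using key
      let gS : Matrix (Σ i, Fin (ns i)) (Σ i, Fin (ns i)) ℂ :=
        Matrix.of fun x y => S x.1 y.1 x.2 y.2
      let gR : Matrix (Σ i, Fin (ns i)) (Σ i, Fin (ns i)) ℂ :=
        Matrix.of fun x y => R y.1 x.1 x.2 y.2
      let g1 : Matrix (Σ i, Fin (ns i)) (Σ i, Fin (ns i)) ℂ :=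
        Matrix.of fun x y => d1 x.1 y.1 x.2 y.2
      let g2 : Matrix (Σ i, Fin (ns i)) (Σ i, Fin (ns i)) ℂ :=
        Matrix.of fun x y => d2 x.1 y.1 x.2 y.2
      have e1 : gRᵀ * blockDiagonal' A + blockDiagonal' A * gS + g1 = v1 := by
        refine blk_ext fun i j => ?_
        rw [blk_add, blk_add, blk_mul_diag, blk_diag_mul]
        exact h1 i j
      have e2 : gRᵀ * blockDiagonal' B + blockDiagonal' B * gS + g2 = v2 := by
        refine blk_ext fun i j => ?_
        rw [blk_add, blk_add, blk_mul_diag, blk_diag_mul]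
        exact h2 i j
      have fin : ∀ (M g v : Matrix (Σ i, Fin (ns i)) (Σ i, Fin (ns i)) ℂ), M.IsSymm → v.IsSymm →
          gRᵀ * M + M * gS + g = v →
          ((1 / 2 : ℂ) • (gR + gS))ᵀ * M + M * ((1 / 2 : ℂ) • (gR + gS))
            + (1 / 2 : ℂ) • (g + gᵀ) = v := by
        intro M g v hM hv h
        have h' := congrArg Matrix.transpose h
        rw [hv.eq] at h'
        simp only [Matrix.transpose_add, Matrix.transpose_mul, Matrix.transpose_transpose,
          hM.eq] at h'
        have : v = (1 / 2 : ℂ) • (v + v) := by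
          rw [← two_smul ℂ v, smul_smul]; norm_num
        rw [this]
        nth_rewrite 1 [← h]
        rw [← h']
        simp only [Matrix.transpose_smul, Matrix.transpose_add, Matrix.smul_mul, Matrix.mul_smul,
          Matrix.add_mul, Matrix.mul_add, smul_add]
        abel
      refine Submodule.mem_sup.2 ⟨_, ⟨(1 / 2 : ℂ) • (gR + gS), rfl⟩,
        ((1 / 2 : ℂ) • (g1 + g1ᵀ), (1 / 2 : ℂ) • (g2 + g2ᵀ)), ⟨?_, ?_, ?_, ?_⟩,
        Prod.ext (fin _ _ _ (blockDiagonal'_isSymm A hA) hv1 e1)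
          (fin _ _ _ (blockDiagonal'_isSymm B hB) hv2 e2)⟩
      · exact (Matrix.isSymm_add_transpose_self _).smul _
      · exact (Matrix.isSymm_add_transpose_self _).smul _
      · rintro ⟨i, p⟩ ⟨j, q⟩ h
        have a1 := hd1 i j p q h
        have a2 := hd1 j i q p (fun h' => h ((hI1 _ _).1 h'))
        simp [g1, a1, a2]
      · rintro ⟨i, p⟩ ⟨j, q⟩ h
        have a1 := hd2 i j p q h
        have a2 := hd2 j i q p (fun h' => h ((hI2 _ _).1 h'))
        simp [g2, a1, a2]
    · rintro _ ⟨C, rfl⟩ hd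
      set d := congMap (blockDiagonal' A) (blockDiagonal' B) C with hdC
      have up : ∀ i j, i < j → (blk d.1 i j, blk d.2 i j) = 0 := by
        intro i j hij
        refine (hoff i j hij).2 _ ⟨(blk C i j, blk C j i), ?_⟩
          ⟨fun p q h => hd.2.2.1 _ _ h, fun p q h => hd.2.2.2 _ _ h⟩
        simp [hdC, offMap, congMap, blk_add, blk_mul_diag, blk_diag_mul, blk_transpose]
      have dg : ∀ i, (blk d.1 i i, blk d.2 i i) = 0 := by
        intro i
        refine (hdiag i).2 _ ⟨blk C i i, ?_⟩
          ⟨by rw [Matrix.IsSymm, ← blk_transpose, hd.1.eq],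
           by rw [Matrix.IsSymm, ← blk_transpose, hd.2.1.eq],
           fun p q h => hd.2.2.1 _ _ h, fun p q h => hd.2.2.2 _ _ h⟩
        simp [hdC, congMap, blk_add, blk_mul_diag, blk_diag_mul, blk_transpose]
      refine Prod.ext (blk_ext fun i j => ?_) (blk_ext fun i j => ?_)
      · rcases lt_trichotomy i j with hij | rfl | hij
        · exact congrArg Prod.fst (up i j hij)
        · exact congrArg Prod.fst (dg i)
        · rw [← hd.1.eq, blk_transpose]
          exact congrArg (fun x => (Prod.fst x)ᵀ) (up j i hij)
      · rcases lt_trichotomy i j with hij | rfl | hij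
        · exact congrArg Prod.snd (up i j hij)
        · exact congrArg Prod.snd (dg i)
        · rw [← hd.2.1.eq, blk_transpose]
          exact congrArg (fun x => (Prod.snd x)ᵀ) (up j i hij)

end

noncomputable section

attribute [local instance] Matrix.normedAddCommGroup Matrix.normedSpace

/-- **Lemma (miniversality blockwise).** For a block-diagonal pair
`(A,B) = (A₁,B₁) ⊕ ⋯ ⊕ (A_t,B_t)` of symmetric complex matrices and a pattern space
`𝒟(ℂ)` given by symmetric sets of positions, the deformation `(X,Y) ↦ (A+X, B+Y)`
parametrized by `𝒟(ℂ)` is miniversal if and only if (i) for each `i`, every coset of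
`T(Aᵢ,Bᵢ)` in `Sym×Sym` contains exactly one element of the diagonal block pattern
space `𝒟ᵢᵢ(ℂ)`, and (ii) for all `i < j`, every coset of
`W = {(Rᵀ A_j + A_i S, Rᵀ B_j + B_i S)}` contains exactly one element of the
off-diagonal block pattern space `𝒟ᵢⱼ(ℂ)`. -/
theorem miniversal_iff_blocks {t : ℕ} (ns : Fin t → ℕ)
    (A B : ∀ i, Matrix (Fin (ns i)) (Fin (ns i)) ℂ)
    (hA : ∀ i, (A i).IsSymm) (hB : ∀ i, (B i).IsSymm)
    (I1 I2 : Set ((Σ i, Fin (ns i)) × (Σ i, Fin (ns i))))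
    (hI1 : ∀ x y : (Σ i, Fin (ns i)), (x, y) ∈ I1 ↔ (y, x) ∈ I1)
    (hI2 : ∀ x y : (Σ i, Fin (ns i)), (x, y) ∈ I2 ↔ (y, x) ∈ I2) :
    IsMiniversal (patternDeformation (Matrix.blockDiagonal' A) (Matrix.blockDiagonal' B)
        (blockDiagonal'_isSymm A hA) (blockDiagonal'_isSymm B hB)
        (Pattern I1 I2) (Pattern_le I1 I2)) ↔
      ((∀ i, ∀ v ∈ SymPair (Fin (ns i)), ∃! d,
          d ∈ Pattern {pq : Fin (ns i) × Fin (ns i) | (⟨i, pq.1⟩, ⟨i, pq.2⟩) ∈ I1}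
                {pq : Fin (ns i) × Fin (ns i) | (⟨i, pq.1⟩, ⟨i, pq.2⟩) ∈ I2} ∧
            v - d ∈ TSpace (A i) (B i)) ∧
       (∀ i j : Fin t, i < j → ∀ v : Matrix (Fin (ns i)) (Fin (ns j)) ℂ ×
            Matrix (Fin (ns i)) (Fin (ns j)) ℂ, ∃! d,
          d ∈ entryPattern {pq : Fin (ns i) × Fin (ns j) | (⟨i, pq.1⟩, ⟨j, pq.2⟩) ∈ I1}
                {pq : Fin (ns i) × Fin (ns j) | (⟨i, pq.1⟩, ⟨j, pq.2⟩) ∈ I2} ∧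
            v - d ∈ WSpace (A i) (B i) (A j) (B j))) := by
  rw [miniversal_iff]
  have e1 := fun i => existsUnique_iff (SymPair (Fin (ns i))) (TSpace (A i) (B i))
    (Pattern {pq : Fin (ns i) × Fin (ns i) | (⟨i, pq.1⟩, ⟨i, pq.2⟩) ∈ I1}
      {pq : Fin (ns i) × Fin (ns i) | (⟨i, pq.1⟩, ⟨i, pq.2⟩) ∈ I2})
  have e2 := fun i j => existsUnique_iff ⊤ (WSpace (A i) (B i) (A j) (B j))
    (entryPattern {pq : Fin (ns i) × Fin (ns j) | (⟨i, pq.1⟩, ⟨j, pq.2⟩) ∈ I1}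
      {pq : Fin (ns i) × Fin (ns j) | (⟨i, pq.1⟩, ⟨j, pq.2⟩) ∈ I2})
  have hg := glob_iff_blocks A B hA hB I1 I2 hI1 hI2
  rw [Submodule.eq_bot_iff]
  constructor
  · rintro ⟨h1, h2⟩
    obtain ⟨h3, h4⟩ := hg.1 ⟨h1, fun d hT hD => h2 d ⟨hT, hD⟩⟩
    exact ⟨fun i => (e1 i).2 (h3 i),
      fun i j hij v => (e2 i j).2 (h4 i j hij) v Submodule.mem_top⟩
  · rintro ⟨h3, h4⟩
    obtain ⟨h1, h2⟩ := hg.2 ⟨fun i => (e1 i).1 (h3 i),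
      fun i j hij => (e2 i j).1 fun v _ => h4 i j hij v⟩
    exact ⟨h1, fun d hd => h2 d hd.1 hd.2⟩

end
end

section
/- Main theorem: Let (A,B)_can = X_1 ⊕ ⋯ ⊕ X_t be a pair of symmetric N×N complex matrices, where each X_i is a canonical pair of the form H_{k}(λ) (λ ∈ ℂ), K_{k}, or L_{k} (L_k having size 2k+1). Define the subspace 𝒟(ℂ) of Sym_N(ℂ)×Sym_N(ℂ) consisting of all symmetric pairs (M,M') whose blocks (M_{ij},M'_{ij}) in the partition conformable to the direct sum (with M_{ji} = M_{ij}^T, M'_{ji} = M'_{ij}^T) are supported as follows. Diagonal blocks: if X_i = H_k(λ) then M_{ii} = 0 and M'_{ii} is supported on {(p,q) : |p−q| ≤ 1 and p+q ≤ k+1}; if X_i = K_k then M'_{ii} = 0 and M_{ii} is supported on {(p,q) : |p−q| ≤ 1 and p+q ≤ k+1}; if X_i = L_k then M_{ii} is supported on {(k+1,k+1)} and M'_{ii} is supported on {(p,q) : p ≤ k+1, q ≤ k+1, |p−q| ≤ 1}. Off-diagonal blocks between summands of the same type (rows indexed by a summand of size parameter k, columns by one of size parameter l): for H_k(λ) versus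 H_l(μ) with λ ≠ μ both blocks are 0; for H_k(λ) versus H_l(λ), M-block is 0 and M'-block is supported on {(p,1) : p ≤ min(k,l)}; for K_k versus K_l, M'-block is 0 and M-block is supported on {(p,1) : p ≤ min(k,l)}; for L_k versus L_l (block size (2k+1)×(2l+1)), the M-block is supported on {(k+1, l+1)} and the M'-block is supported on {(1,q) : q ≤ l+1} ∪ {(p, l+1) : p ≤ k+1} ∪ {(k+1, l+1+q) : k+1 ≤ q ≤ l−1} ∪ {(k+1+p, l+1) : l+1 ≤ p ≤ k−1}. Off-diagonal blocks between summands of different types (rows indexed by the first-named summand): for H_k(λ) versus K_l both blocks are 0; for H_k(λ) versus L_l (block size k×(2l+1)), M-block is 0 and M'-block is supported on {(p,1) : 1 ≤ p ≤ k}; for K_k versus L_l (block size k×(2l+1)), M'-block is 0 and M-block is supported on {(p, l+1) : 1 ≤ p ≤ k}. Then Sym_N(ℂ)×Sym_N(ℂ) = T((A,B)_can) ⊕ 𝒟(ℂ); equivalently, the deformation (X,Y) ↦ (A_can + X, B_can + Y) parametrized by 𝒟(ℂ) is a (simplest) miniversal deformation of (A,B)_can under congruence. -/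
open Matrix Filter

noncomputable section

attribute [local instance] Matrix.normedAddCommGroup Matrix.normedSpace

end

noncomputable section

attribute [local instance] Matrix.normedAddCommGroup Matrix.normedSpace

theorem canA_isSymm (c : CanType) : c.A.IsSymm := by
  cases c with
  | H k lam => exact delM_isSymm k
  | K k => exact lamM_isSymm k 0
  | L k => exact L1M_isSymm k

theorem canB_isSymm (c : CanType) : c.B.IsSymm := by
  cases c with
  | H k lam => exact lamM_isSymm k lam
  | K k => exact delM_isSymm k
  | L k => exact L2M_isSymm k

/-- Support of the first matrix of a diagonal block of the miniversal deformation
(`0`-based coordinates within the block). -/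
def diagSupp1 : CanType → ℕ → ℕ → Prop
  | .H _ _ => fun _ _ => False
  | .K k => fun p q => (p ≤ q + 1 ∧ q ≤ p + 1) ∧ p + 1 + (q + 1) ≤ k + 1
  | .L k => fun p q => p = k ∧ q = k

/-- Support of the second matrix of a diagonal block of the miniversal deformation. -/
def diagSupp2 : CanType → ℕ → ℕ → Prop
  | .H k _ => fun p q => (p ≤ q + 1 ∧ q ≤ p + 1) ∧ p + 1 + (q + 1) ≤ k + 1
  | .K _ => fun _ _ => False
  | .L k => fun p q => p ≤ k ∧ q ≤ k ∧ (p ≤ q + 1 ∧ q ≤ p + 1)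

/-- Support of the first matrix of the off-diagonal block between summands `c` (rows)
and `d` (columns), for `i < j` (`0`-based coordinates within the block). -/
def offSupp1 : CanType → CanType → ℕ → ℕ → Prop
  | .K k, .K l => fun p q => q = 0 ∧ p + 1 ≤ min k l
  | .K _, .L l => fun _ q => q = l
  | .L k, .K _ => fun p _ => p = k
  | .L k, .L l => fun p q => p = k ∧ q = l
  | _, _ => fun _ _ => False

/-- Support of the second matrix of the off-diagonal block between summands `c` (rows)
and `d` (columns), for `i < j`. -/
def offSupp2 : CanType → CanType → ℕ → ℕ → Prop
  | .H k lam, .H l mu => fun p q => lam = mu ∧ q = 0 ∧ p + 1 ≤ min k l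
  | .H _ _, .L _ => fun _ q => q = 0
  | .L _, .H _ _ => fun p _ => p = 0
  | .L k, .L l => fun p q =>
      (p = 0 ∧ q ≤ l) ∨ (q = l ∧ p ≤ k) ∨
      (p = k ∧ k + l + 2 ≤ q + 1 ∧ q + 1 ≤ 2 * l) ∨
      (q = l ∧ k + l + 2 ≤ p + 1 ∧ p + 1 ≤ 2 * k)
  | _, _ => fun _ _ => False

/-- The set of positions of the stars of the first matrix of `𝒟`. -/
def canI1 {t : ℕ} (X : Fin t → CanType) :
    Set ((Σ i, Fin (X i).size) × (Σ i, Fin (X i).size)) :=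
  {x | (x.1.1 = x.2.1 ∧ diagSupp1 (X x.1.1) (x.1.2 : ℕ) (x.2.2 : ℕ)) ∨
    (x.1.1 < x.2.1 ∧ offSupp1 (X x.1.1) (X x.2.1) (x.1.2 : ℕ) (x.2.2 : ℕ)) ∨
    (x.2.1 < x.1.1 ∧ offSupp1 (X x.2.1) (X x.1.1) (x.2.2 : ℕ) (x.1.2 : ℕ))}

/-- The set of positions of the stars of the second matrix of `𝒟`. -/
def canI2 {t : ℕ} (X : Fin t → CanType) :
    Set ((Σ i, Fin (X i).size) × (Σ i, Fin (X i).size)) :=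
  {x | (x.1.1 = x.2.1 ∧ diagSupp2 (X x.1.1) (x.1.2 : ℕ) (x.2.2 : ℕ)) ∨
    (x.1.1 < x.2.1 ∧ offSupp2 (X x.1.1) (X x.2.1) (x.1.2 : ℕ) (x.2.2 : ℕ)) ∨
    (x.2.1 < x.1.1 ∧ offSupp2 (X x.2.1) (X x.1.1) (x.2.2 : ℕ) (x.1.2 : ℕ))}

/-- Row equations on zero-extended vectors. -/
def RowEq : CanType → (ℕ → ℂ) → (ℕ → ℂ) → Prop
  | .H k lam => fun u u' => ∀ i, i < k → u i + lam * u' i + u' (i + 1) = 0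
  | .K k => fun u u' => ∀ i, i < k → u (i + 1) + u' i = 0
  | .L k => fun u u' => (∀ i, i < k → u i + u' (i + 1) = 0) ∧ u (k + 1) = 0 ∧
      ∀ i, 1 ≤ i → i ≤ k → u (k + 1 + i) + u' (k + i) = 0

def Sup (m n : ℕ) (y : ℕ → ℕ → ℂ) : Prop := ∀ i j, (m ≤ i ∨ n ≤ j) → y i j = 0

structure Sol (c d : CanType) (y y' : ℕ → ℕ → ℂ) : Prop where
  s1 : Sup c.size d.size y
  s2 : Sup c.size d.size y'
  row : ∀ j, RowEq c (fun i => y i j) (fun i => y' i j)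
  col : ∀ i, RowEq d (fun j => y i j) (fun j => y' i j)

theorem Sol.swap {c d : CanType} {y y' : ℕ → ℕ → ℂ} (h : Sol c d y y') :
    Sol d c (fun i j => y j i) (fun i j => y' j i) :=
  ⟨fun i j hij => h.s1 j i hij.symm, fun i j hij => h.s2 j i hij.symm, h.col, h.row⟩

theorem hankel {f : ℕ → ℕ → ℂ} {k l : ℕ}
    (h : ∀ i j, i < k → j < l → f (i + 1) j = f i (j + 1)) :
    ∀ s i j, i + s ≤ k → j + s ≤ l → f (i + s) j = f i (j + s) := by
  intro s
  induction s with
  | zero => intros; rfl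
  | succ s ih =>
    intro i j hi hj
    rw [show i + (s + 1) = (i + s) + 1 by omega, h _ _ (by omega) (by omega),
      ih _ _ (by omega) (by omega)]
    congr 1; omega

theorem hankel' {f : ℕ → ℕ → ℂ} {k l : ℕ}
    (h : ∀ i j, i < k → j < l → f (i + 1) j = f i (j + 1)) (i j i' j' : ℕ)
    (hi : i ≤ k) (hj : j ≤ l) (hi' : i' ≤ k) (hj' : j' ≤ l) (e : i + j = i' + j') :
    f i j = f i' j' := by
  rcases le_total i i' with hh | hh
  · obtain ⟨s, rfl⟩ := Nat.exists_eq_add_of_le hh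
    have := hankel h s i j' (by omega) (by omega)
    rw [this]; congr 1; omega
  · obtain ⟨s, rfl⟩ := Nat.exists_eq_add_of_le hh
    have := hankel h s i' j (by omega) (by omega)
    rw [this]; congr 1; omega

/-- Hankel structure of the same-eigenvalue H-H solution. -/
theorem HH_hankel {k l : ℕ} {lam : ℂ} {y y' : ℕ → ℕ → ℂ}
    (h : Sol (.H k lam) (.H l lam) y y') :
    ∀ i j, i < k → j < l → y' (i + 1) j = y' i (j + 1) := by
  intro i j hi hj
  have h1 := h.row j i hi
  have h2 := h.col i j hj
  simp only at h1 h2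
  linear_combination h1 - h2

theorem HH_y {k : ℕ} {lam : ℂ} {d : CanType} {y y' : ℕ → ℕ → ℂ}
    (h : Sol (.H k lam) d y y') (h0 : ∀ i j, y' i j = 0) (i j : ℕ) : y i j = 0 := by
  by_cases hi : i < k
  · have h1 := h.row j i hi
    simp only [h0] at h1
    simpa using h1
  · exact h.s1 i j (Or.inl (by simpa [CanType.size] using hi))

theorem HH_inj {k l : ℕ} {lam mu : ℂ} {y y' : ℕ → ℕ → ℂ}
    (h : Sol (.H k lam) (.H l mu) y y')
    (h2 : lam = mu → ∀ p, p + 1 ≤ min k l → y' p 0 = 0) :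
    ∀ i j, y i j = 0 ∧ y' i j = 0 := by
  suffices H : ∀ i j, y' i j = 0 from fun i j => ⟨HH_y h H i j, H i j⟩
  by_cases e : lam = mu
  · subst e
    have hk := HH_hankel h
    intro i j
    by_cases hs : k ≤ i ∨ l ≤ j
    · exact h.s2 i j hs
    · push Not at hs
      by_cases hm : i + j < min k l
      · rw [hankel' hk i j (i + j) 0 (by omega) (by omega) (by omega) (by omega) rfl]
        exact h2 rfl _ hm
      · rcases le_total k l with hkl | hkl
        · rw [hankel' hk i j k (i + j - k) (by omega) (by omega) (by omega) (by omega) (by omega)]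
          exact h.s2 _ _ (Or.inl le_rfl)
        · rw [hankel' hk i j (i + j - l) l (by omega) (by omega) (by omega) (by omega) (by omega)]
          exact h.s2 _ _ (Or.inr le_rfl)
  · suffices H : ∀ n i j, k + l ≤ i + j + n → y' i j = 0 from
      fun i j => H (k + l) i j (by omega)
    intro n
    induction n with
    | zero => 
      intro i j hij
      exact h.s2 i j (by simp only [CanType.size]; omega)
    | succ n ih =>
      intro i j hij
      by_cases hs : k ≤ i ∨ l ≤ j
      · exact h.s2 i j hs
      · push Not at hs
        have h1 := h.row j i hs.1
        have h2 := h.col i j hs.2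
        simp only [ih (i + 1) j (by omega), ih i (j + 1) (by omega)] at h1 h2
        have : (lam - mu) * y' i j = 0 := by linear_combination h1 - h2
        exact (mul_eq_zero.mp this).resolve_left (sub_ne_zero.mpr e)

theorem hankel_sol (k l : ℕ) (lam : ℂ) (f : ℕ → ℂ) (hf : ∀ m, min k l ≤ m → f m = 0) :
    Sol (.H k lam) (.H l lam) (fun i j => -(lam * f (i + j) + f (i + j + 1)))
      (fun i j => f (i + j)) := by
  refine ⟨?_, ?_, ?_, ?_⟩
  · intro i j hij
    simp only [CanType.size] at hij
    simp [hf (i + j) (by omega), hf (i + j + 1) (by omega)]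
  · intro i j hij
    simp only [CanType.size] at hij
    exact hf _ (by omega)
  · intro j i hi
    simp only [show i + 1 + j = i + j + 1 by omega]; ring
  · intro i j hj
    simp only [show i + (j + 1) = i + j + 1 by omega]; ring

theorem zero_sol (c d : CanType) : Sol c d (fun _ _ => 0) (fun _ _ => 0) := by
  refine ⟨fun _ _ _ => rfl, fun _ _ _ => rfl, fun _ => ?_, fun _ => ?_⟩
  · cases c <;> simp [RowEq]
  · cases d <;> simp [RowEq]

theorem HH_surj (k l : ℕ) (lam mu : ℂ) (e' : ℕ → ℕ → ℂ) :
    ∃ y y', Sol (.H k lam) (.H l mu) y y' ∧ 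
      (lam = mu → ∀ p, p + 1 ≤ min k l → y' p 0 = e' p 0) := by
  by_cases e : lam = mu
  · subst e
    refine ⟨_, _, hankel_sol k l lam (fun m => if m < min k l then e' m 0 else 0) ?_, ?_⟩
    · intro m hm; exact if_neg (by omega)
    · intro _ p hp; exact if_pos (by omega)
  · exact ⟨_, _, zero_sol _ _, fun h => absurd h e⟩

theorem Sol.KK {k l : ℕ} {y y' : ℕ → ℕ → ℂ} :
    Sol (.K k) (.K l) y y' ↔ Sol (.H k 0) (.H l 0) y' y := by
  constructor
  · intro h
    exact ⟨h.s2, h.s1, fun j i hi => by have := h.row j i hi; simp only at this ⊢; linear_combination this,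
      fun j i hi => by have := h.col j i hi; simp only at this ⊢; linear_combination this⟩
  · intro h
    exact ⟨h.s2, h.s1, fun j i hi => by have := h.row j i hi; simp only at this ⊢; linear_combination this,
      fun j i hi => by have := h.col j i hi; simp only at this ⊢; linear_combination this⟩

theorem HK_inj {k l : ℕ} {lam : ℂ} {y y' : ℕ → ℕ → ℂ}
    (h : Sol (.H k lam) (.K l) y y') : ∀ i j, y i j = 0 ∧ y' i j = 0 := by
  suffices H : ∀ n i j, l ≤ j + n → y i j = 0 ∧ y' i j = 0 from
      fun i j => H l i j (by omega)
  intro n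
  induction n with
  | zero => 
    intro i j hij
    exact ⟨h.s1 i j (Or.inr hij), h.s2 i j (Or.inr hij)⟩
  | succ n ih =>
    intro i j hij
    have hy' : ∀ i, y' i j = 0 := by
      intro i
      by_cases hj : l ≤ j
      · exact h.s2 i j (Or.inr hj)
      · have h2 := h.col i j (by omega)
        simp only [(ih i (j + 1) (by omega)).1] at h2
        simpa using h2
    refine ⟨?_, hy' i⟩
    by_cases hi : k ≤ i
    · exact h.s1 i j (Or.inl hi)
    · have h1 := h.row j i (by omega)
      simp only [hy'] at h1
      simpa using h1

theorem HL_inj {k l : ℕ} {lam : ℂ} {y y' : ℕ → ℕ → ℂ}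
    (h : Sol (.H k lam) (.L l) y y') (h0 : ∀ i, y' i 0 = 0) :
    ∀ i j, y i j = 0 ∧ y' i j = 0 := by
  have hy : ∀ j, (∀ i, y' i j = 0) → ∀ i, y i j = 0 := by
    intro j hj i
    by_cases hi : k ≤ i
    · exact h.s1 i j (Or.inl hi)
    · have h1 := h.row j i (by omega)
      simp only [hj] at h1
      simpa using h1
  suffices H : ∀ j i, y' i j = 0 from fun i j => ⟨hy j (H j) i, H j i⟩
  have ha : ∀ j, j ≤ l → ∀ i, y' i j = 0 := by
    intro j
    induction j with
    | zero => intro _; exact h0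
    | succ j ih =>
      intro hj i
      have h2 := (h.col i).1 j (by omega)
      simp only [hy j (ih (by omega))] at h2
      simpa using h2
  have hb : ∀ n j, l + 1 ≤ j → 2 * l + 1 ≤ j + n → ∀ i, y' i j = 0 := by
    intro n
    induction n with
    | zero => intro j _ hj i; exact h.s2 i j (Or.inr hj)
    | succ n ih =>
      intro j hl hj i
      by_cases hj2 : 2 * l + 1 ≤ j
      · exact h.s2 i j (Or.inr hj2)
      · have h2 := (h.col i).2.2 (j - l) (by omega) (by omega)
        simp only [show l + 1 + (j - l) = j + 1 by omega, show l + (j - l) = j by omega,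
          hy (j + 1) (ih (j + 1) (by omega) (by omega))] at h2
        simpa using h2
  intro j i
  by_cases hj : j ≤ l
  · exact ha j hj i
  · exact hb (2 * l + 1) j (by omega) (by omega) i

/-- iterates of `lam + J`. -/
def itv (lam : ℂ) (v : ℕ → ℂ) : ℕ → ℕ → ℂ
  | 0 => v
  | n + 1 => fun i => lam * itv lam v n i + itv lam v n (i + 1)

theorem itv_supp (lam : ℂ) (v : ℕ → ℂ) (k : ℕ) (hv : ∀ i, k ≤ i → v i = 0) :
    ∀ n i, k ≤ i → itv lam v n i = 0 := by
  intro n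
  induction n with
  | zero => exact hv
  | succ n ih => intro i hi; simp [itv, ih i hi, ih (i + 1) (by omega)]

theorem HL_surj (k l : ℕ) (lam : ℂ) (e' : ℕ → ℕ → ℂ) :
    ∃ y y', Sol (.H k lam) (.L l) y y' ∧ (∀ i, i < k → y' i 0 = e' i 0) := by
  set v : ℕ → ℂ := fun i => if i < k then e' i 0 else 0 with hv
  have hs := itv_supp lam v k (by intro i hi; rw [hv]; simp only; rw [if_neg (by omega)])
  refine ⟨fun i j => if j ≤ l then - itv lam v (j + 1) i else 0,
    fun i j => if j ≤ l then itv lam v j i else 0, ⟨?_, ?_, ?_, ?_⟩, ?_⟩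
  · intro i j hij
    simp only [CanType.size] at hij
    simp only
    split_ifs with hj
    · rw [hs _ _ (by omega)]; simp
    · rfl
  · intro i j hij
    simp only [CanType.size] at hij
    simp only
    split_ifs with hj
    · exact hs _ _ (by omega)
    · rfl
  · intro j i hi
    simp only
    split_ifs with hj
    · simp only [itv]; ring
    · simp
  · intro i
    refine ⟨?_, ?_, ?_⟩
    · intro j hj
      simp only
      rw [if_pos (by omega), if_pos (by omega)]; ring
    · simp only; rw [if_neg (by omega)]
    · intro j h1 h2
      simp only
      rw [if_neg (by omega), if_neg (by omega)]; ring
  · intro i hi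
    simp [itv, hv, hi]

theorem KL_inj {k l : ℕ} {y y' : ℕ → ℕ → ℂ}
    (h : Sol (.K k) (.L l) y y') (h0 : ∀ i, y i l = 0) :
    ∀ i j, y i j = 0 ∧ y' i j = 0 := by
  have hy : ∀ j, (∀ i, y i j = 0) → ∀ i, y' i j = 0 := by
    intro j hj i
    by_cases hi : k ≤ i
    · exact h.s2 i j (Or.inl hi)
    · have h1 := h.row j i (by omega)
      simp only [hj] at h1
      simpa using h1
  suffices H : ∀ j i, y i j = 0 from fun i j => ⟨H j i, hy j (H j) i⟩
  have ha : ∀ n j, j + n = l → ∀ i, y i j = 0 := by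
    intro n
    induction n with
    | zero => intro j hj; rw [show j = l by omega]; exact h0
    | succ n ih =>
      intro j hj i
      have h2 := (h.col i).1 j (by omega)
      simp only [hy (j + 1) (ih (j + 1) (by omega))] at h2
      simpa using h2
  have hb : ∀ n, ∀ i, y i (l + 1 + n) = 0 := by
    intro n
    induction n with
    | zero => intro i; exact (h.col i).2.1
    | succ n ih =>
      intro i
      by_cases hj2 : 2 * l + 1 ≤ l + 1 + (n + 1)
      · exact h.s1 i _ (Or.inr hj2)
      · have h2 := (h.col i).2.2 (n + 1) (by omega) (by omega)
        simp only [show l + (n + 1) = l + 1 + n by omega, hy (l + 1 + n) ih] at h2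
        simpa using h2
  intro j i
  by_cases hj : j ≤ l
  · exact ha (l - j) j (by omega) i
  · rw [show j = l + 1 + (j - l - 1) by omega]; exact hb _ i

theorem KL_surj (k l : ℕ) (e : ℕ → ℕ → ℂ) :
    ∃ y y', Sol (.K k) (.L l) y y' ∧ (∀ i, i < k → y i l = e i l) := by
  set v : ℕ → ℂ := fun i => if i < k then e i l else 0 with hv
  have hs : ∀ i, k ≤ i → v i = 0 := by intro i hi; rw [hv]; simp only; rw [if_neg (by omega)]
  refine ⟨fun i j => if j ≤ l then v (i + (l - j)) else 0,
    fun i j => if j ≤ l then - v (i + 1 + (l - j)) else 0, ⟨?_, ?_, ?_, ?_⟩, ?_⟩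
  · intro i j hij
    simp only [CanType.size] at hij
    simp only
    split_ifs with hj
    · exact hs _ (by omega)
    · rfl
  · intro i j hij
    simp only [CanType.size] at hij
    simp only
    split_ifs with hj
    · rw [hs _ (by omega)]; simp
    · rfl
  · intro j i hi
    simp only
    split_ifs with hj
    · ring
    · simp
  · intro i
    refine ⟨?_, ?_, ?_⟩
    · intro j hj
      simp only
      rw [if_pos (by omega), if_pos (by omega),
        show i + 1 + (l - (j + 1)) = i + (l - j) by omega]; ring
    · simp only; rw [if_neg (by omega)]
    · intro j h1 h2
      simp only
      rw [if_neg (by omega), if_neg (by omega)]; ring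
  · intro i hi
    simp [hv, hi]

theorem LL_b_inj {k l : ℕ} {y y' : ℕ → ℕ → ℂ} (h : Sol (.L k) (.L l) y y')
    (h0 : ∀ q, k ≤ q → q + 2 ≤ l → y' k (l + 1 + q) = 0) :
    ∀ i q, i ≤ k → y i (l + 1 + q) = 0 ∧ y' i (l + 1 + q) = 0 := by
  have r : ∀ i j, i < k → y i j + y' (i + 1) j = 0 := fun i j hi => (h.row j).1 i hi
  have c0 : ∀ i, y i (l + 1) = 0 := fun i => (h.col i).2.1
  have c1 : ∀ i q, q < l → y i (l + 1 + (q + 1)) + y' i (l + 1 + q) = 0 := by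
    intro i q hq
    have := (h.col i).2.2 (q + 1) (by omega) (by omega)
    simp only at this
    rw [show l + (q + 1) = l + 1 + q by omega] at this
    exact this
  have hlast : ∀ i q, l ≤ q + 1 → y' i (l + 1 + q) = 0 := by
    intro i q hq
    by_cases hq2 : l ≤ q
    · exact h.s2 _ _ (Or.inr (by simp only [CanType.size]; omega))
    · have := c1 i q (by omega)
      rw [h.s1 _ _ (Or.inr (by simp only [CanType.size]; omega))] at this
      simpa using this
  have hdown : ∀ q i, q < i → i ≤ k → y' i (l + 1 + q) = 0 := by
    intro q
    induction q with
    | zero =>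
      intro i hi hk
      obtain ⟨i, rfl⟩ : ∃ i', i = i' + 1 := ⟨i - 1, by omega⟩
      have := r i (l + 1) (by omega)
      rw [c0] at this
      simpa using this
    | succ q ih =>
      intro i hi hk
      by_cases hl : l ≤ q + 2
      · exact hlast _ _ hl
      obtain ⟨i, rfl⟩ : ∃ i', i = i' + 1 := ⟨i - 1, by omega⟩
      have e1 := r i (l + 1 + (q + 1)) (by omega)
      have e2 := c1 i q (by omega)
      rw [ih i (by omega) (by omega)] at e2
      linear_combination e1 - e2
  have hup : ∀ n i q, i + n = k → i ≤ q → y' i (l + 1 + q) = 0 := by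
    intro n
    induction n with
    | zero =>
      intro i q hi hq
      obtain rfl : i = k := by omega
      by_cases hl : l ≤ q + 1
      · exact hlast _ _ hl
      · exact h0 q hq (by omega)
    | succ n ih =>
      intro i q hi hq
      by_cases hl : l ≤ q + 1
      · exact hlast _ _ hl
      have e1 := r i (l + 1 + (q + 1)) (by omega)
      have e2 := c1 i q (by omega)
      rw [ih (i + 1) (q + 1) (by omega) (by omega)] at e1
      linear_combination e2 - e1
  have H : ∀ i q, i ≤ k → y' i (l + 1 + q) = 0 := by
    intro i q hi
    by_cases hq : q < i
    · exact hdown q i hq hi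
    · exact hup (k - i) i q (by omega) (by omega)
  intro i q hi
  refine ⟨?_, H i q hi⟩
  by_cases hq2 : l ≤ q
  · exact h.s1 _ _ (Or.inr (by simp only [CanType.size]; omega))
  · cases q with
    | zero => exact c0 i
    | succ q =>
      have := c1 i q (by omega)
      rw [H i q hi] at this
      simpa using this

theorem LL_d_inj {k l : ℕ} {y y' : ℕ → ℕ → ℂ} (h : Sol (.L k) (.L l) y y') :
    ∀ p q, y (k + 1 + p) (l + 1 + q) = 0 ∧ y' (k + 1 + p) (l + 1 + q) = 0 := by
  have r0 : ∀ j, y (k + 1) j = 0 := fun j => (h.row j).2.1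
  have r1 : ∀ p j, p < k → y (k + 1 + (p + 1)) j + y' (k + 1 + p) j = 0 := by
    intro p j hp
    have := (h.row j).2.2 (p + 1) (by omega) (by omega)
    simp only at this
    rw [show k + (p + 1) = k + 1 + p by omega] at this
    exact this
  have c1 : ∀ i q, q < l → y i (l + 1 + (q + 1)) + y' i (l + 1 + q) = 0 := by
    intro i q hq
    have := (h.col i).2.2 (q + 1) (by omega) (by omega)
    simp only at this
    rw [show l + (q + 1) = l + 1 + q by omega] at this
    exact this
  have hlast : ∀ i q, l ≤ q + 1 → y' i (l + 1 + q) = 0 := by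
    intro i q hq
    by_cases hq2 : l ≤ q
    · exact h.s2 _ _ (Or.inr (by simp only [CanType.size]; omega))
    · have := c1 i q (by omega)
      rw [h.s1 _ _ (Or.inr (by simp only [CanType.size]; omega))] at this
      simpa using this
  have H : ∀ p q, y' (k + 1 + p) (l + 1 + q) = 0 := by
    intro p
    induction p with
    | zero =>
      intro q
      by_cases hl : l ≤ q + 1
      · exact hlast _ _ hl
      have := c1 (k + 1) q (by omega)
      rw [r0] at this
      simpa using this
    | succ p ih =>
      intro q
      by_cases hl : l ≤ q + 1
      · exact hlast _ _ hl
      by_cases hk : k ≤ p + 1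
      · exact h.s2 _ _ (Or.inl (by simp only [CanType.size]; omega))
      have e1 := c1 (k + 1 + (p + 1)) q (by omega)
      have e2 := r1 p (l + 1 + (q + 1)) (by omega)
      rw [ih (q + 1)] at e2
      linear_combination e1 - e2
  intro p q
  refine ⟨?_, H p q⟩
  by_cases hp : k ≤ p
  · exact h.s1 _ _ (Or.inl (by simp only [CanType.size]; omega))
  · cases p with
    | zero => exact r0 _
    | succ p =>
      have := r1 p (l + 1 + q) (by omega)
      rw [H] at this
      simpa using this

theorem LL_hankel {k l : ℕ} {y y' : ℕ → ℕ → ℂ} (h : Sol (.L k) (.L l) y y') :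
    ∀ i j, i < k → j < l → y' (i + 1) j = y' i (j + 1) := by
  intro i j hi hj
  have h1 := (h.row j).1 i hi
  have h2 := (h.col i).1 j hj
  simp only at h1 h2
  linear_combination h1 - h2

theorem LL_inj_aux {k l : ℕ} {y y' : ℕ → ℕ → ℂ} (h : Sol (.L k) (.L l) y y')
    (h1 : y k l = 0) (ha : ∀ i j, i ≤ k → j ≤ l → y' i j = 0)
    (hb : ∀ q, k ≤ q → q + 2 ≤ l → y' k (l + 1 + q) = 0)
    (hc : ∀ p, l ≤ p → p + 2 ≤ k → y' (k + 1 + p) l = 0) :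
    ∀ i j, y i j = 0 ∧ y' i j = 0 := by
  have B := LL_b_inj h hb
  have C := LL_b_inj h.swap hc
  have D := LL_d_inj h
  intro i j
  by_cases hi : i ≤ k
  · by_cases hj : j ≤ l
    · refine ⟨?_, ha i j hi hj⟩
      by_cases hik : i < k
      · have := (h.row j).1 i hik
        simp only [ha (i + 1) j (by omega) hj] at this
        simpa using this
      by_cases hjl : j < l
      · have := (h.col i).1 j hjl
        simp only [ha i (j + 1) hi (by omega)] at this
        simpa using this
      rw [show i = k by omega, show j = l by omega]; exact h1
    · obtain ⟨q, rfl⟩ := Nat.exists_eq_add_of_le (show l + 1 ≤ j by omega)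
      exact B i q hi
  · obtain ⟨p, rfl⟩ := Nat.exists_eq_add_of_le (show k + 1 ≤ i by omega)
    by_cases hj : j ≤ l
    · exact C j p hj
    · obtain ⟨q, rfl⟩ := Nat.exists_eq_add_of_le (show l + 1 ≤ j by omega)
      exact D p q

theorem LL_inj {k l : ℕ} {y y' : ℕ → ℕ → ℂ} (h : Sol (.L k) (.L l) y y')
    (h1 : y k l = 0) (ha1 : ∀ j, j ≤ l → y' 0 j = 0) (ha2 : ∀ i, i ≤ k → y' i l = 0)
    (hb : ∀ q, k ≤ q → q + 2 ≤ l → y' k (l + 1 + q) = 0)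
    (hc : ∀ p, l ≤ p → p + 2 ≤ k → y' (k + 1 + p) l = 0) :
    ∀ i j, y i j = 0 ∧ y' i j = 0 := by
  refine LL_inj_aux h h1 ?_ hb hc
  intro i j hi hj
  by_cases hij : i + j ≤ l
  · rw [hankel' (LL_hankel h) i j 0 (i + j) hi hj (by omega) hij (by omega)]
    exact ha1 _ hij
  · rw [hankel' (LL_hankel h) i j (i + j - l) l hi hj (by omega) (by omega) (by omega)]
    exact ha2 _ (by omega)

/-- explicit solutions for L-L. -/
theorem LL_sol (k l : ℕ) (f g g2 : ℕ → ℂ) :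
    Sol (.L k) (.L l)
      (fun i j => if i ≤ k then (if j ≤ l then - f (i + j + 1) else
          (if l + 1 + i + 1 ≤ j ∧ j + k < 2 * l + i + 1 then -g (j - (l + 1 + i + 1)) else 0))
        else (if j ≤ l then
          (if k + 1 + j + 1 ≤ i ∧ i + l < 2 * k + j + 1 then -g2 (i - (k + 1 + j + 1)) else 0)
          else 0))
      (fun i j => if i ≤ k then (if j ≤ l then f (i + j) else
          (if l + 1 + i ≤ j ∧ j + k < 2 * l + i then g (j - (l + 1 + i)) else 0))
        else (if j ≤ l then
          (if k + 1 + j ≤ i ∧ i + l < 2 * k + j then g2 (i - (k + 1 + j)) else 0)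
          else 0)) := by
  refine ⟨?_, ?_, ?_, ?_⟩
  · intro i j hij
    simp only [CanType.size] at hij
    beta_reduce
    split_ifs <;> first | rfl | omega
  · intro i j hij
    simp only [CanType.size] at hij
    beta_reduce
    split_ifs <;> first | rfl | omega
  · intro j
    refine ⟨?_, ?_, ?_⟩
    · intro i hi
      simp only
      rw [if_pos (show i ≤ k by omega), if_pos (show i + 1 ≤ k by omega)]
      split_ifs <;> first | omega | skip
      · rw [show i + 1 + j = i + j + 1 by omega]; ring
      · rw [show l + 1 + (i + 1) = l + 1 + i + 1 by omega]; ring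
      · ring
    · simp only
      rw [if_neg (by omega)]
      split_ifs <;> first | rfl | omega
    · intro i h1 h2
      simp only
      rw [if_neg (show ¬ (k + 1 + i ≤ k) by omega), if_neg (show ¬ (k + i ≤ k) by omega)]
      split_ifs <;> first | omega | skip
      · rw [show k + 1 + i - (k + 1 + j + 1) = k + i - (k + 1 + j) by omega]; ring
      · ring
      · ring
  · intro i
    refine ⟨?_, ?_, ?_⟩
    · intro j hj
      simp only
      rw [if_pos (show j ≤ l by omega), if_pos (show j + 1 ≤ l by omega),
        if_pos (show j ≤ l by omega), if_pos (show j + 1 ≤ l by omega)]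
      split_ifs <;> first | omega | skip
      · rw [show i + (j + 1) = i + j + 1 by omega]; ring
      · rw [show k + 1 + (j + 1) = k + 1 + j + 1 by omega]; ring
      · ring
    · simp only
      rw [if_neg (show ¬ (l + 1 ≤ l) by omega), if_neg (show ¬ (l + 1 ≤ l) by omega)]
      split_ifs <;> first | rfl | omega
    · intro j h1 h2
      simp only
      rw [if_neg (show ¬ (l + 1 + j ≤ l) by omega), if_neg (show ¬ (l + 1 + j ≤ l) by omega),
        if_neg (show ¬ (l + j ≤ l) by omega), if_neg (show ¬ (l + j ≤ l) by omega)]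
      split_ifs <;> first | omega | skip
      · rw [show l + 1 + j - (l + 1 + i + 1) = l + j - (l + 1 + i) by omega]; ring
      · ring
      · ring

theorem LL_surj (k l : ℕ) (e e' : ℕ → ℕ → ℂ) :
    ∃ y y', Sol (.L k) (.L l) y y' ∧ y k l = e k l ∧ (∀ j, j ≤ l → y' 0 j = e' 0 j) ∧
      (∀ i, i ≤ k → y' i l = e' i l) ∧
      (∀ q, k ≤ q → q + 2 ≤ l → y' k (l + 1 + q) = e' k (l + 1 + q)) ∧
      (∀ p, l ≤ p → p + 2 ≤ k → y' (k + 1 + p) l = e' (k + 1 + p) l) := by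
  refine ⟨_, _, LL_sol k l
    (fun m => if m ≤ l then e' 0 m else if m ≤ k + l then e' (m - l) l else - e k l)
    (fun m => e' k (l + 1 + k + m)) (fun m => e' (k + 1 + l + m) l), ?_, ?_, ?_, ?_, ?_⟩
  · try simp only
    rw [if_pos le_rfl, if_pos le_rfl, if_neg (by omega), if_neg (by omega)]; ring
  · intro j hj
    try simp only
    rw [if_pos (by omega), if_pos hj, if_pos (by omega)]; simp
  · intro i hi
    try simp only
    rw [if_pos hi, if_pos le_rfl]
    split_ifs <;> first | omega | skip
    · rw [show i = 0 by omega]; simp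
    · simp
  · intro q h1 h2
    try simp only
    rw [if_pos le_rfl, if_neg (by omega), if_pos (by omega)]
    congr 1; omega
  · intro q h1 h2
    try simp only
    rw [if_neg (by omega), if_pos le_rfl, if_pos (by omega)]
    congr 1; omega

/-! diagonal blocks -/

theorem diag_inj (c : CanType) {y y' : ℕ → ℕ → ℂ} (h : Sol c c y y')
    (h1 : ∀ p q, p < c.size → q < c.size → diagSupp1 c p q → y p q = 0)
    (h2 : ∀ p q, p < c.size → q < c.size → diagSupp2 c p q → y' p q = 0) :
    ∀ i j, y i j = 0 ∧ y' i j = 0 := by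
  have key : ∀ (k : ℕ) (lam : ℂ) (y y' : ℕ → ℕ → ℂ), Sol (.H k lam) (.H k lam) y y' →
      (∀ p q, (p ≤ q + 1 ∧ q ≤ p + 1) ∧ p + 1 + (q + 1) ≤ k + 1 → y' p q = 0) →
      ∀ i j, y i j = 0 ∧ y' i j = 0 := by
    intro k lam y y' h h2
    refine HH_inj h ?_
    intro _ p hp
    rw [hankel' (HH_hankel h) p 0 (p / 2) (p - p / 2) (by omega) (by omega) (by omega) (by omega)
      (by omega)]
    exact h2 _ _ (by omega)
  cases c with
  | H k lam => exact key k lam y y' h (fun p q hpq => h2 p q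
        (by simp only [CanType.size]; omega) (by simp only [CanType.size]; omega) hpq)
  | K k =>
    intro i j
    exact (key k 0 y' y (Sol.KK.mp h) (fun p q hpq => h1 p q
      (by simp only [CanType.size]; omega) (by simp only [CanType.size]; omega) hpq) i j).symm
  | L k =>
    simp only [CanType.size, diagSupp1, diagSupp2] at h1 h2
    refine LL_inj_aux h (h1 _ _ (by omega) (by omega) (by omega)) ?_
      (fun q _ _ => by omega) (fun q _ _ => by omega)
    intro i j hi hj
    rw [hankel' (LL_hankel h) i j ((i + j) / 2) (i + j - (i + j) / 2) (by omega) (by omega)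
      (by omega) (by omega) (by omega)]
    exact h2 _ _ (by omega) (by omega) (by omega)

theorem diag_surj (c : CanType) (e e' : ℕ → ℕ → ℂ) (he : ∀ i j, e i j = e j i)
    (he' : ∀ i j, e' i j = e' j i) :
    ∃ y y', Sol c c y y' ∧ (∀ i j, y i j = y j i) ∧ (∀ i j, y' i j = y' j i) ∧
    (∀ p q, p < c.size → q < c.size → diagSupp1 c p q → y p q = e p q) ∧
    (∀ p q, p < c.size → q < c.size → diagSupp2 c p q → y' p q = e' p q) := by
  have mid : ∀ (e' : ℕ → ℕ → ℂ), (∀ i j, e' i j = e' j i) → ∀ p q, p ≤ q + 1 → q ≤ p + 1 →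
      e' ((p + q) / 2) (p + q - (p + q) / 2) = e' p q := by
    intro e' he' p q h1 h2
    by_cases hpq : p ≤ q
    · congr 1 <;> omega
    · rw [he' p q]; congr 1 <;> omega
  have key : ∀ (k : ℕ) (lam : ℂ) (e' : ℕ → ℕ → ℂ), (∀ i j, e' i j = e' j i) →
    ∃ y y', Sol (.H k lam) (.H k lam) y y' ∧ (∀ i j, y i j = y j i) ∧ (∀ i j, y' i j = y' j i) ∧
      (∀ p q, (p ≤ q + 1 ∧ q ≤ p + 1) ∧ p + 1 + (q + 1) ≤ k + 1 → y' p q = e' p q) := by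
    intro k lam e' he'
    refine ⟨_, _, hankel_sol k k lam (fun m => if m < k then e' (m / 2) (m - m / 2) else 0) ?_,
      ?_, ?_, ?_⟩
    · intro m hm; exact if_neg (by omega)
    · intro i j; simp only [add_comm i j]
    · intro i j; simp only [add_comm i j]
    · intro p q hpq
      try simp only
      rw [if_pos (by omega)]
      exact mid e' he' p q hpq.1.1 hpq.1.2
  cases c with
  | H k lam =>
    obtain ⟨y, y', hs, a, b, h⟩ := key k lam e' he'
    exact ⟨y, y', hs, a, b, fun p q _ _ hh => hh.elim, fun p q _ _ hh => h p q hh⟩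
  | K k =>
    obtain ⟨y, y', hs, a, b, h⟩ := key k 0 e he
    exact ⟨y', y, Sol.KK.mpr hs, b, a, fun p q _ _ hh => h p q hh, fun p q _ _ hh => hh.elim⟩
  | L k =>
    refine ⟨_, _, LL_sol k k
      (fun m => if m ≤ 2 * k then e' (m / 2) (m - m / 2) else - e k k)
      (fun m => 0) (fun m => 0), ?_, ?_, ?_, ?_⟩
    · intro i j
      simp only [add_comm i j]
      split_ifs <;> first | rfl | simp
    · intro i j
      simp only [add_comm i j]
      split_ifs <;> first | rfl | simp
    · rintro p q _ _ ⟨rfl, rfl⟩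
      try simp only
      rw [if_pos le_rfl, if_pos le_rfl, if_neg (by omega)]; simp
    · rintro p q _ _ ⟨h1, h2, h3⟩
      try simp only
      rw [if_pos h1, if_pos h2, if_pos (by omega)]
      exact mid e' he' p q h3.1 h3.2

theorem off_inj (c d : CanType) {y y' : ℕ → ℕ → ℂ} (h : Sol c d y y')
    (h1 : ∀ p q, p < c.size → q < d.size → offSupp1 c d p q → y p q = 0)
    (h2 : ∀ p q, p < c.size → q < d.size → offSupp2 c d p q → y' p q = 0) :
    ∀ i j, y i j = 0 ∧ y' i j = 0 := by
  have h1' : ∀ p q, offSupp1 c d p q → y p q = 0 := by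
    intro p q hpq
    by_cases hp : c.size ≤ p ∨ d.size ≤ q
    · exact h.s1 _ _ hp
    · push Not at hp; exact h1 p q hp.1 hp.2 hpq
  have h2' : ∀ p q, offSupp2 c d p q → y' p q = 0 := by
    intro p q hpq
    by_cases hp : c.size ≤ p ∨ d.size ≤ q
    · exact h.s2 _ _ hp
    · push Not at hp; exact h2 p q hp.1 hp.2 hpq
  clear h1 h2
  cases c with
  | H k lam =>
    cases d with
    | H l mu => exact HH_inj h fun e p hp => h2' p 0 ⟨e, rfl, hp⟩
    | K l => exact HK_inj h
    | L l => exact HL_inj h fun i => h2' i 0 rfl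
  | K k =>
    cases d with
    | H l mu => exact fun i j => HK_inj h.swap j i
    | K l => exact fun i j => (HH_inj (Sol.KK.mp h) (fun _ p hp => h1' p 0 ⟨rfl, hp⟩) i j).symm
    | L l => exact KL_inj h fun i => h1' i l rfl
  | L k =>
    cases d with
    | H l mu => exact fun i j => HL_inj h.swap (fun i => h2' 0 i rfl) j i
    | K l => exact fun i j => KL_inj h.swap (fun i => h1' k i rfl) j i
    | L l =>
      simp only [offSupp1, offSupp2] at h1' h2'
      exact LL_inj h (h1' _ _ ⟨rfl, rfl⟩) (fun j hj => h2' _ _ (by omega))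
        (fun j hj => h2' _ _ (by omega)) (fun j hj _ => h2' _ _ (by omega))
        (fun j hj _ => h2' _ _ (by omega))

theorem off_surj (c d : CanType) (e e' : ℕ → ℕ → ℂ) :
    ∃ y y', Sol c d y y' ∧
    (∀ p q, p < c.size → q < d.size → offSupp1 c d p q → y p q = e p q) ∧
    (∀ p q, p < c.size → q < d.size → offSupp2 c d p q → y' p q = e' p q) := by
  cases c with
  | H k lam =>
    cases d with
    | H l mu =>
      obtain ⟨y, y', hs, h⟩ := HH_surj k l lam mu e'
      refine ⟨y, y', hs, fun p q _ _ hh => hh.elim, ?_⟩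
      rintro p q _ _ ⟨e, rfl, hp⟩
      exact h e p hp
    | K l => exact ⟨_, _, zero_sol _ _, fun p q _ _ hh => hh.elim, fun p q _ _ hh => hh.elim⟩
    | L l =>
      obtain ⟨y, y', hs, h⟩ := HL_surj k l lam e'
      refine ⟨y, y', hs, fun p q _ _ hh => hh.elim, ?_⟩
      rintro p q hp _ rfl
      exact h p hp
  | K k =>
    cases d with
    | H l mu => exact ⟨_, _, zero_sol _ _, fun p q _ _ hh => hh.elim, fun p q _ _ hh => hh.elim⟩
    | K l =>
      obtain ⟨y, y', hs, h⟩ := HH_surj k l 0 0 e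
      refine ⟨y', y, Sol.KK.mpr hs, ?_, fun p q _ _ hh => hh.elim⟩
      rintro p q _ _ ⟨rfl, hp⟩
      exact h rfl p hp
    | L l =>
      obtain ⟨y, y', hs, h⟩ := KL_surj k l e
      refine ⟨y, y', hs, ?_, fun p q _ _ hh => hh.elim⟩
      rintro p q hp _ rfl
      exact h p hp
  | L k =>
    cases d with
    | H l mu =>
      obtain ⟨y, y', hs, h⟩ := HL_surj l k mu (fun i j => e' j i)
      refine ⟨_, _, hs.swap, fun p q _ _ hh => hh.elim, ?_⟩
      rintro p q _ hq rfl
      exact h q hq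
    | K l =>
      obtain ⟨y, y', hs, h⟩ := KL_surj l k (fun i j => e j i)
      refine ⟨_, _, hs.swap, ?_, fun p q _ _ hh => hh.elim⟩
      rintro p q _ hq rfl
      exact h q hq
    | L l =>
      obtain ⟨y, y', hs, h1, h2, h3, h4, h5⟩ := LL_surj k l e e'
      refine ⟨y, y', hs, ?_, ?_⟩
      · rintro p q _ _ ⟨rfl, rfl⟩
        exact h1
      · rintro p q _ _ (⟨rfl, hq⟩ | ⟨rfl, hp⟩ | ⟨rfl, ha, hb⟩ | ⟨rfl, ha, hb⟩)
        · exact h2 q hq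
        · exact h3 p hp
        · obtain ⟨s, rfl⟩ := Nat.exists_eq_add_of_le (show l + 1 ≤ q by omega)
          exact h4 s (by omega) (by omega)
        · obtain ⟨s, rfl⟩ := Nat.exists_eq_add_of_le (show k + 1 ≤ p by omega)
          exact h5 s (by omega) (by omega)

def extv {n : ℕ} (v : Fin n → ℂ) (i : ℕ) : ℂ := if h : i < n then v ⟨i, h⟩ else 0

theorem extv_lt {n : ℕ} (v : Fin n → ℂ) (i : Fin n) : extv v i = v i := by
  simp [extv]

theorem extv_ge {n : ℕ} (v : Fin n → ℂ) (i : ℕ) (h : n ≤ i) : extv v i = 0 := by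
  unfold extv; rw [dif_neg (by omega)]

theorem sum_extv {n : ℕ} (v : Fin n → ℂ) (a : ℕ) (x : ℂ) :
    ∑ j : Fin n, (if (j : ℕ) = a then x else 0) * v j = x * extv v a := by
  by_cases h : a < n
  · rw [Finset.sum_eq_single ⟨a, h⟩]
    · simp [extv, h]
    · intro b _ hb
      rw [if_neg (fun h' => hb (Fin.ext h'))]; simp
    · simp
  · rw [extv_ge v a (by omega)]
    rw [mul_zero]
    refine Finset.sum_eq_zero fun j _ => ?_
    rw [if_neg (by omega)]; simp

theorem delM_mulVec_s6 {n : ℕ} (v : Fin n → ℂ) (i : Fin n) :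
    (delM n *ᵥ v) i = extv v (n - 1 - i) := by
  rw [← one_mul (extv v _), ← sum_extv]
  simp only [mulVec, dotProduct, delM, Matrix.of_apply]
  refine Finset.sum_congr rfl fun j _ => ?_
  congr 1
  split_ifs <;> first | rfl | omega

theorem lamM_mulVec_s6 {n : ℕ} (lam : ℂ) (v : Fin n → ℂ) (i : Fin n) :
    (lamM n lam *ᵥ v) i = lam * extv v (n - 1 - i) + extv v (n - i) := by
  rw [← one_mul (extv v (n - i)), ← sum_extv, ← sum_extv, ← Finset.sum_add_distrib]
  simp only [mulVec, dotProduct, lamM, Matrix.of_apply]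
  refine Finset.sum_congr rfl fun j _ => ?_
  rw [← add_mul]
  congr 1
  split_ifs <;> first | omega | simp

theorem L1M_apply (n : ℕ) (i j : Fin (2 * n + 1)) :
    L1M n i j = if (i : ℕ) ≤ n then (if (j : ℕ) = i + n + 1 then 1 else 0)
      else (if (j : ℕ) = i - (n + 1) then 1 else 0) := by
  obtain ⟨i, rfl⟩ := (finSumFinEquiv.trans (finCongr (show n + 1 + n = 2 * n + 1 by omega))).surjective i
  obtain ⟨j, rfl⟩ := (finSumFinEquiv.trans (finCongr (show n + 1 + n = 2 * n + 1 by omega))).surjective j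
  unfold L1M
  rw [Matrix.reindex_apply, Matrix.submatrix_apply, Equiv.symm_apply_apply, Equiv.symm_apply_apply]
  rcases i with i | i <;> rcases j with j | j <;> simp [FM] <;> split_ifs <;>
    first | rfl | omega

theorem L2M_apply (n : ℕ) (i j : Fin (2 * n + 1)) :
    L2M n i j = if (i : ℕ) ≤ n then (if (j : ℕ) = if 1 ≤ (i : ℕ) then n + i else 2 * n + 1 then 1 else 0)
      else (if (j : ℕ) = i - n then 1 else 0) := by
  obtain ⟨i, rfl⟩ := (finSumFinEquiv.trans (finCongr (show n + 1 + n = 2 * n + 1 by omega))).surjective i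
  obtain ⟨j, rfl⟩ := (finSumFinEquiv.trans (finCongr (show n + 1 + n = 2 * n + 1 by omega))).surjective j
  unfold L2M
  rw [Matrix.reindex_apply, Matrix.submatrix_apply, Equiv.symm_apply_apply, Equiv.symm_apply_apply]
  rcases i with i | i <;> rcases j with j | j <;> simp [GM] <;> split_ifs <;>
    first | rfl | omega

theorem L1M_mulVec {n : ℕ} (v : Fin (2 * n + 1) → ℂ) (i : Fin (2 * n + 1)) :
    (L1M n *ᵥ v) i = if (i : ℕ) ≤ n then extv v (i + n + 1) else extv v (i - (n + 1)) := by
  simp only [mulVec, dotProduct, L1M_apply]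
  split_ifs
  · rw [sum_extv, one_mul]
  · rw [sum_extv, one_mul]

theorem L2M_mulVec {n : ℕ} (v : Fin (2 * n + 1) → ℂ) (i : Fin (2 * n + 1)) :
    (L2M n *ᵥ v) i = if (i : ℕ) ≤ n then (if 1 ≤ (i : ℕ) then extv v (n + i) else 0)
      else extv v (i - n) := by
  simp only [mulVec, dotProduct, L2M_apply]
  by_cases h : (i : ℕ) ≤ n
  · simp only [if_pos h, sum_extv, one_mul]
    by_cases h1 : 1 ≤ (i : ℕ)
    · simp only [if_pos h1]
    · simp only [if_neg h1]; exact extv_ge _ _ le_rfl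
  · simp only [if_neg h, sum_extv, one_mul]

theorem rowEq_iff (c : CanType) (v v' : Fin c.size → ℂ) :
    c.A *ᵥ v + c.B *ᵥ v' = 0 ↔ RowEq c (extv v) (extv v') := by
  rw [funext_iff]
  cases c with
  | H k lam =>
    change Fin k → ℂ at v v'
    change (∀ i : Fin k, (delM k *ᵥ v) i + (lamM k lam *ᵥ v') i = 0) ↔ (∀ i, i < k → extv v i + lam * extv v' i + extv v' (i + 1) = 0)
    constructor
    · intro h i hi
      have := h ⟨k - 1 - i, by omega⟩
      rw [delM_mulVec_s6, lamM_mulVec_s6] at this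
      simp only [show k - 1 - (k - 1 - i) = i by omega, show k - (k - 1 - i) = i + 1 by omega] at this
      linear_combination this
    · intro h i
      have := h (k - 1 - i) (by omega)
      rw [delM_mulVec_s6, lamM_mulVec_s6]
      rw [show k - 1 - (i : ℕ) + 1 = k - i by omega] at this
      linear_combination this
  | K k =>
    change Fin k → ℂ at v v'
    change (∀ i : Fin k, (lamM k 0 *ᵥ v) i + (delM k *ᵥ v') i = 0) ↔ (∀ i, i < k → extv v (i + 1) + extv v' i = 0)
    constructor
    · intro h i hi
      have := h ⟨k - 1 - i, by omega⟩
      rw [delM_mulVec_s6, lamM_mulVec_s6] at this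
      simp only [show k - 1 - (k - 1 - i) = i by omega, show k - (k - 1 - i) = i + 1 by omega] at this
      linear_combination this
    · intro h i
      have := h (k - 1 - i) (by omega)
      rw [delM_mulVec_s6, lamM_mulVec_s6]
      rw [show k - 1 - (i : ℕ) + 1 = k - i by omega] at this
      linear_combination this
  | L k =>
    change Fin (2 * k + 1) → ℂ at v v'
    change (∀ i : Fin (2 * k + 1), (L1M k *ᵥ v) i + (L2M k *ᵥ v') i = 0) ↔ ((∀ i, i < k → extv v i + extv v' (i + 1) = 0) ∧ extv v (k + 1) = 0 ∧
      ∀ i, 1 ≤ i → i ≤ k → extv v (k + 1 + i) + extv v' (k + i) = 0)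
    constructor
    · intro h
      refine ⟨?_, ?_, ?_⟩
      · intro i hi
        have := h ⟨k + 1 + i, by omega⟩
        rw [L1M_mulVec, L2M_mulVec] at this
        simp only at this
        rw [if_neg (by omega), if_neg (by omega)] at this
        rw [show k + 1 + i - (k + 1) = i by omega, show k + 1 + i - k = i + 1 by omega] at this
        exact this
      · have := h ⟨0, by omega⟩
        rw [L1M_mulVec, L2M_mulVec] at this
        simpa using this
      · intro i h1 h2
        have := h ⟨i, by omega⟩
        rw [L1M_mulVec, L2M_mulVec] at this
        simp only at this
        rw [if_pos h2, if_pos h2, if_pos h1] at this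
        rw [show k + 1 + i = i + k + 1 by omega]
        exact this
    · rintro ⟨h1, h2, h3⟩ i
      rw [L1M_mulVec, L2M_mulVec]
      split_ifs with ha hb
      · have := h3 i hb ha
        rw [show k + 1 + (i : ℕ) = i + k + 1 by omega] at this
        exact this
      · rw [show (i : ℕ) + k + 1 = k + 1 by omega, h2, add_zero]
      · have := h1 (i - (k + 1)) (by omega)
        rw [show (i : ℕ) - (k + 1) + 1 = i - k by omega] at this
        exact this

theorem glob_iff {t : ℕ} (X : Fin t → CanType)
    (Y Y' : Matrix (Σ i, Fin (X i).size) (Σ i, Fin (X i).size) ℂ) :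
    (Matrix.blockDiagonal' fun i => (X i).A) * Y + (Matrix.blockDiagonal' fun i => (X i).B) * Y' = 0
      ↔ ∀ i z, RowEq (X i) (extv fun p => Y ⟨i, p⟩ z) (extv fun p => Y' ⟨i, p⟩ z) := by
  have key : ∀ (M : ∀ i, Matrix (Fin (X i).size) (Fin (X i).size) ℂ)
      (Y : Matrix (Σ i, Fin (X i).size) (Σ i, Fin (X i).size) ℂ) i p z,
      (Matrix.blockDiagonal' M * Y) ⟨i, p⟩ z = (M i *ᵥ fun p => Y ⟨i, p⟩ z) p := by
    intro M Y i p z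
    rw [Matrix.mul_apply, Fintype.sum_sigma, Finset.sum_eq_single i]
    · simp [mulVec, dotProduct, Matrix.blockDiagonal'_apply_eq]
    · intro b _ hb
      refine Finset.sum_eq_zero fun q _ => ?_
      rw [Matrix.blockDiagonal'_apply_ne _ _ _ (Ne.symm hb), zero_mul]
    · simp
  simp only [← rowEq_iff]
  constructor
  · intro h i z
    ext p
    have := congrFun (congrFun h ⟨i, p⟩) z
    rw [Matrix.add_apply, key, key] at this
    exact this
  · intro h
    ext ⟨i, p⟩ z
    rw [Matrix.add_apply, key, key]
    exact congrFun (h i z) p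

def ext2 {m n : ℕ} (Y : Fin m → Fin n → ℂ) (i j : ℕ) : ℂ :=
  if h : i < m ∧ j < n then Y ⟨i, h.1⟩ ⟨j, h.2⟩ else 0

theorem ext2_lt {m n : ℕ} (Y : Fin m → Fin n → ℂ) (i : Fin m) (j : Fin n) :
    ext2 Y i j = Y i j := by simp [ext2]

theorem ext2_row {m n : ℕ} (Y : Fin m → Fin n → ℂ) (j : ℕ) (hj : j < n) :
    (fun i => ext2 Y i j) = extv fun p => Y p ⟨j, hj⟩ := by
  ext i; simp [ext2, extv, hj]

theorem ext2_col {m n : ℕ} (Y : Fin m → Fin n → ℂ) (i : ℕ) (hi : i < m) :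
    (fun j => ext2 Y i j) = extv fun q => Y ⟨i, hi⟩ q := by
  ext j; simp [ext2, extv, hi]

theorem ext2_sup {m n : ℕ} (Y : Fin m → Fin n → ℂ) : Sup m n (ext2 Y) := by
  intro i j h
  unfold ext2
  rw [dif_neg (by omega)]

theorem rowEq_zero (c : CanType) : RowEq c (fun _ => 0) (fun _ => 0) := by
  cases c <;> simp [RowEq]

theorem sol_of {c d : CanType} (Y Y' : Fin c.size → Fin d.size → ℂ)
    (h1 : ∀ j, RowEq c (extv fun p => Y p j) (extv fun p => Y' p j))
    (h2 : ∀ i, RowEq d (extv fun q => Y i q) (extv fun q => Y' i q)) :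
    Sol c d (ext2 Y) (ext2 Y') := by
  refine ⟨ext2_sup Y, ext2_sup Y', ?_, ?_⟩
  · intro j
    by_cases hj : j < d.size
    · rw [ext2_row Y j hj, ext2_row Y' j hj]; exact h1 _
    · have : ∀ Y : Fin c.size → Fin d.size → ℂ, (fun i => ext2 Y i j) = fun _ => 0 :=
        fun Y => funext fun i => ext2_sup Y i j (by omega)
      rw [this, this]; exact rowEq_zero c
  · intro j
    by_cases hj : j < c.size
    · rw [ext2_col Y j hj, ext2_col Y' j hj]; exact h2 _
    · have : ∀ Y : Fin c.size → Fin d.size → ℂ, (fun i => ext2 Y j i) = fun _ => 0 :=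
        fun Y => funext fun i => ext2_sup Y j i (by omega)
      rw [this, this]; exact rowEq_zero d

theorem glob_inj {t : ℕ} (X : Fin t → CanType)
    (Y Y' : Matrix (Σ i, Fin (X i).size) (Σ i, Fin (X i).size) ℂ)
    (hs : Y.IsSymm) (hs' : Y'.IsSymm)
    (h : (Matrix.blockDiagonal' fun i => (X i).A) * Y
      + (Matrix.blockDiagonal' fun i => (X i).B) * Y' = 0)
    (h1 : ∀ i j, (i, j) ∈ canI1 X → Y i j = 0) (h2 : ∀ i j, (i, j) ∈ canI2 X → Y' i j = 0) :
    Y = 0 ∧ Y' = 0 := by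
  rw [glob_iff] at h
  have hsol : ∀ i j, Sol (X i) (X j) (ext2 fun p q => Y ⟨i, p⟩ ⟨j, q⟩)
      (ext2 fun p q => Y' ⟨i, p⟩ ⟨j, q⟩) := by
    intro i j
    refine sol_of _ _ (fun q => h i ⟨j, q⟩) (fun p => ?_)
    have := h j ⟨i, p⟩
    have e1 : (fun q => Y ⟨j, q⟩ ⟨i, p⟩) = fun q => Y ⟨i, p⟩ ⟨j, q⟩ := funext fun q => hs.apply _ _
    have e2 : (fun q => Y' ⟨j, q⟩ ⟨i, p⟩) = fun q => Y' ⟨i, p⟩ ⟨j, q⟩ :=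
      funext fun q => hs'.apply _ _
    rw [e1, e2] at this
    exact this
  have hz : ∀ i j, i ≤ j → ∀ p q, Y ⟨i, p⟩ ⟨j, q⟩ = 0 ∧ Y' ⟨i, p⟩ ⟨j, q⟩ = 0 := by
    intro i j hij p q
    rcases hij.eq_or_lt with rfl | hlt
    · have := diag_inj _ (hsol i i) ?_ ?_ p q
      · rw [ext2_lt, ext2_lt] at this; exact this
      · intro a b ha hb hab
        have := h1 ⟨i, ⟨a, ha⟩⟩ ⟨i, ⟨b, hb⟩⟩ (Or.inl ⟨rfl, hab⟩)
        simpa [ext2, ha, hb] using this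
      · intro a b ha hb hab
        have := h2 ⟨i, ⟨a, ha⟩⟩ ⟨i, ⟨b, hb⟩⟩ (Or.inl ⟨rfl, hab⟩)
        simpa [ext2, ha, hb] using this
    · have := off_inj _ _ (hsol i j) ?_ ?_ p q
      · rw [ext2_lt, ext2_lt] at this; exact this
      · intro a b ha hb hab
        have := h1 ⟨i, ⟨a, ha⟩⟩ ⟨j, ⟨b, hb⟩⟩ (Or.inr (Or.inl ⟨hlt, hab⟩))
        simpa [ext2, ha, hb] using this
      · intro a b ha hb hab
        have := h2 ⟨i, ⟨a, ha⟩⟩ ⟨j, ⟨b, hb⟩⟩ (Or.inr (Or.inl ⟨hlt, hab⟩))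
        simpa [ext2, ha, hb] using this
  have hz' : ∀ a b, Y a b = 0 ∧ Y' a b = 0 := by
    rintro ⟨i, p⟩ ⟨j, q⟩
    rcases le_total i j with hij | hij
    · exact hz i j hij p q
    · rw [← hs.apply, ← hs'.apply]; exact hz j i hij q p
  exact ⟨by ext a b; exact (hz' a b).1, by ext a b; exact (hz' a b).2⟩

theorem ext_of_sup {m n : ℕ} {y : ℕ → ℕ → ℂ} (h : Sup m n y) (j : Fin n) :
    (extv fun p : Fin m => y p j) = fun i => y i j := by
  ext i
  unfold extv
  split_ifs with hi
  · rfl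
  · exact (h i j (by omega)).symm

theorem ext_of_sup' {m n : ℕ} {y : ℕ → ℕ → ℂ} (h : Sup m n y) (i : Fin m) :
    (extv fun q : Fin n => y i q) = fun j => y i j := by
  ext j
  unfold extv
  split_ifs with hi
  · rfl
  · exact (h i j (by omega)).symm

theorem glob_surj {t : ℕ} (X : Fin t → CanType)
    (E E' : Matrix (Σ i, Fin (X i).size) (Σ i, Fin (X i).size) ℂ)
    (hE : E.IsSymm) (hE' : E'.IsSymm) :
    ∃ Y Y' : Matrix (Σ i, Fin (X i).size) (Σ i, Fin (X i).size) ℂ, Y.IsSymm ∧ Y'.IsSymm ∧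
    (Matrix.blockDiagonal' fun i => (X i).A) * Y
      + (Matrix.blockDiagonal' fun i => (X i).B) * Y' = 0 ∧
    (∀ i j, (i, j) ∈ canI1 X → Y i j = E i j) ∧ (∀ i j, (i, j) ∈ canI2 X → Y' i j = E' i j) := by
  choose yo yo' ho ho1 ho2 using fun i j => off_surj (X i) (X j)
    (ext2 fun p q => E ⟨i, p⟩ ⟨j, q⟩) (ext2 fun p q => E' ⟨i, p⟩ ⟨j, q⟩)
  have hsym : ∀ E : Matrix (Σ i, Fin (X i).size) (Σ i, Fin (X i).size) ℂ, E.IsSymm → ∀ i a b, 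
      ext2 (fun p q => E ⟨i, p⟩ ⟨i, q⟩) a b = ext2 (fun p q => E ⟨i, p⟩ ⟨i, q⟩) b a := by
    intro E hE i a b
    unfold ext2
    split_ifs <;> first | omega | rfl | exact hE.apply _ _
  choose yd yd' hd hds hds' hd1 hd2 using fun i => diag_surj (X i)
    (ext2 fun p q => E ⟨i, p⟩ ⟨i, q⟩) (ext2 fun p q => E' ⟨i, p⟩ ⟨i, q⟩) (hsym E hE i) (hsym E' hE' i)
  let y : Fin t → Fin t → ℕ → ℕ → ℂ := fun i j p q =>
    if i < j then yo i j p q else if j < i then yo j i q p else yd i p q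
  let y' : Fin t → Fin t → ℕ → ℕ → ℂ := fun i j p q =>
    if i < j then yo' i j p q else if j < i then yo' j i q p else yd' i p q
  have ysym : ∀ i j p q, y j i q p = y i j p q ∧ y' j i q p = y' i j p q := by
    intro i j p q
    simp only [y, y']
    rcases lt_trichotomy i j with h | h | h
    · simp [h, h.not_gt]
    · subst h; simp [hds i p q, hds' i p q]
    · simp [h, h.not_gt]
  have hsol : ∀ i j, Sol (X i) (X j) (y i j) (y' i j) := by
    intro i j
    rcases lt_trichotomy i j with h | h | h
    · have := ho i j
      convert this using 1 <;> (ext; simp [y, y', h])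
    · subst h
      have := hd i
      convert this using 1 <;> (ext; simp [y, y'])
    · have := (ho j i).swap
      convert this using 1 <;> (ext; simp [y, y', h, h.not_gt])
  refine ⟨Matrix.of fun a b => y a.1 b.1 a.2 b.2, Matrix.of fun a b => y' a.1 b.1 a.2 b.2,
    ?_, ?_, ?_, ?_, ?_⟩
  · ext a b; exact (ysym _ _ _ _).1
  · ext a b; exact (ysym _ _ _ _).2
  · rw [glob_iff]
    rintro i ⟨j, q⟩
    simp only [Matrix.of_apply]
    rw [ext_of_sup (hsol i j).s1, ext_of_sup (hsol i j).s2]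
    exact (hsol i j).row q
  · rintro ⟨i, p⟩ ⟨j, q⟩ (⟨h, hh⟩ | ⟨h, hh⟩ | ⟨h, hh⟩)
    · simp only at h hh
      subst h
      simp only [Matrix.of_apply, y, lt_irrefl, if_false]
      rw [hd1 i p q p.2 q.2 hh, ext2_lt]
    · simp only at h hh
      simp only [Matrix.of_apply, y, if_pos h]
      rw [ho1 i j p q p.2 q.2 hh, ext2_lt]
    · simp only at h hh
      simp only [Matrix.of_apply, y, if_pos h, if_neg h.not_gt]
      rw [ho1 j i q p q.2 p.2 hh, ext2_lt]; exact hE.apply _ _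
  · rintro ⟨i, p⟩ ⟨j, q⟩ (⟨h, hh⟩ | ⟨h, hh⟩ | ⟨h, hh⟩)
    · simp only at h hh
      subst h
      simp only [Matrix.of_apply, y', lt_irrefl, if_false]
      rw [hd2 i p q p.2 q.2 hh, ext2_lt]
    · simp only at h hh
      simp only [Matrix.of_apply, y', if_pos h]
      rw [ho2 i j p q p.2 q.2 hh, ext2_lt]
    · simp only at h hh
      simp only [Matrix.of_apply, y', if_pos h, if_neg h.not_gt]
      rw [ho2 j i q p q.2 p.2 hh, ext2_lt]; exact hE'.apply _ _

theorem congMap_symm {ι : Type} [Fintype ι] {A B : Matrix ι ι ℂ} (hA : A.IsSymm) (hB : B.IsSymm)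
    (C : Matrix ι ι ℂ) : congMap A B C ∈ SymPair ι := by
  constructor
  · simp only [congMap, LinearMap.coe_mk, AddHom.coe_mk, Matrix.IsSymm, transpose_add,
      transpose_mul, transpose_transpose, hA.eq]
    exact add_comm _ _
  · simp only [congMap, LinearMap.coe_mk, AddHom.coe_mk, Matrix.IsSymm, transpose_add,
      transpose_mul, transpose_transpose, hB.eq]
    exact add_comm _ _

theorem trace_cong {ι : Type} [Fintype ι] {A Y : Matrix ι ι ℂ} (hA : A.IsSymm)
    (hY : Y.IsSymm) (C : Matrix ι ι ℂ) :
    (Y * (Cᵀ * A + A * C)).trace = 2 * (A * Y * Cᵀ).trace := by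
  rw [Matrix.mul_add, trace_add, two_mul]
  congr 1
  · rw [← Matrix.mul_assoc, trace_mul_comm, Matrix.mul_assoc]
  · rw [← trace_transpose]
    simp only [transpose_mul, hA.eq, hY.eq]
    rw [trace_mul_comm, ← Matrix.mul_assoc, trace_mul_comm, Matrix.mul_assoc]

theorem pairing_cong {ι : Type} [Fintype ι] {A B Y Y' : Matrix ι ι ℂ} (hA : A.IsSymm)
    (hB : B.IsSymm) (hY : Y.IsSymm) (hY' : Y'.IsSymm) (C : Matrix ι ι ℂ) :
    (Y * (congMap A B C).1).trace + (Y' * (congMap A B C).2).trace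
      = 2 * ((A * Y + B * Y') * Cᵀ).trace := by
  simp only [congMap, LinearMap.coe_mk, AddHom.coe_mk]
  rw [trace_cong hA hY, trace_cong hB hY', Matrix.add_mul, trace_add]; ring

theorem dual_decomp {ι : Type} [Fintype ι] [DecidableEq ι] {A B : Matrix ι ι ℂ} (hA : A.IsSymm)
    (hB : B.IsSymm) (I1 I2 : Set (ι × ι)) (hI1 : ∀ i j, (i, j) ∈ I1 → (j, i) ∈ I1)
    (hI2 : ∀ i j, (i, j) ∈ I2 → (j, i) ∈ I2)
    (inj : ∀ Y Y' : Matrix ι ι ℂ, Y.IsSymm → Y'.IsSymm → A * Y + B * Y' = 0 →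
      (∀ i j, (i, j) ∈ I1 → Y i j = 0) → (∀ i j, (i, j) ∈ I2 → Y' i j = 0) → Y = 0 ∧ Y' = 0)
    (surj : ∀ E E' : Matrix ι ι ℂ, E.IsSymm → E'.IsSymm → ∃ Y Y' : Matrix ι ι ℂ,
      Y.IsSymm ∧ Y'.IsSymm ∧ A * Y + B * Y' = 0 ∧
      (∀ i j, (i, j) ∈ I1 → Y i j = E i j) ∧ (∀ i j, (i, j) ∈ I2 → Y' i j = E' i j)) :
    Disjoint (TSpace A B) (Pattern I1 I2) ∧ TSpace A B ⊔ Pattern I1 I2 = SymPair ι := by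
  constructor
  · rw [Submodule.disjoint_def]
    rintro x ⟨C, rfl⟩ ⟨hx1, hx2, hx3, hx4⟩
    set x := congMap A B C with hx
    obtain ⟨Y, Y', hY, hY', h0, h1, h2⟩ := surj (x.1.map star) (x.2.map star)
      (by ext i j; simp [hx1.apply]) (by ext i j; simp [hx2.apply])
    have hp := pairing_cong hA hB hY hY' C
    rw [h0, Matrix.zero_mul, trace_zero, mul_zero, ← hx] at hp
    have key : ∀ (I : Set (ι × ι)) (Y M : Matrix ι ι ℂ), M.IsSymm →
        (∀ i j, (i, j) ∉ I → M i j = 0) → (∀ i j, (i, j) ∈ I → Y i j = (M.map star) i j) →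
        (Y * M).trace = ((∑ i, ∑ j, ‖M i j‖ ^ 2 : ℝ) : ℂ) := by
      intro I Y M hM hM0 hYM
      simp only [trace, diag_apply, Matrix.mul_apply]
      push_cast
      refine Finset.sum_congr rfl fun i _ => Finset.sum_congr rfl fun j _ => ?_
      rw [hM.apply]
      by_cases h : (i, j) ∈ I
      · rw [hYM i j h]; simp [Complex.conj_mul']
      · simp [hM0 i j h]
    rw [key I1 Y x.1 hx1 hx3 h1, key I2 Y' x.2 hx2 hx4 h2, ← Complex.ofReal_add,
      Complex.ofReal_eq_zero] at hp
    have nn : ∀ M : Matrix ι ι ℂ, 0 ≤ ∑ i, ∑ j, ‖M i j‖ ^ 2 := fun M =>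
      Finset.sum_nonneg fun i _ => Finset.sum_nonneg fun j _ => by positivity
    have zz : ∀ M : Matrix ι ι ℂ, ∑ i, ∑ j, ‖M i j‖ ^ 2 = 0 → M = 0 := by
      intro M hM
      ext i j
      rw [Finset.sum_eq_zero_iff_of_nonneg
        (fun i _ => Finset.sum_nonneg fun j _ => by positivity)] at hM
      have := hM i (Finset.mem_univ _)
      rw [Finset.sum_eq_zero_iff_of_nonneg (fun i _ => by positivity)] at this
      have := this j (Finset.mem_univ _)
      simpa using this
    have n1 := nn x.1
    have n2 := nn x.2
    exact Prod.ext (zz _ (by linarith)) (zz _ (by linarith))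
  · apply le_antisymm
    · refine sup_le ?_ (Pattern_le _ _)
      rintro _ ⟨C, rfl⟩
      exact congMap_symm hA hB C
    · intro M hM
      by_contra hn
      obtain ⟨f, hf, hker⟩ := Submodule.exists_le_ker_of_notMem hn
      apply hf
      set Z : Matrix ι ι ℂ := Matrix.of fun i j => f (Matrix.single i j 1, 0) with hZ
      set Z' : Matrix ι ι ℂ := Matrix.of fun i j => f (0, Matrix.single i j 1) with hZ'
      have tr : ∀ (Z M : Matrix ι ι ℂ), M.IsSymm →
          ((Z + Zᵀ) * M).trace = 2 * ∑ i, ∑ j, M i j * Z i j := by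
        intro Z M hM
        have : (Zᵀ * M).trace = (Z * M).trace := by
          rw [← trace_transpose, transpose_mul, transpose_transpose, hM.eq, trace_mul_comm]
        rw [Matrix.add_mul, trace_add, this, ← two_mul]
        congr 1
        simp only [trace, diag_apply, Matrix.mul_apply]
        refine Finset.sum_congr rfl fun i _ => Finset.sum_congr rfl fun j _ => ?_
        rw [hM.apply, mul_comm]
      have f1 : ∀ N : Matrix ι ι ℂ, f (N, 0) = ∑ i, ∑ j, N i j * Z i j := by
        intro N
        let g : Matrix ι ι ℂ →ₗ[ℂ] ℂ := f ∘ₗ LinearMap.inl ℂ _ _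
        change g N = _
        conv_lhs => rw [matrix_eq_sum_single N]
        simp only [map_sum]
        refine Finset.sum_congr rfl fun i _ => Finset.sum_congr rfl fun j _ => ?_
        rw [← mul_one (N i j), ← smul_eq_mul, ← Matrix.smul_single, map_smul]
        simp [g, hZ]
      have f2 : ∀ N : Matrix ι ι ℂ, f (0, N) = ∑ i, ∑ j, N i j * Z' i j := by
        intro N
        let g : Matrix ι ι ℂ →ₗ[ℂ] ℂ := f ∘ₗ LinearMap.inr ℂ _ _
        change g N = _
        conv_lhs => rw [matrix_eq_sum_single N]
        simp only [map_sum]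
        refine Finset.sum_congr rfl fun i _ => Finset.sum_congr rfl fun j _ => ?_
        rw [← mul_one (N i j), ← smul_eq_mul, ← Matrix.smul_single, map_smul]
        simp [g, hZ']
      have ff : ∀ N : Matrix ι ι ℂ × Matrix ι ι ℂ, N ∈ SymPair ι →
          ((Z + Zᵀ) * N.1).trace + ((Z' + Z'ᵀ) * N.2).trace = 2 * f N := by
        intro N hN
        rw [tr Z _ hN.1, tr Z' _ hN.2, ← f1, ← f2, ← mul_add, ← map_add]
        simp
      have sZ : (Z + Zᵀ).IsSymm := by ext i j; simp [add_comm]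
      have sZ' : (Z' + Z'ᵀ).IsSymm := by ext i j; simp [add_comm]
      have hzero := inj (Z + Zᵀ) (Z' + Z'ᵀ) sZ sZ' ?_ ?_ ?_
      · have := ff M hM
        rw [hzero.1, hzero.2] at this
        simpa using this.symm
      · rw [Matrix.ext_iff_trace_mul_right]
        intro C
        have h1 := pairing_cong hA hB sZ sZ' Cᵀ
        rw [ff _ (congMap_symm hA hB _), transpose_transpose,
          show f (congMap A B Cᵀ) = 0 from
            hker (Submodule.mem_sup_left ⟨_, rfl⟩)] at h1
        rw [Matrix.zero_mul, trace_zero]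
        simpa using h1.symm
      · intro i j hij
        have hm : ((Matrix.single i j 1 + Matrix.single j i 1 : Matrix ι ι ℂ),
            (0 : Matrix ι ι ℂ)) ∈ Pattern I1 I2 := by
          refine ⟨?_, Matrix.isSymm_zero, ?_, fun _ _ _ => rfl⟩
          · simp [Matrix.IsSymm, add_comm]
          · intro a b hab
            simp only [Matrix.add_apply, Matrix.single_apply]
            rw [if_neg, if_neg, add_zero]
            · rintro ⟨rfl, rfl⟩; exact hab (hI1 _ _ hij)
            · rintro ⟨rfl, rfl⟩; exact hab hij
        have := ff _ (Pattern_le _ _ hm)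
        rw [show f _ = 0 from hker (Submodule.mem_sup_right hm)] at this
        simp only [Matrix.mul_add, Matrix.mul_zero, trace_zero, trace_add, trace_mul_single] at this
        simp only [MulOpposite.op_one, one_smul] at this
        rw [sZ.apply i j] at this
        have h3 : 2 * (Z + Zᵀ) i j = 0 := by linear_combination this
        simpa using h3
      · intro i j hij
        have hm : ((0 : Matrix ι ι ℂ), (Matrix.single i j 1 + Matrix.single j i 1 : Matrix ι ι ℂ))
             ∈ Pattern I1 I2 := by
          refine ⟨Matrix.isSymm_zero, ?_, fun _ _ _ => rfl, ?_⟩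
          · simp [Matrix.IsSymm, add_comm]
          · intro a b hab
            simp only [Matrix.add_apply, Matrix.single_apply]
            rw [if_neg, if_neg, add_zero]
            · rintro ⟨rfl, rfl⟩; exact hab (hI2 _ _ hij)
            · rintro ⟨rfl, rfl⟩; exact hab hij
        have := ff _ (Pattern_le _ _ hm)
        rw [show f _ = 0 from hker (Submodule.mem_sup_right hm)] at this
        simp only [Matrix.mul_add, Matrix.mul_zero, trace_zero, trace_add, trace_mul_single] at this
        simp only [MulOpposite.op_one, one_smul] at this
        rw [sZ'.apply i j] at this
        have h3 : 2 * (Z' + Z'ᵀ) i j = 0 := by linear_combination this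
        simpa using h3

theorem main_decomp {t : ℕ} (X : Fin t → CanType) :
    Disjoint
        (TSpace (Matrix.blockDiagonal' fun i => (X i).A)
          (Matrix.blockDiagonal' fun i => (X i).B))
        (Pattern (canI1 X) (canI2 X)) ∧
      TSpace (Matrix.blockDiagonal' fun i => (X i).A)
          (Matrix.blockDiagonal' fun i => (X i).B) ⊔
        Pattern (canI1 X) (canI2 X) = SymPair (Σ i, Fin (X i).size) := by
  have d1 : ∀ c p q, diagSupp1 c p q → diagSupp1 c q p := by
    intro c p q h
    cases c <;> simp only [diagSupp1] at h ⊢ <;> omega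
  have d2 : ∀ c p q, diagSupp2 c p q → diagSupp2 c q p := by
    intro c p q h
    cases c <;> simp only [diagSupp2] at h ⊢ <;> omega
  refine dual_decomp (blockDiagonal'_isSymm _ fun i => canA_isSymm (X i))
    (blockDiagonal'_isSymm _ fun i => canB_isSymm (X i)) _ _ ?_ ?_
    (fun Y Y' h1 h2 h3 h4 h5 => glob_inj X Y Y' h1 h2 h3 h4 h5) (glob_surj X)
  · rintro ⟨i, p⟩ ⟨j, q⟩ (⟨h, hh⟩ | h | h)
    · simp only at h hh; subst h; exact Or.inl ⟨rfl, d1 _ _ _ hh⟩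
    · exact Or.inr (Or.inr h)
    · exact Or.inr (Or.inl h)
  · rintro ⟨i, p⟩ ⟨j, q⟩ (⟨h, hh⟩ | h | h)
    · simp only at h hh; subst h; exact Or.inl ⟨rfl, d2 _ _ _ hh⟩
    · exact Or.inr (Or.inr h)
    · exact Or.inr (Or.inl h)

theorem hasDerivAt_line {E : Type*} [NormedAddCommGroup E] [NormedSpace ℂ E] (v : E) :
    HasDerivAt (fun t : ℂ => t • v) v 0 := by
  simpa using (hasDerivAt_id (0 : ℂ)).smul_const v

theorem hasDerivAt_line_add {E : Type*} [NormedAddCommGroup E] [NormedSpace ℂ E] (w v : E) :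
    HasDerivAt (fun t : ℂ => w + t • v) v 0 :=
  (hasDerivAt_line v).const_add w

theorem exists_local_inv {S : Type*} [NormedAddCommGroup S] [NormedSpace ℂ S]
    [FiniteDimensional ℂ S] (Ψ : S → S) (h : AnalyticAt ℂ Ψ 0) (h0 : Ψ 0 = 0)
    (hd : ∀ v, HasDerivAt (fun t : ℂ => Ψ (t • v)) v 0) :
    ∃ g : S → S, AnalyticAt ℂ g 0 ∧ g 0 = 0 ∧ ∀ᶠ y in nhds (0 : S), Ψ (g y) = y := by
  have : CompleteSpace S := FiniteDimensional.complete ℂ S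
  have hfd : fderiv ℂ Ψ 0 = ContinuousLinearMap.id ℂ S := by
    ext v
    have h1 : HasFDerivAt Ψ (fderiv ℂ Ψ 0) ((0 : ℂ) • v) := by
      rw [zero_smul]; exact h.differentiableAt.hasFDerivAt
    have h2 : HasDerivAt (fun t : ℂ => t • v) v 0 := by
      simpa using (hasDerivAt_id (0 : ℂ)).smul_const v
    have h3 := h1.comp_hasDerivAt (0 : ℂ) h2
    exact h3.unique (hd v)
  have hF : HasFDerivAt Ψ ((ContinuousLinearEquiv.refl ℂ S : S ≃L[ℂ] S) : S →L[ℂ] S) 0 := by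
    have := h.differentiableAt.hasFDerivAt
    rw [hfd] at this
    exact this
  have hc : ContDiffAt ℂ (⊤ : WithTop ℕ∞) Ψ 0 := h.contDiffAt
  have hn : (⊤ : WithTop ℕ∞) ≠ 0 := by simp
  refine ⟨hc.localInverse hF hn, ?_, ?_, ?_⟩
  · have := hc.to_localInverse hF hn
    rw [h0] at this
    exact this.analyticAt
  · have := hc.localInverse_apply_image hF hn
    rwa [h0] at this
  · have := (hc.hasStrictFDerivAt' hF hn).eventually_right_inverse
    rw [h0] at this
    exact this

theorem analyticAt_mat {ι : Type} [Fintype ι] {E : Type*} [NormedAddCommGroup E]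
    [NormedSpace ℂ E] {f : E → Matrix ι ι ℂ} {x : E} :
    AnalyticAt ℂ f x ↔ ∀ i j, AnalyticAt ℂ (fun p => f p i j) x := by
  have h1 : AnalyticAt ℂ f x ↔ ∀ i, AnalyticAt ℂ (fun p => f p i) x :=
    analyticAt_pi_iff (f := fun i p => f p i)
  rw [h1]
  refine forall_congr' fun i => ?_
  exact analyticAt_pi_iff (f := fun j p => f p i j)

theorem analyticAt_mat_mul {ι : Type} [Fintype ι] {E : Type*} [NormedAddCommGroup E]
    [NormedSpace ℂ E] {f g : E → Matrix ι ι ℂ} {x : E} (hf : AnalyticAt ℂ f x)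
    (hg : AnalyticAt ℂ g x) : AnalyticAt ℂ (fun p => f p * g p) x := by
  rw [analyticAt_mat] at *
  intro i j
  simp only [Matrix.mul_apply]
  exact Finset.analyticAt_fun_sum _ fun k _ => (hf i k).mul (hg k j)

theorem analyticAt_mat_tr {ι : Type} [Fintype ι] {E : Type*} [NormedAddCommGroup E]
    [NormedSpace ℂ E] {f : E → Matrix ι ι ℂ} {x : E} (hf : AnalyticAt ℂ f x) :
    AnalyticAt ℂ (fun p => (f p)ᵀ) x := by
  rw [analyticAt_mat] at *
  exact fun i j => hf j i

theorem hasDerivAt_mat {ι : Type} [Fintype ι] {f : ℂ → Matrix ι ι ℂ} {f' : Matrix ι ι ℂ} {x : ℂ} :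
    HasDerivAt f f' x ↔ ∀ i j, HasDerivAt (fun p => f p i j) (f' i j) x := by
  have h1 : HasDerivAt f f' x ↔ ∀ i, HasDerivAt (fun p => f p i) (f' i) x :=
    hasDerivAt_pi (φ := f)
  rw [h1]
  refine forall_congr' fun i => ?_
  exact hasDerivAt_pi (φ := fun p => f p i)

theorem hasDerivAt_mat_mul {ι : Type} [Fintype ι] {f g : ℂ → Matrix ι ι ℂ}
    {f' g' : Matrix ι ι ℂ} {x : ℂ} (hf : HasDerivAt f f' x) (hg : HasDerivAt g g' x) :
    HasDerivAt (fun p => f p * g p) (f' * g x + f x * g') x := by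
  rw [hasDerivAt_mat] at *
  intro i j
  simp only [Matrix.mul_apply, Matrix.add_apply, ← Finset.sum_add_distrib]
  exact HasDerivAt.fun_sum fun k _ => (hf i k).mul (hg k j)

theorem hasDerivAt_mat_tr {ι : Type} [Fintype ι] {f : ℂ → Matrix ι ι ℂ}
    {f' : Matrix ι ι ℂ} {x : ℂ} (hf : HasDerivAt f f' x) :
    HasDerivAt (fun p => (f p)ᵀ) f'ᵀ x := by
  rw [hasDerivAt_mat] at *
  exact fun i j => hf j i

/-- derivative of a congruence family at a point where the transformation is `1` -/
theorem hasDerivAt_cong {ι : Type} [Fintype ι] [DecidableEq ι] {I f : ℂ → Matrix ι ι ℂ}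
    {I' f' : Matrix ι ι ℂ} {x : ℂ} (hI : HasDerivAt I I' x) (h1 : I x = 1)
    (hf : HasDerivAt f f' x) :
    HasDerivAt (fun p => (I p)ᵀ * f p * I p) (I'ᵀ * f x + f x * I' + f') x := by
  have := hasDerivAt_mat_mul (hasDerivAt_mat_mul (hasDerivAt_mat_tr hI) hf) hI
  convert! this using 1
  rw [h1]; simp; abel

/-- symmetrization -/
def symProj (ι : Type) [Fintype ι] : Matrix ι ι ℂ × Matrix ι ι ℂ →ₗ[ℂ] SymPair ι where
  toFun p := ⟨((1/2 : ℂ) • (p.1 + p.1ᵀ), (1/2 : ℂ) • (p.2 + p.2ᵀ)), by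
    constructor
    · show ((1/2 : ℂ) • (p.1 + p.1ᵀ))ᵀ = _
      simp [add_comm]
    · show ((1/2 : ℂ) • (p.2 + p.2ᵀ))ᵀ = _
      simp [add_comm]⟩
  map_add' p q := by
    apply Subtype.ext
    simp only [Submodule.coe_add, Prod.fst_add, Prod.snd_add, transpose_add, Prod.mk_add_mk,
      ← smul_add]
    congr 2 <;> abel
  map_smul' c p := by
    apply Subtype.ext
    simp only [Submodule.coe_smul, Prod.smul_fst, Prod.smul_snd, transpose_smul, Prod.smul_mk,
      ← smul_add, RingHom.id_apply]
    rw [smul_comm, smul_comm (1/2 : ℂ) c (p.2 + p.2ᵀ)]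

theorem symProj_of_symm {ι : Type} [Fintype ι] {p : Matrix ι ι ℂ × Matrix ι ι ℂ}
    (hp : p ∈ SymPair ι) : (symProj ι p : Matrix ι ι ℂ × Matrix ι ι ℂ) = p := by
  have h1 : p.1ᵀ = p.1 := hp.1
  have h2 : p.2ᵀ = p.2 := hp.2
  show ((1/2 : ℂ) • (p.1 + p.1ᵀ), (1/2 : ℂ) • (p.2 + p.2ᵀ)) = p
  rw [h1, h2, ← two_smul ℂ p.1, ← two_smul ℂ p.2, smul_smul, smul_smul]
  norm_num

theorem cong_symm {ι : Type} [Fintype ι] {A C : Matrix ι ι ℂ} (hA : A.IsSymm) :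
    (Cᵀ * A * C).IsSymm := by
  unfold Matrix.IsSymm
  simp [transpose_mul, hA.eq, Matrix.mul_assoc]

theorem versal_of_decomp {ι : Type} [Fintype ι] [DecidableEq ι] (A B : Matrix ι ι ℂ)
    (hA : A.IsSymm) (hB : B.IsSymm) (D : Submodule ℂ (Matrix ι ι ℂ × Matrix ι ι ℂ))
    (hD : D ≤ SymPair ι) (h2 : TSpace A B ⊔ D = SymPair ι) :
    IsVersal (patternDeformation A B hA hB D hD) := by
  -- linear section
  let L : Matrix ι ι ℂ × D →ₗ[ℂ] SymPair ι :=
    (symProj ι).comp ((congMap A B).coprod D.subtype)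
  have hLmem : ∀ z : Matrix ι ι ℂ × D, congMap A B z.1 + (z.2 : _ × _) ∈ SymPair ι :=
    fun z => (SymPair ι).add_mem (congMap_symm hA hB z.1) (hD z.2.2)
  have hLval : ∀ z : Matrix ι ι ℂ × D, (L z : Matrix ι ι ℂ × Matrix ι ι ℂ)
      = congMap A B z.1 + (z.2 : _ × _) := fun z => symProj_of_symm (hLmem z)
  have hLs : LinearMap.range L = ⊤ := by
    rw [LinearMap.range_eq_top]
    rintro ⟨x, hx⟩
    have hx' := hx
    rw [← h2, Submodule.mem_sup] at hx'
    obtain ⟨_, ⟨C, rfl⟩, p, hp, rfl⟩ := hx'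
    exact ⟨(C, ⟨p, hp⟩), Subtype.ext (hLval _)⟩
  obtain ⟨s, hs⟩ := L.exists_rightInverse_of_surjective hLs
  have hsx : ∀ x : SymPair ι, congMap A B (s x).1 + ((s x).2 : _ × _) =
      (x : Matrix ι ι ℂ × Matrix ι ι ℂ) := by
    intro x
    rw [← hLval]
    have := LinearMap.congr_fun hs x
    exact congrArg Subtype.val this
  let sI : SymPair ι →L[ℂ] Matrix ι ι ℂ :=
    LinearMap.toContinuousLinearMap ((LinearMap.fst ℂ _ _).comp s)
  let sP : SymPair ι →L[ℂ] D := LinearMap.toContinuousLinearMap ((LinearMap.snd ℂ _ _).comp s)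
  let s1 : SymPair ι →L[ℂ] Matrix ι ι ℂ := LinearMap.toContinuousLinearMap
    ((LinearMap.fst ℂ _ _).comp (D.subtype.comp ((LinearMap.snd ℂ _ _).comp s)))
  let s2 : SymPair ι →L[ℂ] Matrix ι ι ℂ := LinearMap.toContinuousLinearMap
    ((LinearMap.snd ℂ _ _).comp (D.subtype.comp ((LinearMap.snd ℂ _ _).comp s)))
  have e1 : ∀ x, ((sP x : D) : Matrix ι ι ℂ × Matrix ι ι ℂ).1 = s1 x := fun x => rfl
  have e2 : ∀ x, ((sP x : D) : Matrix ι ι ℂ × Matrix ι ι ℂ).2 = s2 x := fun x => rfl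
  let π : Matrix ι ι ℂ × Matrix ι ι ℂ →L[ℂ] SymPair ι :=
    LinearMap.toContinuousLinearMap (symProj ι)
  let F : SymPair ι → Matrix ι ι ℂ × Matrix ι ι ℂ := fun x =>
    ((1 + sI x)ᵀ * (A + s1 x) * (1 + sI x), (1 + sI x)ᵀ * (B + s2 x) * (1 + sI x))
  have hFs : ∀ x, F x ∈ SymPair ι := fun x =>
    ⟨cong_symm (hA.add (hD (sP x).2).1), cong_symm (hB.add (hD (sP x).2).2)⟩
  have hF0 : F 0 = (A, B) := by simp [F]
  have hAB : (A, B) ∈ SymPair ι := ⟨hA, hB⟩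
  let Ψ : SymPair ι → SymPair ι := fun x => π (F x - (A, B))
  have hΨ0 : Ψ 0 = 0 := by simp [Ψ, hF0]
  have hΨv : ∀ x, (Ψ x : Matrix ι ι ℂ × Matrix ι ι ℂ) = F x - (A, B) := fun x =>
    symProj_of_symm ((SymPair ι).sub_mem (hFs x) hAB)
  have aI : ∀ x, AnalyticAt ℂ (fun x => 1 + sI x) x := fun x =>
    analyticAt_const.add (sI.analyticAt x)
  have hFa : AnalyticAt ℂ F 0 := by
    apply AnalyticAt.prod
    · exact analyticAt_mat_mul (analyticAt_mat_mul (analyticAt_mat_tr (aI 0))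
        (analyticAt_const.add (s1.analyticAt 0))) (aI 0)
    · exact analyticAt_mat_mul (analyticAt_mat_mul (analyticAt_mat_tr (aI 0))
        (analyticAt_const.add (s2.analyticAt 0))) (aI 0)
  have hΨa : AnalyticAt ℂ Ψ 0 :=
    (π.analyticAt _).comp (hFa.sub analyticAt_const)
  have hline : ∀ (M : Matrix ι ι ℂ) (T : SymPair ι →L[ℂ] Matrix ι ι ℂ) (v : SymPair ι),
      HasDerivAt (fun t : ℂ => M + T (t • v)) (T v) 0 := by
    intro M T v
    simp only [map_smul]
    exact hasDerivAt_line_add M (T v)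
  have hder : ∀ v, HasDerivAt (fun t : ℂ => Ψ (t • v)) v 0 := by
    intro v
    have d1 := hasDerivAt_cong (hline 1 sI v) (by simp) (hline A s1 v)
    have d2 := hasDerivAt_cong (hline 1 sI v) (by simp) (hline B s2 v)
    have d3 := (π.hasFDerivAt (x := F ((0:ℂ) • v) - (A, B))).comp_hasDerivAt (0 : ℂ)
      ((d1.prodMk d2).sub_const (A, B))
    convert! d3 using 1
    have : (v : Matrix ι ι ℂ × Matrix ι ι ℂ) ∈ SymPair ι := v.2
    apply Subtype.ext
    rw [← symProj_of_symm this]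
    show _ = ((symProj ι _ : SymPair ι) : Matrix ι ι ℂ × Matrix ι ι ℂ)
    congr 2
    rw [← hsx v]
    simp [congMap]
    rfl
  obtain ⟨g, ga, g0, gr⟩ := exists_local_inv Ψ hΨa hΨ0 hder
  intro Q _ _ _ ℬ
  let y : Q → SymPair ι := fun q => π (ℬ.map q - (A, B))
  have ya : AnalyticAt ℂ y 0 := by
    refine (π.analyticAt _).comp (AnalyticAt.sub ?_ analyticAt_const)
    have := (analyticAt_mat.2 ℬ.analytic₁).prod (analyticAt_mat.2 ℬ.analytic₂)
    exact this
  have y0 : y 0 = 0 := by simp [y, ℬ.init]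
  have gya : AnalyticAt ℂ (fun q => g (y q)) 0 := by
    refine AnalyticAt.fun_comp ?_ ya
    rwa [y0]
  have gy0 : g (y 0) = 0 := by rw [y0, g0]
  refine ⟨fun q => sP (g (y q)), (sP.analyticAt _).fun_comp gya, by simp [gy0],
    fun q => 1 + sI (g (y q)), ?_, by simp [gy0], ?_⟩
  · exact analyticAt_mat.1 (analyticAt_const.add ((sI.analyticAt _).fun_comp gya))
  · have hy : Tendsto y (nhds 0) (nhds 0) := by
      have := ya.continuousAt.tendsto
      rwa [y0] at this
    filter_upwards [hy.eventually gr, ℬ.symm] with q hq hsym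
    have h3 := congrArg Subtype.val hq
    rw [hΨv] at h3
    have h4 : (y q : Matrix ι ι ℂ × Matrix ι ι ℂ) = ℬ.map q - (A, B) :=
      symProj_of_symm ((SymPair ι).sub_mem hsym hAB)
    rw [h4] at h3
    exact (sub_left_injective h3).symm

theorem miniversal_of_decomp {ι : Type} [Fintype ι] [DecidableEq ι] (A B : Matrix ι ι ℂ)
    (hA : A.IsSymm) (hB : B.IsSymm) (D : Submodule ℂ (Matrix ι ι ℂ × Matrix ι ι ℂ))
    (hD : D ≤ SymPair ι) (h1 : Disjoint (TSpace A B) D) (h2 : TSpace A B ⊔ D = SymPair ι) :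
    IsMiniversal (patternDeformation A B hA hB D hD) := by
  refine ⟨versal_of_decomp A B hA hB D hD h2, ?_⟩
  intro Q _ _ _ ℬ hℬ
  obtain ⟨φ, φa, φ0, I, Ia, I0, hI⟩ := hℬ D inferInstance inferInstance inferInstance
    (patternDeformation A B hA hB D hD)
  have hinj : Function.Injective (fderiv ℂ φ 0 : D →ₗ[ℂ] Q) := by
    rw [← LinearMap.ker_eq_bot, LinearMap.ker_eq_bot']
    intro p hp
    have hp : fderiv ℂ φ 0 p = 0 := hp
    have hl : HasDerivAt (fun t : ℂ => t • p) p 0 :=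
      hasDerivAt_line p
    have hφ : HasDerivAt (fun t : ℂ => φ (t • p)) 0 0 := by
      have h3 : HasFDerivAt φ (fderiv ℂ φ 0) ((0 : ℂ) • p) := by
        rw [zero_smul]; exact φa.differentiableAt.hasFDerivAt
      have := h3.comp_hasDerivAt (0 : ℂ) hl
      exact this.congr_deriv hp
    have hb : ∀ f : Q → ℂ, AnalyticAt ℂ f 0 → HasDerivAt (fun t : ℂ => f (φ (t • p))) 0 0 := by
      intro f hf
      have h3 : HasFDerivAt f (fderiv ℂ f 0) (φ ((0 : ℂ) • p)) := by
        rw [zero_smul, φ0]; exact hf.differentiableAt.hasFDerivAt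
      have := h3.comp_hasDerivAt (0 : ℂ) hφ
      rwa [map_zero] at this
    have hIa := analyticAt_mat.2 Ia
    have hI' : HasDerivAt (fun t : ℂ => I (t • p)) (fderiv ℂ I 0 p) 0 := by
      have h3 : HasFDerivAt I (fderiv ℂ I 0) ((0 : ℂ) • p) := by
        rw [zero_smul]; exact hIa.differentiableAt.hasFDerivAt
      exact h3.comp_hasDerivAt (0 : ℂ) hl
    have b1 : HasDerivAt (fun t : ℂ => (ℬ.map (φ (t • p))).1) 0 0 :=
      hasDerivAt_mat.2 fun i j => hb _ (ℬ.analytic₁ i j)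
    have b2 : HasDerivAt (fun t : ℂ => (ℬ.map (φ (t • p))).2) 0 0 :=
      hasDerivAt_mat.2 fun i j => hb _ (ℬ.analytic₂ i j)
    have c1 := hasDerivAt_cong hI' (by simp [I0]) b1
    have c2 := hasDerivAt_cong hI' (by simp [I0]) b2
    simp only [zero_smul, φ0, ℬ.init, add_zero] at c1 c2
    have hev : ∀ᶠ t : ℂ in nhds 0, (patternDeformation A B hA hB D hD).map (t • p) =
        ((I (t • p))ᵀ * (ℬ.map (φ (t • p))).1 * I (t • p),
          (I (t • p))ᵀ * (ℬ.map (φ (t • p))).2 * I (t • p)) := by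
      have : Tendsto (fun t : ℂ => t • p) (nhds 0) (nhds 0) := by
        have := hl.continuousAt.tendsto
        rwa [zero_smul] at this
      exact this.eventually hI
    have hlin : ∀ M N : Matrix ι ι ℂ, HasDerivAt (fun t : ℂ => M + t • N) N 0 :=
      fun M N => hasDerivAt_line_add M N
    have u1 := (hlin A (p : Matrix ι ι ℂ × Matrix ι ι ℂ).1).unique (c1.congr_of_eventuallyEq
      (hev.mono fun t ht => congrArg Prod.fst ht))
    have u2 := (hlin B (p : Matrix ι ι ℂ × Matrix ι ι ℂ).2).unique (c2.congr_of_eventuallyEq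
      (hev.mono fun t ht => congrArg Prod.snd ht))
    have hmem : (p : Matrix ι ι ℂ × Matrix ι ι ℂ) ∈ TSpace A B :=
      ⟨fderiv ℂ I 0 p, Prod.ext u1.symm u2.symm⟩
    exact Subtype.ext (Submodule.disjoint_def.1 h1 _ hmem p.2)
  exact LinearMap.finrank_le_finrank_of_injective hinj

/-- **Main theorem.** For a canonical pair
`(A,B)_can = X₁ ⊕ ⋯ ⊕ X_t` of symmetric complex matrices under congruence, the space
`Sym × Sym` is the direct sum of the tangent space `T((A,B)_can)` and the pattern space
`𝒟(ℂ)` described in Theorem 2; equivalently, the deformation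
`(X,Y) ↦ (A_can + X, B_can + Y)` parametrized by `𝒟(ℂ)` is a (simplest) miniversal
deformation of `(A,B)_can` under congruence. -/
theorem main_miniversal_deformation {t : ℕ} (X : Fin t → CanType)
    (hX : ∀ i, 0 < (X i).param) :
    (Disjoint
        (TSpace (Matrix.blockDiagonal' fun i => (X i).A)
          (Matrix.blockDiagonal' fun i => (X i).B))
        (Pattern (canI1 X) (canI2 X)) ∧
      TSpace (Matrix.blockDiagonal' fun i => (X i).A)
          (Matrix.blockDiagonal' fun i => (X i).B) ⊔
        Pattern (canI1 X) (canI2 X) = SymPair (Σ i, Fin (X i).size)) ∧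
    IsMiniversal (patternDeformation
      (Matrix.blockDiagonal' fun i => (X i).A)
      (Matrix.blockDiagonal' fun i => (X i).B)
      (blockDiagonal'_isSymm _ fun i => canA_isSymm (X i))
      (blockDiagonal'_isSymm _ fun i => canB_isSymm (X i))
      (Pattern (canI1 X) (canI2 X)) (Pattern_le _ _)) := by
  exact ⟨main_decomp X, miniversal_of_decomp _ _ _ _ _ _ (main_decomp X).1 (main_decomp X).2⟩

end
end
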